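/- arXiv:1905.04131 — 3 statements merged into one kernel-verified Lean document; each statement's English description precedes it below -/
import Mathlib

section
/- Let ν ∈ [0,1] and set, with either choice of sign, τ(x) = 1 ± sinh(νx)/cosh(x) for x > 0. Then the Laplace transform L(τ) is a generalized Stieltjes function of order 2 (hence logarithmically completely monotonic), and for x > 0: L(τ)(x) = 1/x ± (1/2)(β((x+1-ν)/2) - β((x+1+ν)/2)), where β is Nielsen's beta function. -/
open MeasureTheory Filter Set

/-- The Laplace transform of `g`. -/
noncomputable def LaplaceTransform (g : ℝ → ℝ) (x : ℝ) : ℝ :=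
  ∫ t in Set.Ioi (0:ℝ), Real.exp (-x * t) * g t

/-- `f` is completely monotonic on `(0,∞)`. -/
def CompletelyMonotonic (f : ℝ → ℝ) : Prop :=
  (∀ x : ℝ, 0 < x → ContDiffAt ℝ (⊤ : ℕ∞) f x) ∧
  ∀ (n : ℕ) (x : ℝ), 0 < x → 0 ≤ (-1 : ℝ) ^ n * iteratedDeriv n f x

/-- `f` is logarithmically completely monotonic on `(0,∞)`. -/
def LogCompletelyMonotonic (f : ℝ → ℝ) : Prop :=
  (∀ x : ℝ, 0 < x → 0 < f x) ∧ (∀ x : ℝ, 0 < x → ContDiffAt ℝ (⊤ : ℕ∞) f x) ∧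
  CompletelyMonotonic (fun x => -deriv f x / f x)

/-- `f` is a generalized Stieltjes function of order `lam` on `(0,∞)`. -/
def IsGenStieltjes (lam : ℝ) (f : ℝ → ℝ) : Prop :=
  ∃ (μ : Measure ℝ) (c : ℝ), 0 ≤ c ∧ μ (Set.Iio 0) = 0 ∧
    ∀ x : ℝ, 0 < x →
      Integrable (fun t => (x + t) ^ (-lam)) μ ∧
      f x = (∫ t, (x + t) ^ (-lam) ∂μ) + c

/-- Nielsen's beta function. -/
noncomputable def nielsenBeta (x : ℝ) : ℝ :=
  ∫ t in Set.Ioi (0:ℝ), Real.exp (-x * t) / (1 + Real.exp (-t))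

open InnerProductSpace ComplexConjugate in
lemma lyap_basis {E : Type*} [NormedAddCommGroup E] [InnerProductSpace ℂ E] {N : ℕ}
    (B : E →ₗ[ℂ] E) (l : Fin N → ℂ) (hl : Function.Injective l) (ξ : Fin N → E)
    (hξ : ∀ j, ξ j ≠ 0)
    (hG : ∀ j k, (l k + conj (l j)) * inner ℂ (ξ j) (ξ k) = 2 * inner ℂ (ξ j) (B (ξ k))) :
    ∃ e : Fin N → E, Orthonormal ℂ e ∧ ∀ k, (inner ℂ (e k) (B (e k))).re = (l k).re := by
  have hind : LinearIndependent ℂ ξ := by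
    rw [Fintype.linearIndependent_iff]
    intro c hc
    have key : ∀ d : Fin N → ℂ, ∑ j, d j • ξ j = 0 → ∑ j, (d j * l j) • ξ j = 0 := by
      intro d hd
      have h1 : ∀ j, inner ℂ (ξ j) (∑ k, (d k * l k) • ξ k) = 0 := by
        intro j
        have h2 : inner ℂ (ξ j) (B (∑ k, d k • ξ k)) = 0 := by rw [hd]; simp
        have h3 : inner ℂ (ξ j) (∑ k, d k • ξ k) = 0 := by rw [hd]; simp
        simp only [map_sum, map_smul, inner_sum, inner_smul_right] at h2 h3 ⊢
        have h4 : ∀ k, d k * l k * inner ℂ (ξ j) (ξ k)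
            = 2 * (d k * inner ℂ (ξ j) (B (ξ k))) - conj (l j) * (d k * inner ℂ (ξ j) (ξ k)) := by
          intro k
          linear_combination (d k) * hG j k
        simp only [h4, Finset.sum_sub_distrib, ← Finset.mul_sum, h2, h3]
        simp
      rw [← inner_self_eq_zero (𝕜 := ℂ), sum_inner]
      apply Finset.sum_eq_zero
      intro j _
      rw [inner_smul_left, h1 j, mul_zero]
    have hpoly : ∀ q : Polynomial ℂ, ∑ j, (c j * q.eval (l j)) • ξ j = 0 := by
      intro q
      induction q using Polynomial.induction_on' with
      | add p q hp hq =>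
        simp only [Polynomial.eval_add, mul_add, add_smul, Finset.sum_add_distrib, hp, hq, add_zero]
      | monomial n a =>
        induction n with
        | zero =>
          have : ∀ j, (c j * Polynomial.eval (l j) (Polynomial.monomial 0 a)) • ξ j
            = a • (c j • ξ j) := by
            intro j; simp [smul_smul, mul_comm]
          simp only [this, ← Finset.smul_sum, hc, smul_zero]
        | succ n ih =>
          have := key _ ih
          convert this using 3
          simp only [Polynomial.eval_monomial]
          ring
    intro j
    have h := hpoly (∏ i ∈ Finset.univ.erase j, (Polynomial.X - Polynomial.C (l i)))
    rw [Finset.sum_eq_single j] at h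
    · rcases smul_eq_zero.mp h with h | h
      · rcases mul_eq_zero.mp h with h | h
        · exact h
        · exfalso
          rw [Polynomial.eval_prod, Finset.prod_eq_zero_iff] at h
          obtain ⟨i, hi, h⟩ := h
          simp only [Polynomial.eval_sub, Polynomial.eval_X, Polynomial.eval_C, sub_eq_zero] at h
          exact (Finset.mem_erase.mp hi).1 (hl h).symm
      · exact absurd h (hξ j)
    · intro i _ hij
      have : Polynomial.eval (l i) (∏ i ∈ Finset.univ.erase j, (Polynomial.X - Polynomial.C (l i))) = 0 := by
        rw [Polynomial.eval_prod]
        apply Finset.prod_eq_zero (i := i) (by simp [hij])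
        simp
      rw [this]; simp
    · simp
  refine ⟨gramSchmidtNormed ℂ ξ, gramSchmidtNormed_orthonormal hind, ?_⟩
  intro k
  set e := gramSchmidtNormed ℂ ξ k with he
  have hnorm : inner ℂ e e = 1 := by
    rw [inner_self_eq_norm_sq_to_K, he, gramSchmidtNormed_unit_length k hind]; simp
  have hmem : e ∈ Submodule.span ℂ (ξ '' Set.Iic k) := by
    rw [← span_gramSchmidt_Iic, ← span_gramSchmidtNormed]
    exact Submodule.subset_span ⟨k, by simp, rfl⟩
  rw [Finsupp.mem_span_image_iff_linearCombination] at hmem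
  obtain ⟨c, hcs, hc⟩ := hmem
  rw [Finsupp.linearCombination_apply, Finsupp.sum_fintype _ _ (by simp)] at hc
  have hc0 : ∀ j, k < j → c j = 0 := by
    intro j hj
    rw [Finsupp.mem_supported'] at hcs
    exact hcs j (by simpa using hj)
  have horth : ∀ j, j < k → inner ℂ e (ξ j) = 0 := by
    intro j hj
    rw [he, gramSchmidtNormed, inner_smul_left, gramSchmidt_inv_triangular ℂ ξ hj, mul_zero]
  have hsum : ∀ d : Fin N → ℂ, inner ℂ e (∑ j, (c j * d j) • ξ j) = d k * (c k * inner ℂ e (ξ k)) := by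
    intro d
    rw [inner_sum, Finset.sum_eq_single k]
    · rw [inner_smul_right]; ring
    · intro j _ hjk
      rcases lt_or_gt_of_ne hjk with h | h
      · rw [inner_smul_right, horth j h, mul_zero]
      · rw [hc0 j h]; simp
    · simp
  have h1 : c k * inner ℂ e (ξ k) = 1 := by
    have := hsum (fun _ => 1)
    simp only [mul_one, one_mul, hc] at this
    rw [← this, hnorm]
  have h2 : inner ℂ e (∑ j, (c j * l j) • ξ j) = l k := by rw [hsum, h1, mul_one]
  have h3 : inner ℂ (∑ j, (c j * l j) • ξ j) e = conj (l k) := by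
    rw [← inner_conj_symm, h2]
  have h4 : 2 * inner ℂ e (B e) = l k + conj (l k) := by
    rw [← h3, ← h2]
    conv_lhs => rw [← hc]
    conv_rhs => rw [← hc]
    simp only [map_sum, map_smul, inner_sum, sum_inner, inner_smul_left, inner_smul_right,
      Finset.mul_sum, ← Finset.sum_add_distrib, map_mul]
    refine Finset.sum_congr rfl fun i _ => Finset.sum_congr rfl fun j _ => ?_
    linear_combination (-(c i * conj (c j))) * hG j i
  have h5 := congrArg Complex.re h4
  simp at h5
  linarith

open ComplexConjugate in
lemma zeros_bound {ι : Type*} [Fintype ι] [Nonempty ι] (b p : ι → ℝ) (hb : ∀ i, 0 < b i)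
    (hp : ∀ i, 0 < p i) (Λ : Finset ℂ)
    (hz : ∀ z ∈ Λ, ∑ i, (p i : ℂ) / ((b i : ℂ) - z) ^ 2 = 0)
    (hne : ∀ z ∈ Λ, ∀ w ∈ Λ, z ≠ conj w) (m : ℕ) :
    ∑ z ∈ Λ, (‖z‖ ^ m)⁻¹ ≤ ∑ i, (b i ^ m)⁻¹ := by
  classical
  let l : Fin Λ.card → ℂ := fun j => (Λ.equivFin.symm j : ℂ)
  have hlmem : ∀ j, l j ∈ Λ := fun j => (Λ.equivFin.symm j).2
  have hl : Function.Injective l := Subtype.val_injective.comp Λ.equivFin.symm.injective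
  have hbz : ∀ i, ∀ z ∈ Λ, (b i : ℂ) - z ≠ 0 := by
    intro i z hzm h
    have : z = b i := (sub_eq_zero.mp h).symm
    exact hne z hzm z hzm (by rw [this, Complex.conj_ofReal])
  let ξ : Fin Λ.card → EuclideanSpace ℂ ι := fun j =>
    WithLp.toLp 2 (fun i => ((Real.sqrt (p i) : ℝ) : ℂ) / ((b i : ℂ) - l j) ^ 2)
  let B : EuclideanSpace ℂ ι →ₗ[ℂ] EuclideanSpace ℂ ι :=
    { toFun := fun u => WithLp.toLp 2 (fun i => (b i : ℂ) * u i)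
      map_add' := by intro u v; ext i; simp [mul_add]
      map_smul' := by intro c u; ext i; simp; ring }
  have hξ : ∀ j, ξ j ≠ 0 := by
    intro j h
    obtain ⟨i⟩ := ‹Nonempty ι›
    have h1 : (ξ j) i = 0 := by rw [h]; rfl
    have h2 : ((Real.sqrt (p i) : ℝ) : ℂ) / ((b i : ℂ) - l j) ^ 2 ≠ 0 := by
      apply div_ne_zero
      · exact_mod_cast (Real.sqrt_pos.mpr (hp i)).ne'
      · exact pow_ne_zero _ (hbz i _ (hlmem j))
    exact h2 h1
  have hG : ∀ j k, (l k + conj (l j)) * inner ℂ (ξ j) (ξ k) = 2 * inner ℂ (ξ j) (B (ξ k)) := by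
    intro j k
    have hd : l k - conj (l j) ≠ 0 := sub_ne_zero.mpr (hne _ (hlmem k) _ (hlmem j))
    have hzk := hz _ (hlmem k)
    have hzj := congrArg conj (hz _ (hlmem j))
    simp only [map_sum, map_div₀, map_pow, map_sub, Complex.conj_ofReal, map_zero] at hzj
    have : (l k - conj (l j)) * ((l k + conj (l j)) * inner ℂ (ξ j) (ξ k)
        - 2 * inner ℂ (ξ j) (B (ξ k))) = 0 := by
      simp only [PiLp.inner_apply, RCLike.inner_apply, ξ, B, LinearMap.coe_mk, AddHom.coe_mk,
        map_div₀, map_pow, map_sub, Complex.conj_ofReal]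
      calc _ = ∑ i, ((p i : ℂ) / ((b i : ℂ) - conj (l j)) ^ 2 - (p i : ℂ) / ((b i : ℂ) - l k) ^ 2) * (-1) * (-1) := by
            rw [Finset.mul_sum, Finset.mul_sum, ← Finset.sum_sub_distrib, Finset.mul_sum]
            refine Finset.sum_congr rfl fun i _ => ?_
            have e1 := hbz i _ (hlmem k)
            have e2 : (b i : ℂ) - conj (l j) ≠ 0 := by
              intro h
              apply hbz i _ (hlmem j)
              have := congrArg conj h
              simpa using this
            have e3 : (p i : ℂ) = ((Real.sqrt (p i) : ℝ) : ℂ) * ((Real.sqrt (p i) : ℝ) : ℂ) := by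
              rw [← Complex.ofReal_mul, Real.mul_self_sqrt (hp i).le]
            rw [e3]
            field_simp
            ring
        _ = 0 := by
            simp only [mul_neg, mul_one, neg_neg]
            rw [Finset.sum_sub_distrib, hzk, hzj, sub_zero]
    rcases mul_eq_zero.mp this with h | h
    · exact absurd h hd
    · exact sub_eq_zero.mp h
  obtain ⟨e, he, hel⟩ := lyap_basis B l hl ξ hξ hG
  have hre : ∀ k, ∑ i, ‖e k i‖ ^ 2 * b i = (l k).re := by
    intro k
    rw [← hel k]
    simp only [PiLp.inner_apply, RCLike.inner_apply, B, LinearMap.coe_mk, AddHom.coe_mk,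
      Complex.re_sum]
    refine Finset.sum_congr rfl fun i _ => ?_
    rw [mul_assoc, Complex.mul_conj, Complex.normSq_eq_norm_sq, ← Complex.ofReal_mul, Complex.ofReal_re,
      mul_comm]
  have hrow : ∀ k, ∑ i, ‖e k i‖ ^ 2 = 1 := by
    intro k
    rw [← EuclideanSpace.norm_sq_eq, he.1 k]; norm_num
  have hcol : ∀ i, ∑ k, ‖e k i‖ ^ 2 ≤ 1 := by
    intro i
    have := he.sum_inner_products_le (EuclideanSpace.single i (1:ℂ)) (s := Finset.univ)
    simpa [EuclideanSpace.inner_single_right] using this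
  have hJ : ∀ k, (‖l k‖ ^ m)⁻¹ ≤ ∑ i, ‖e k i‖ ^ 2 * (b i ^ m)⁻¹ := by
    intro k
    have h1 := (convexOn_zpow (𝕜 := ℝ) (-(m:ℤ))).map_sum_le (t := Finset.univ)
      (w := fun i => ‖e k i‖ ^ 2) (p := b) (fun i _ => by positivity) (hrow k) (fun i _ => hb i)
    simp only [smul_eq_mul, zpow_neg, zpow_natCast] at h1
    refine le_trans ?_ h1
    have hpos : 0 < ∑ i, ‖e k i‖ ^ 2 * b i := by
      obtain ⟨i, _, hi⟩ := Finset.exists_ne_zero_of_sum_ne_zero (by rw [hrow k]; norm_num : ∑ i, ‖e k i‖ ^ 2 ≠ 0)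
      apply Finset.sum_pos' (fun i _ => mul_nonneg (by positivity) (hb i).le)
      exact ⟨i, Finset.mem_univ _, mul_pos (lt_of_le_of_ne (by positivity) hi.symm) (hb i)⟩
    rw [inv_le_inv₀ (by
      apply pow_pos
      rw [hre k] at hpos
      exact lt_of_lt_of_le hpos (Complex.re_le_norm _)) (by positivity)]
    apply pow_le_pow_left₀ hpos.le
    rw [hre k]
    exact Complex.re_le_norm _
  calc ∑ z ∈ Λ, (‖z‖ ^ m)⁻¹ = ∑ k, (‖l k‖ ^ m)⁻¹ := by
        rw [← Finset.sum_coe_sort]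
        exact (Equiv.sum_comp Λ.equivFin.symm (fun z : Λ => (‖(z:ℂ)‖ ^ m)⁻¹)).symm
    _ ≤ ∑ k, ∑ i, ‖e k i‖ ^ 2 * (b i ^ m)⁻¹ := Finset.sum_le_sum fun k _ => hJ k
    _ = ∑ i, (∑ k, ‖e k i‖ ^ 2) * (b i ^ m)⁻¹ := by
        rw [Finset.sum_comm]; simp only [Finset.sum_mul]
    _ ≤ ∑ i, (b i ^ m)⁻¹ := by
        refine Finset.sum_le_sum fun i _ => ?_
        have : 0 ≤ (b i ^ m)⁻¹ := inv_nonneg.mpr (pow_nonneg (hb i).le _)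
        nlinarith [hcol i]

/-- Taylor coefficients of the logarithmic derivative, computed recursively. -/
noncomputable def cseq (φ : ℕ → ℝ) : ℕ → ℝ
  | m => ((m : ℝ) + 1) * φ (m + 1) - ∑ j : Fin m, cseq φ j * φ (m - j)

lemma cseq_unique (φ : ℕ → ℝ) (h0 : φ 0 = 1) (c : ℕ → ℂ)
    (hc : ∀ m : ℕ, ((m : ℂ) + 1) * (φ (m + 1) : ℂ)
      = ∑ j ∈ Finset.range (m + 1), c j * (φ (m - j) : ℂ)) (m : ℕ) :
    c m = (cseq φ m : ℂ) := by
  induction m using Nat.strong_induction_on with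
  | _ m ih =>
    have h := hc m
    rw [Finset.sum_range_succ, Nat.sub_self, h0, Complex.ofReal_one, mul_one] at h
    rw [cseq]
    push_cast
    rw [h, Finset.sum_range]
    have : ∑ i : Fin m, c i * (φ (m - i) : ℂ) = ∑ i : Fin m, (cseq φ i : ℂ) * (φ (m - i) : ℂ) :=
      Finset.sum_congr rfl fun i _ => by rw [ih i i.2]
    rw [this]; ring

lemma cseq_continuous (m : ℕ) : Continuous (fun φ : ℕ → ℝ => cseq φ m) := by
  induction m using Nat.strong_induction_on with
  | _ m ih =>
    have : (fun φ : ℕ → ℝ => cseq φ m) = fun φ =>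
        ((m : ℝ) + 1) * φ (m + 1) - ∑ j : Fin m, cseq φ j * φ (m - j) := by
      funext φ; rw [cseq]
    rw [this]
    refine Continuous.sub (by fun_prop) (continuous_finsetSum _ fun j _ => ?_)
    exact (ih j j.2).mul (continuous_apply _)

lemma cseq_congr (φ ψ : ℕ → ℝ) (m : ℕ) (h : ∀ k ≤ m + 1, φ k = ψ k) : cseq φ m = cseq ψ m := by
  induction m using Nat.strong_induction_on with
  | _ m ih =>
    rw [cseq, cseq, h (m+1) le_rfl]
    congr 1
    refine Finset.sum_congr rfl fun j _ => ?_
    rw [ih j j.2 (fun k hk => h k (by omega)), h (m - j) (by omega)]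

/-- The geometric power series `1 / (a - X)`. -/
noncomputable def geoSeries (a : ℂ) : PowerSeries ℂ := PowerSeries.mk fun n => (a ^ (n + 1))⁻¹

lemma geo_mul (a : ℂ) (ha : a ≠ 0) : (PowerSeries.C a - PowerSeries.X) * geoSeries a = 1 := by
  ext n
  rw [sub_mul, map_sub, PowerSeries.coeff_C_mul]
  cases n with
  | zero => simp [geoSeries, ha]
  | succ n =>
    rw [PowerSeries.coeff_succ_X_mul]
    simp [geoSeries, PowerSeries.coeff_one]
    field_simp
    ring

lemma geo_deriv (a : ℂ) (ha : a ≠ 0) :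
    PowerSeries.derivative ℂ (geoSeries a) = geoSeries a ^ 2 := by
  have h := congrArg (PowerSeries.derivative ℂ) (geo_mul a ha)
  simp only [Derivation.leibniz, map_sub, PowerSeries.derivative_C, PowerSeries.derivative_X,
    smul_eq_mul, Derivation.map_one_eq_zero] at h
  have h2 := geo_mul a ha
  linear_combination (-PowerSeries.derivative ℂ (geoSeries a)) * h2 + geoSeries a * h

lemma geo_sq_coeff (a : ℂ) (ha : a ≠ 0) (n : ℕ) :
    PowerSeries.coeff n (geoSeries a ^ 2) = ((n : ℂ) + 1) * (a ^ (n + 2))⁻¹ := by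
  rw [← geo_deriv a ha, PowerSeries.coeff_derivative]
  simp [geoSeries]; ring

lemma prod_deriv {κ : Type*} (s : Finset κ) (a : κ → ℂ) (ha : ∀ j ∈ s, a j ≠ 0) :
    PowerSeries.derivative ℂ (∏ j ∈ s, (PowerSeries.C (a j) - PowerSeries.X)) =
      - (∏ j ∈ s, (PowerSeries.C (a j) - PowerSeries.X)) * ∑ j ∈ s, geoSeries (a j) := by
  classical
  induction s using Finset.induction_on with
  | empty => simp
  | insert j s hj ih =>
    rw [Finset.prod_insert hj, Finset.sum_insert hj, Derivation.leibniz,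
      ih (fun i hi => ha i (Finset.mem_insert_of_mem hi))]
    simp only [map_sub, PowerSeries.derivative_C, PowerSeries.derivative_X, smul_eq_mul]
    have h := geo_mul (a j) (ha j (Finset.mem_insert_self _ _))
    linear_combination (∏ j ∈ s, (PowerSeries.C (a j) - PowerSeries.X)) * h

/-- The numerator polynomial of `∑ p_i / (b_i - X)^2`. -/
noncomputable def numPoly {ι : Type*} [Fintype ι] [DecidableEq ι] (b p : ι → ℝ) : Polynomial ℂ :=
  ∑ i, Polynomial.C (p i : ℂ) *
    ∏ k ∈ Finset.univ.erase i, (Polynomial.C (b k : ℂ) - Polynomial.X) ^ 2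

lemma numPoly_eval {ι : Type*} [Fintype ι] [DecidableEq ι] (b p : ι → ℝ) (z : ℂ) :
    (numPoly b p).eval z = ∑ i, (p i : ℂ) * ∏ k ∈ Finset.univ.erase i, ((b k : ℂ) - z) ^ 2 := by
  simp [numPoly, Polynomial.eval_finsetSum, Polynomial.eval_prod]

lemma numPoly_real {ι : Type*} [Fintype ι] [Nonempty ι] [DecidableEq ι] (b p : ι → ℝ)
    (hinj : Function.Injective b)
    (hp : ∀ i, 0 < p i) (y : ℝ) : (numPoly b p).eval (y : ℂ) ≠ 0 := by
  rw [numPoly_eval]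
  have : 0 < ∑ i, p i * ∏ k ∈ Finset.univ.erase i, (b k - y) ^ 2 := by
    apply Finset.sum_pos' (fun i _ => mul_nonneg (hp i).le (Finset.prod_nonneg fun _ _ => sq_nonneg _))
    by_cases h : ∃ i, b i = y
    · obtain ⟨i, hi⟩ := h
      refine ⟨i, Finset.mem_univ _, mul_pos (hp i) (Finset.prod_pos fun k hk => ?_)⟩
      have : b k - y ≠ 0 := by
        rw [← hi, sub_ne_zero]
        exact fun h => (Finset.mem_erase.mp hk).1 (hinj h)
      positivity
    · push Not at h
      obtain ⟨i⟩ := ‹Nonempty ι›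
      refine ⟨i, Finset.mem_univ _, mul_pos (hp i) (Finset.prod_pos fun k hk => ?_)⟩
      have : b k - y ≠ 0 := sub_ne_zero.mpr (h k)
      positivity
  exact_mod_cast this.ne'

/-- Unnormalized moments. -/
noncomputable def mom {ι : Type*} [Fintype ι] (b p : ι → ℝ) (k : ℕ) : ℝ :=
  ((k : ℝ) + 1) * ∑ i, p i * (b i ^ (k + 2))⁻¹

open ComplexConjugate in
lemma finite_simple {ι : Type*} [Fintype ι] [Nonempty ι] [DecidableEq ι] (b p : ι → ℝ)
    (hb : ∀ i, 0 < b i) (hinj : Function.Injective b)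
    (hp : ∀ i, 0 < p i) (hnd : (numPoly b p).roots.Nodup) (m : ℕ) :
    0 ≤ cseq (fun k => mom b p k / mom b p 0) m := by
  set P := numPoly b p with hP
  have hP0 : P ≠ 0 := by
    intro h
    apply numPoly_real b p hinj hp 0
    rw [← hP, h]; simp
  set Λ := P.roots.toFinset with hΛ
  have hroot : ∀ z ∈ Λ, P.eval z = 0 := by
    intro z hz
    rw [hΛ, Multiset.mem_toFinset, Polynomial.mem_roots hP0] at hz
    exact hz
  have him : ∀ z ∈ Λ, z.im ≠ 0 := by
    intro z hz h
    apply numPoly_real b p hinj hp z.re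
    have : ((z.re : ℝ) : ℂ) = z := Complex.ext (by simp) (by simp [h])
    rw [this]; exact hroot z hz
  have hz0 : ∀ z ∈ Λ, z ≠ 0 := fun z hz h => him z hz (by simp [h])
  have hbC : ∀ i, (b i : ℂ) ≠ 0 := fun i => by exact_mod_cast (hb i).ne'
  have hzero : ∀ z ∈ Λ, ∑ i, (p i : ℂ) / ((b i : ℂ) - z) ^ 2 = 0 := by
    intro z hz
    have hne : ∀ i, (b i : ℂ) - z ≠ 0 := by
      intro i h
      apply him z hz
      rw [← sub_eq_zero.mp h]; simp
    have h1 := hroot z hz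
    rw [hP, numPoly_eval] at h1
    have h2 : (∏ k, ((b k : ℂ) - z) ^ 2) * ∑ i, (p i : ℂ) / ((b i : ℂ) - z) ^ 2 = 0 := by
      rw [← h1, Finset.mul_sum]
      refine Finset.sum_congr rfl fun i _ => ?_
      rw [← Finset.mul_prod_erase _ _ (Finset.mem_univ i)]
      field_simp [hne i]
    exact (mul_eq_zero.mp h2).resolve_left (Finset.prod_ne_zero_iff.mpr fun i _ => pow_ne_zero _ (hne i))
  let F : PowerSeries ℂ := ∑ i, PowerSeries.C (p i : ℂ) * geoSeries (b i) ^ 2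
  let D : PowerSeries ℂ := ∏ i, (PowerSeries.C (b i : ℂ) - PowerSeries.X)
  have hF : ∀ k, PowerSeries.coeff k F = (mom b p k : ℂ) := by
    intro k
    simp only [F, map_sum, PowerSeries.coeff_C_mul, geo_sq_coeff _ (hbC _), mom]
    push_cast
    rw [Finset.mul_sum]
    refine Finset.sum_congr rfl fun i _ => ?_
    ring
  have hFD : F * D ^ 2 = (P : PowerSeries ℂ) := by
    simp only [F, hP, numPoly]
    rw [Finset.sum_mul, ← Polynomial.coeToPowerSeries.ringHom_apply, map_sum]
    refine Finset.sum_congr rfl fun i _ => ?_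
    simp only [map_mul, map_prod, map_pow, map_sub, Polynomial.coeToPowerSeries.ringHom_apply,
      Polynomial.coe_C, Polynomial.coe_X]
    have hD : D = (PowerSeries.C (b i : ℂ) - PowerSeries.X) *
        ∏ k ∈ Finset.univ.erase i, (PowerSeries.C (b k : ℂ) - PowerSeries.X) :=
      (Finset.mul_prod_erase _ _ (Finset.mem_univ i)).symm
    have h := geo_mul (b i) (hbC i)
    rw [hD, Finset.prod_pow]
    generalize (∏ k ∈ Finset.univ.erase i, (PowerSeries.C (b k : ℂ) - PowerSeries.X)) = R
    have h2 : ((PowerSeries.C (b i : ℂ) - PowerSeries.X) * geoSeries (b i)) ^ 2 = 1 := by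
      rw [h, one_pow]
    linear_combination (PowerSeries.C (p i : ℂ)) * R ^ 2 * h2
  obtain ⟨u, hu⟩ : ∃ u : ℂ, (P : PowerSeries ℂ) = PowerSeries.C u *
      ∏ z ∈ Λ, (PowerSeries.C z - PowerSeries.X) := by
    refine ⟨P.leadingCoeff * (-1) ^ Λ.card, ?_⟩
    have h1 : P = Polynomial.C P.leadingCoeff * ∏ z ∈ Λ, (Polynomial.X - Polynomial.C z) := by
      conv_lhs => rw [(IsAlgClosed.splits P).eq_prod_roots]
      rw [hΛ, Finset.prod, Multiset.toFinset_val, Multiset.dedup_eq_self.mpr hnd]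
    have h2 : ∏ z ∈ Λ, (Polynomial.X - Polynomial.C z)
        = Polynomial.C ((-1) ^ Λ.card) * ∏ z ∈ Λ, (Polynomial.C z - Polynomial.X) := by
      have : ∀ z ∈ Λ, (Polynomial.X - Polynomial.C z) = (-1) * (Polynomial.C z - Polynomial.X) := by
        intro z _; ring
      rw [Finset.prod_congr rfl this, Finset.prod_mul_distrib, Finset.prod_const]
      simp
    rw [h2, ← mul_assoc, ← Polynomial.C_mul] at h1
    conv_lhs => rw [h1]
    rw [← Polynomial.coeToPowerSeries.ringHom_apply]
    simp only [map_mul, map_prod, map_sub, Polynomial.coeToPowerSeries.ringHom_apply,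
      Polynomial.coe_C, Polynomial.coe_X]
  have hdP : PowerSeries.derivative ℂ (P : PowerSeries ℂ) = - (P : PowerSeries ℂ) * ∑ z ∈ Λ, geoSeries z := by
    rw [hu, Derivation.leibniz, prod_deriv Λ (fun z => z) hz0, PowerSeries.derivative_C]
    simp only [smul_eq_mul]
    ring
  have hdD : PowerSeries.derivative ℂ D = - D * ∑ i, geoSeries (b i) :=
    prod_deriv Finset.univ (fun i => (b i : ℂ)) (fun i _ => hbC i)
  have hD0 : D ≠ 0 := by
    refine Finset.prod_ne_zero_iff.mpr fun i _ h => ?_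
    have := geo_mul (b i) (hbC i)
    rw [h] at this
    simp at this
  have hdF : PowerSeries.derivative ℂ F =
      (2 * ∑ i, geoSeries (b i) - ∑ z ∈ Λ, geoSeries z) * F := by
    apply mul_right_cancel₀ (pow_ne_zero 2 hD0)
    have h := hdP
    rw [← hFD, Derivation.leibniz, Derivation.leibniz_pow, hdD] at h
    simp only [smul_eq_mul, nsmul_eq_mul] at h
    push_cast at h
    linear_combination h
  have hmom0 : 0 < mom b p 0 := by
    simp only [mom]
    have : 0 < ∑ i, p i * (b i ^ (0 + 2))⁻¹ :=
      Finset.sum_pos (fun i _ => mul_pos (hp i) (inv_pos.mpr (pow_pos (hb i) _))) Finset.univ_nonempty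
    push_cast
    linarith
  have hm0C : (mom b p 0 : ℂ) ≠ 0 := by exact_mod_cast hmom0.ne'
  have huniq := cseq_unique (fun k => mom b p k / mom b p 0) (div_self hmom0.ne')
    (fun m => 2 * ∑ i, ((b i : ℂ) ^ (m + 1))⁻¹ - ∑ z ∈ Λ, (z ^ (m + 1))⁻¹) (by
      intro m
      have h := congrArg (PowerSeries.coeff m) hdF
      rw [PowerSeries.coeff_derivative, PowerSeries.coeff_mul,
        Finset.Nat.sum_antidiagonal_eq_sum_range_succ_mk, hF] at h
      push_cast
      have h3 : ∀ j, PowerSeries.coeff j (2 * ∑ i, geoSeries (b i) - ∑ z ∈ Λ, geoSeries z)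
          = 2 * ∑ i, ((b i : ℂ) ^ (j + 1))⁻¹ - ∑ z ∈ Λ, (z ^ (j + 1))⁻¹ := by
        intro j
        have : (2 : PowerSeries ℂ) = PowerSeries.C 2 := (map_ofNat PowerSeries.C 2).symm
        rw [this, map_sub, PowerSeries.coeff_C_mul]
        simp [geoSeries]
      simp only [h3, hF] at h
      calc _ = ((mom b p (m+1) : ℂ) * (m + 1)) / (mom b p 0) := by ring
        _ = _ := by
          rw [h, Finset.sum_div]
          refine Finset.sum_congr rfl fun j _ => ?_
          ring) m
  have hre := congrArg Complex.re huniq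
  rw [Complex.ofReal_re] at hre
  rw [← hre]
  have hsplit := Finset.sum_filter_add_sum_filter_not Λ (fun z => 0 < z.im) (fun z => (‖z‖ ^ (m+1))⁻¹)
  have hA := zeros_bound b p hb hp (Λ.filter (fun z => 0 < z.im))
    (fun z hz => hzero z (Finset.mem_filter.mp hz).1) (by
      intro z hz w hw h
      have h1 := (Finset.mem_filter.mp hz).2
      have h2 := (Finset.mem_filter.mp hw).2
      rw [h, Complex.conj_im] at h1
      linarith) (m+1)
  have hB := zeros_bound b p hb hp (Λ.filter (fun z => ¬ 0 < z.im))
    (fun z hz => hzero z (Finset.mem_filter.mp hz).1) (by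
      intro z hz w hw h
      have h1 := (Finset.mem_filter.mp hz).2
      have h2 := (Finset.mem_filter.mp hw).2
      have h3 := him z (Finset.mem_filter.mp hz).1
      rw [h, Complex.conj_im] at h1 h3
      have h4 : w.im ≠ 0 := fun h => h3 (by rw [h, neg_zero])
      exact h4 (by linarith)) (m+1)
  have hC : (∑ z ∈ Λ, (z ^ (m + 1))⁻¹).re ≤ ∑ z ∈ Λ, (‖z‖ ^ (m+1))⁻¹ := by
    rw [Complex.re_sum]
    refine Finset.sum_le_sum fun z _ => ?_
    refine (Complex.re_le_norm _).trans ?_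
    rw [norm_inv, norm_pow]
  have hD' : (2 * ∑ i, ((b i : ℂ) ^ (m + 1))⁻¹).re = 2 * ∑ i, (b i ^ (m+1))⁻¹ := by
    have : (2 * ∑ i, ((b i : ℂ) ^ (m + 1))⁻¹) = ((2 * ∑ i, (b i ^ (m+1))⁻¹ : ℝ) : ℂ) := by push_cast; rfl
    rw [this, Complex.ofReal_re]
  rw [Complex.sub_re, hD']
  linarith

open Polynomial in
lemma generic_nodup (P Q : Polynomial ℂ) (hcop : IsCoprime Q P) (hQ : Q.natDegree ≠ 0) :
    ∃ S : Set ℂ, S.Finite ∧ ∀ δ : ℂ, δ ∉ S → (P + C δ * Q ≠ 0) → (P + C δ * Q).roots.Nodup := by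
  set W := derivative P * Q - P * derivative Q with hW
  have hW0 : W ≠ 0 := by
    intro h
    have h1 : derivative P * Q = P * derivative Q := sub_eq_zero.mp h
    have h2 : Q ∣ derivative Q := hcop.dvd_of_dvd_mul_left ⟨derivative P, by rw [← h1]; ring⟩
    have h3 : derivative Q = 0 := by
      by_contra hne
      have hle := Polynomial.natDegree_le_of_dvd h2 hne
      have hlt := Polynomial.natDegree_derivative_lt hQ
      omega
    exact hQ (Polynomial.derivative_eq_zero.mp h3)
  refine ⟨(fun z => - P.eval z / Q.eval z) '' {z | z ∈ W.roots}, ?_, ?_⟩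
  · exact (Multiset.finite_toSet W.roots).image _
  · intro δ hδ hne
    rw [Polynomial.nodup_roots_iff_of_splits hne (IsAlgClosed.splits _),
      Polynomial.separable_def]
    by_contra hns
    have hex : ∃ z, (P + C δ * Q).eval z = 0 ∧ (derivative (P + C δ * Q)).eval z = 0 := by
      by_contra hno
      push Not at hno
      apply hns
      rw [Polynomial.isCoprime_iff_aeval_ne_zero_of_isAlgClosed ℂ ℂ]
      intro z
      by_cases h : (P + C δ * Q).eval z = 0
      · right; simpa [Polynomial.aeval_def] using hno z h
      · left; simpa [Polynomial.aeval_def] using h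
    obtain ⟨z, h1, h2⟩ := hex
    simp only [eval_add, eval_mul, eval_C, derivative_add, derivative_mul, derivative_C, zero_mul, zero_add] at h1 h2
    have hQz : Q.eval z ≠ 0 := by
      intro h
      rw [h] at h1
      obtain ⟨a, c, hac⟩ := hcop
      have := congrArg (eval z) hac
      simp only [eval_add, eval_mul, eval_one, h] at this
      simp at h1
      rw [h1] at this
      simp at this
    apply hδ
    refine ⟨z, ?_, ?_⟩
    · show z ∈ W.roots
      rw [mem_roots hW0, IsRoot.def, hW, eval_sub, eval_mul, eval_mul]
      linear_combination (eval z Q) * h2 - (eval z (derivative Q)) * h1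
    · simp only
      field_simp
      linear_combination -h1

lemma finite_all {ι : Type*} [Fintype ι] [Nonempty ι] (b p : ι → ℝ)
    (hb : ∀ i, 0 < b i) (hinj : Function.Injective b)
    (hp : ∀ i, 0 < p i) (m : ℕ) :
    0 ≤ cseq (fun k => mom b p k / mom b p 0) m := by
  classical
  obtain ⟨i0⟩ := id ‹Nonempty ι›
  let Q : Polynomial ℂ := ∏ k ∈ Finset.univ.erase i0, (Polynomial.C (b k : ℂ) - Polynomial.X) ^ 2
  let pd : ℝ → ι → ℝ := fun δ i => p i + if i = i0 then δ else 0
  have hpd : ∀ δ, numPoly b (pd δ) = numPoly b p + Polynomial.C (δ : ℂ) * Q := by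
    intro δ
    simp only [numPoly, pd, Q, Complex.ofReal_add, Polynomial.C_add, add_mul, Finset.sum_add_distrib]
    congr 1
    rw [Finset.sum_eq_single i0]
    · simp
    · intro i _ hi; simp [hi]
    · simp
  have hlin : ∀ k : ι, (Polynomial.C (b k : ℂ) - Polynomial.X : Polynomial ℂ) = - (Polynomial.X - Polynomial.C (b k : ℂ)) := by
    intro k; ring
  by_cases hcard : (Finset.univ.erase i0 : Finset ι) = ∅
  · apply finite_simple b p hb hinj hp
    have huniv : (Finset.univ : Finset ι) = {i0} := by
      ext i
      constructor
      · intro _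
        by_contra h
        have : i ∈ (Finset.univ.erase i0 : Finset ι) := by simpa using h
        rw [hcard] at this
        simp at this
      · simp
    have : numPoly b p = Polynomial.C (p i0 : ℂ) := by
      rw [numPoly, huniv]; simp
    rw [this, Polynomial.roots_C]
    exact Multiset.nodup_zero
  · obtain ⟨k0, hk0⟩ := Finset.nonempty_iff_ne_empty.mpr hcard
    have hQdeg : Q.natDegree ≠ 0 := by
      have hQ0 : Q ≠ 0 := by
        refine Finset.prod_ne_zero_iff.mpr fun k _ => pow_ne_zero _ ?_
        rw [hlin]; exact neg_ne_zero.mpr (Polynomial.X_sub_C_ne_zero _)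
      intro h
      rw [Polynomial.natDegree_eq_zero] at h
      obtain ⟨x, hx⟩ := h
      have h1 : Q.eval (b k0 : ℂ) = 0 := by
        simp only [Q, Polynomial.eval_prod]
        exact Finset.prod_eq_zero hk0 (by simp)
      rw [← hx] at h1
      simp at h1
      rw [h1] at hx
      exact hQ0 (by rw [← hx]; simp)
    have hcop : IsCoprime Q (numPoly b p) := by
      refine IsCoprime.prod_left fun k _ => IsCoprime.pow_left ?_
      rw [hlin, IsCoprime.neg_left_iff, (Polynomial.irreducible_X_sub_C _).coprime_iff_not_dvd,
        Polynomial.dvd_iff_isRoot]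
      exact numPoly_real b p hinj hp (b k)
    obtain ⟨S, hS, hSn⟩ := generic_nodup (numPoly b p) Q hcop hQdeg
    have hSr : (Complex.ofReal ⁻¹' S).Finite := hS.preimage Complex.ofReal_injective.injOn
    have hev : ∀ᶠ δ in nhdsWithin (0:ℝ) (Set.Ioi 0),
        0 ≤ cseq (fun k => mom b (pd δ) k / mom b (pd δ) 0) m := by
      have h1 : ∀ᶠ δ in nhdsWithin (0:ℝ) (Set.Ioi 0), δ ∉ (Complex.ofReal ⁻¹' S) := by
        have h2 : nhdsWithin (0:ℝ) (Set.Ioi 0) ≤ nhdsWithin (0:ℝ) {0}ᶜ :=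
          nhdsWithin_mono _ (fun x hx => (ne_of_gt hx : x ≠ 0))
        exact (h2.trans (nhdsNE_le_cofinite 0)) hSr.compl_mem_cofinite
      filter_upwards [h1, self_mem_nhdsWithin] with δ hδ hpos
      have hpp : ∀ i, 0 < pd δ i := by
        intro i
        have h3 : 0 < δ := hpos
        simp only [pd]
        split_ifs
        · linarith [hp i]
        · linarith [hp i]
      apply finite_simple b (pd δ) hb hinj hpp
      rw [hpd]
      apply hSn _ hδ
      rw [← hpd]
      intro h
      apply numPoly_real b (pd δ) hinj hpp 0
      rw [h]; simp
    have hpd0 : pd 0 = p := by funext i; simp [pd]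
    have hmom0 : mom b p 0 ≠ 0 := by
      simp only [mom]
      have : 0 < ∑ i, p i * (b i ^ (0 + 2))⁻¹ :=
        Finset.sum_pos (fun i _ => mul_pos (hp i) (inv_pos.mpr (pow_pos (hb i) _))) Finset.univ_nonempty
      push_cast
      linarith
    have hcont : ∀ k, Continuous (fun δ => mom b (pd δ) k) := by
      intro k
      simp only [mom, pd]
      refine continuous_const.mul (continuous_finsetSum _ fun i _ => ?_)
      refine Continuous.mul ?_ continuous_const
      split_ifs <;> fun_prop
    have hca : ContinuousAt (fun δ => cseq (fun k => mom b (pd δ) k / mom b (pd δ) 0) m) 0 := by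
      apply ContinuousAt.comp (f := fun δ => (fun k => mom b (pd δ) k / mom b (pd δ) 0))
        (g := fun φ : ℕ → ℝ => cseq φ m)
      · exact (cseq_continuous m).continuousAt
      · rw [continuousAt_pi]
        intro k
        exact (hcont k).continuousAt.div (hcont 0).continuousAt (by simpa [hpd0] using hmom0)
    have := ge_of_tendsto (hca.tendsto.mono_left nhdsWithin_le_nhds) hev
    simpa only [hpd0] using this

lemma cseq_integral (μ : Measure ℝ) (hμ : μ (Set.Iio 0) = 0) (x : ℝ) (hx : 0 < x)
    (hIntg : Integrable (fun t => ((x + t) ^ 2)⁻¹) μ)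
    (hpos : 0 < ∫ t, ((x + t) ^ 2)⁻¹ ∂μ) (m : ℕ) :
    0 ≤ cseq (fun k => (((k : ℝ) + 1) * ∫ t, ((x + t) ^ (k + 2))⁻¹ ∂μ) / ∫ t, ((x + t) ^ 2)⁻¹ ∂μ) m := by
  set J := ∫ t, ((x + t) ^ 2)⁻¹ ∂μ with hJ
  let dens : ℝ → ENNReal := fun t => ENNReal.ofReal (((x + t) ^ 2)⁻¹ / J)
  have hdm : Measurable dens := by
    apply Measurable.ennreal_ofReal
    fun_prop
  let ρ : Measure ℝ := μ.withDensity dens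
  have hnn : ∀ t, 0 ≤ ((x + t) ^ 2)⁻¹ / J := fun t => by positivity
  have hprob : IsProbabilityMeasure ρ := by
    constructor
    rw [withDensity_apply _ MeasurableSet.univ, Measure.restrict_univ,
      ← ofReal_integral_eq_lintegral_ofReal (hIntg.div_const J) (Filter.Eventually.of_forall hnn),
      integral_div, div_self hpos.ne', ENNReal.ofReal_one]
  have hae : ∀ᵐ t ∂μ, 0 ≤ t := by
    rw [ae_iff]; simpa [Set.Iio] using hμ
  have haeρ : ∀ᵐ t ∂ρ, 0 ≤ t := (withDensity_absolutelyContinuous μ dens).ae_le hae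
  let g : ℝ → (Fin (m + 2) → ℝ) := fun s k => ((k : ℕ) + 1 : ℝ) * (s ^ (k : ℕ))⁻¹
  let K : Set (Fin (m + 2) → ℝ) := convexHull ℝ (g '' Set.Ioi 0)
  let ext0 : (Fin (m + 2) → ℝ) → (ℕ → ℝ) := fun v k => if h : k < m + 2 then v ⟨k, h⟩ else 0
  have hext : Continuous ext0 := by
    refine continuous_pi fun k => ?_
    by_cases h : k < m + 2
    · simp only [ext0, h, dite_true]; fun_prop
    · simp only [ext0, h, dite_false]; fun_prop
  have hK : K ⊆ {v | 0 ≤ cseq (ext0 v) m} := by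
    intro v hv
    obtain ⟨ι, _, z, w, hz, haff, hw, hw1, hsum⟩ := eq_pos_convex_span_of_mem_convexHull hv
    have hne : Nonempty ι := by
      by_contra h
      rw [not_nonempty_iff] at h
      simp at hw1
    have hch : ∀ i, ∃ s, 0 < s ∧ g s = z i := by
      intro i
      obtain ⟨s, hs, h⟩ := hz ⟨i, rfl⟩
      exact ⟨s, hs, h⟩
    choose b hb hbz using hch
    have hinj : Function.Injective b := by
      intro i j h
      apply haff.injective
      rw [← hbz, ← hbz, h]
    have h := finite_all b (fun i => w i * b i ^ 2) hb hinj
      (fun i => mul_pos (hw i) (pow_pos (hb i) _)) m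
    have hmom : ∀ k, mom b (fun i => w i * b i ^ 2) k = ((k : ℝ) + 1) * ∑ i, w i * (b i ^ k)⁻¹ := by
      intro k
      simp only [mom]
      congr 1
      refine Finset.sum_congr rfl fun i _ => ?_
      have := (hb i).ne'
      field_simp
      ring
    have hmom0 : mom b (fun i => w i * b i ^ 2) 0 = 1 := by
      rw [hmom]; simp [hw1]
    rw [hmom0] at h
    show 0 ≤ cseq (ext0 v) m
    rw [cseq_congr (ext0 v) _ m ?_]
    · exact h
    · intro k hk
      have hk' : k < m + 2 := by omega
      simp only [ext0, hk', dite_true, ← hsum, hmom, div_one, Finset.sum_apply, Pi.smul_apply,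
        smul_eq_mul, ← hbz, g, Finset.mul_sum]
      refine Finset.sum_congr rfl fun i _ => ?_
      ring
  have hclos : closure K ⊆ {v | 0 ≤ cseq (ext0 v) m} :=
    closure_minimal hK (isClosed_le continuous_const ((cseq_continuous m).comp hext))
  have hbound : ∀ k : Fin (m + 2), Integrable (fun t => g (x + t) k) ρ := by
    intro k
    refine Integrable.of_bound (C := ((k : ℕ) + 1 : ℝ) * (x ^ (k : ℕ))⁻¹) ?_ ?_
    · apply Measurable.aestronglyMeasurable
      simp only [g]
      fun_prop
    · filter_upwards [haeρ] with t ht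
      have : 0 ≤ g (x + t) k := by simp only [g]; positivity
      rw [Real.norm_of_nonneg this]
      simp only [g]
      gcongr
      linarith
  have hmem : ∫ t, g (x + t) ∂ρ ∈ closure K := by
    apply (convex_convexHull ℝ _).closure.integral_mem isClosed_closure
    · filter_upwards [haeρ] with t ht
      apply subset_closure
      apply subset_convexHull
      exact ⟨x + t, by simp only [Set.mem_Ioi]; linarith, rfl⟩
    · exact Integrable.of_eval hbound
  have h := hclos hmem
  rw [cseq_congr _ (ext0 (∫ t, g (x + t) ∂ρ)) m ?_]
  · exact h
  · intro k hk
    have hk' : k < m + 2 := by omega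
    simp only [ext0, hk', dite_true]
    rw [eval_integral hbound]
    simp only [ρ]
    rw [integral_withDensity_eq_integral_toReal_smul hdm (by simp [dens])]
    rw [← integral_const_mul, ← integral_div]
    apply integral_congr_ae
    filter_upwards [hae] with t ht
    simp only [dens, g, smul_eq_mul, ENNReal.toReal_ofReal (hnn t)]
    have : x + t ≠ 0 := by positivity
    field_simp
    ring

/-- Stieltjes-type transforms of all integer orders. -/
noncomputable def stj (μ : Measure ℝ) (k : ℕ) (x : ℝ) : ℝ := ∫ t, ((x + t) ^ (k + 2))⁻¹ ∂μ

lemma stj_integrable (μ : Measure ℝ) (hμ : μ (Set.Iio 0) = 0)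
    (hIntg : ∀ x : ℝ, 0 < x → Integrable (fun t => ((x + t) ^ 2)⁻¹) μ)
    (k : ℕ) (x : ℝ) (hx : 0 < x) : Integrable (fun t => ((x + t) ^ (k + 2))⁻¹) μ := by
  have hae : ∀ᵐ t ∂μ, 0 ≤ t := by
    rw [ae_iff]; simpa [Set.Iio] using hμ
  refine Integrable.mono' ((hIntg x hx).const_mul (x ^ k)⁻¹) ?_ ?_
  · apply Measurable.aestronglyMeasurable
    fun_prop
  · filter_upwards [hae] with t ht
    have : 0 < x + t := by linarith
    rw [Real.norm_of_nonneg (by positivity), pow_add, mul_inv]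
    gcongr
    linarith

lemma stj_hasDerivAt (μ : Measure ℝ) (hμ : μ (Set.Iio 0) = 0)
    (hIntg : ∀ x : ℝ, 0 < x → Integrable (fun t => ((x + t) ^ 2)⁻¹) μ)
    (k : ℕ) (x : ℝ) (hx : 0 < x) :
    HasDerivAt (stj μ k) (-((k : ℝ) + 2) * stj μ (k + 1) x) x := by
  have hae : ∀ᵐ t ∂μ, 0 ≤ t := by
    rw [ae_iff]; simpa [Set.Iio] using hμ
  have h := hasDerivAt_integral_of_dominated_loc_of_deriv_le (μ := μ) (𝕜 := ℝ)
    (F := fun y t => ((y + t) ^ (k + 2))⁻¹)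
    (F' := fun y t => -((k : ℝ) + 2) * ((y + t) ^ (k + 1 + 2))⁻¹) (x₀ := x)
    (bound := fun t => ((k : ℝ) + 2) * ((x / 2 + t) ^ (k + 1 + 2))⁻¹)
    (s := Set.Ioi (x / 2)) (Ioi_mem_nhds (by linarith))
    (Filter.Eventually.of_forall fun y => by
      apply Measurable.aestronglyMeasurable
      fun_prop)
    (stj_integrable μ hμ hIntg k x hx)
    (by
      apply Measurable.aestronglyMeasurable
      fun_prop)
    (by
      filter_upwards [hae] with t ht y hy
      have hy' : x / 2 < y := hy
      have h1 : 0 < y + t := by linarith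
      have h2 : 0 < x / 2 + t := by linarith
      rw [norm_mul, norm_neg, Real.norm_of_nonneg (by positivity), Real.norm_of_nonneg (by positivity)]
      gcongr)
    ((stj_integrable μ hμ hIntg (k + 1) (x / 2) (by linarith)).const_mul _)
    (by
      filter_upwards [hae] with t ht y hy
      have hy' : x / 2 < y := hy
      have h1 : y + t ≠ 0 := by linarith
      have h2 := (((hasDerivAt_id y).add_const t).pow (k + 2)).inv (pow_ne_zero _ h1)
      simp only [id_eq] at h2
      refine HasDerivAt.congr_deriv (f := fun y => ((y + t) ^ (k + 2))⁻¹) h2 ?_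
      push_cast
      simp only [Pi.pow_apply]
      field_simp
      ring)
  have h2 := h.2
  rw [integral_const_mul] at h2
  exact h2

lemma stj_contDiffOn (μ : Measure ℝ) (hμ : μ (Set.Iio 0) = 0)
    (hIntg : ∀ x : ℝ, 0 < x → Integrable (fun t => ((x + t) ^ 2)⁻¹) μ)
    (n : ℕ) : ∀ k, ContDiffOn ℝ n (stj μ k) (Set.Ioi 0) := by
  induction n with
  | zero =>
    intro k
    rw [Nat.cast_zero, contDiffOn_zero]
    exact fun x hx => (stj_hasDerivAt μ hμ hIntg k x hx).continuousAt.continuousWithinAt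
  | succ n ih =>
    intro k
    rw [Nat.cast_succ, contDiffOn_succ_iff_deriv_of_isOpen isOpen_Ioi]
    refine ⟨fun x hx => (stj_hasDerivAt μ hμ hIntg k x hx).differentiableAt.differentiableWithinAt,
      by simp, ?_⟩
    have : ContDiffOn ℝ n (fun x => -((k : ℝ) + 2) * stj μ (k + 1) x) (Set.Ioi 0) :=
      contDiffOn_const.mul (ih (k + 1))
    exact this.congr fun x hx => (stj_hasDerivAt μ hμ hIntg k x hx).deriv

lemma stj_contDiffAt (μ : Measure ℝ) (hμ : μ (Set.Iio 0) = 0)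
    (hIntg : ∀ x : ℝ, 0 < x → Integrable (fun t => ((x + t) ^ 2)⁻¹) μ)
    (k : ℕ) (x : ℝ) (hx : 0 < x) : ContDiffAt ℝ (⊤ : ℕ∞) (stj μ k) x := by
  have : ContDiffOn ℝ (⊤ : ℕ∞) (stj μ k) (Set.Ioi 0) :=
    contDiffOn_infty.mpr fun n => stj_contDiffOn μ hμ hIntg n k
  exact this.contDiffAt (Ioi_mem_nhds hx)

lemma stj_iteratedDeriv (μ : Measure ℝ) (hμ : μ (Set.Iio 0) = 0)
    (hIntg : ∀ x : ℝ, 0 < x → Integrable (fun t => ((x + t) ^ 2)⁻¹) μ)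
    (n : ℕ) : ∀ x : ℝ, 0 < x →
    iteratedDeriv n (stj μ 0) x = (-1) ^ n * ((n + 1).factorial : ℝ) * stj μ n x := by
  induction n with
  | zero => intro x _; simp
  | succ n ih =>
    intro x hx
    rw [iteratedDeriv_succ]
    have h1 : iteratedDeriv n (stj μ 0) =ᶠ[nhds x]
        fun x => (-1) ^ n * ((n + 1).factorial : ℝ) * stj μ n x := by
      filter_upwards [Ioi_mem_nhds hx] with y hy using ih y hy
    rw [h1.deriv_eq, ((stj_hasDerivAt μ hμ hIntg n x hx).const_mul _).deriv,
      Nat.factorial_succ (n + 1)]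
    push_cast
    ring

lemma logCM_stj (μ : Measure ℝ) (hμ : μ (Set.Iio 0) = 0)
    (hIntg : ∀ x : ℝ, 0 < x → Integrable (fun t => ((x + t) ^ 2)⁻¹) μ)
    (hpos : ∀ x : ℝ, 0 < x → 0 < stj μ 0 x) : LogCompletelyMonotonic (stj μ 0) := by
  have hsm := stj_contDiffAt μ hμ hIntg
  set h : ℝ → ℝ := fun x => -deriv (stj μ 0) x / stj μ 0 x with hh
  have hder : ∀ x : ℝ, 0 < x → deriv (stj μ 0) x = - 2 * stj μ 1 x := by
    intro x hx
    rw [(stj_hasDerivAt μ hμ hIntg 0 x hx).deriv]; simp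
  have heq : ∀ x : ℝ, 0 < x → h =ᶠ[nhds x] fun y => 2 * stj μ 1 y / stj μ 0 y := by
    intro x hx
    filter_upwards [Ioi_mem_nhds hx] with y hy
    simp only [hh]
    rw [hder y hy]; ring
  have hcd : ∀ x : ℝ, 0 < x → ContDiffAt ℝ (⊤ : ℕ∞) h x := by
    intro x hx
    refine ContDiffAt.congr_of_eventuallyEq ?_ (heq x hx)
    exact (contDiffAt_const.mul (hsm 1 x hx)).div (hsm 0 x hx) (hpos x hx).ne'
  refine ⟨hpos, hsm 0, hcd, ?_⟩
  intro n x hx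
  have hprod : ∀ m : ℕ, - iteratedDeriv (m + 1) (stj μ 0) x =
      ∑ i ∈ Finset.range (m + 1), (m.choose i : ℝ) * iteratedDeriv i h x * iteratedDeriv (m - i) (stj μ 0) x := by
    intro m
    rw [← iteratedDeriv_fun_mul ((hcd x hx).of_le (by exact_mod_cast le_top))
      ((hsm 0 x hx).of_le (by exact_mod_cast le_top)), iteratedDeriv_succ']
    have : (fun y => h y * stj μ 0 y) =ᶠ[nhds x] (- deriv (stj μ 0)) := by
      filter_upwards [Ioi_mem_nhds hx] with y hy
      have := (hpos y hy).ne'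
      simp only [hh, Pi.neg_apply]
      field_simp
    rw [this.iteratedDeriv_eq m, iteratedDeriv_neg]
  have hJ : 0 < stj μ 0 x := hpos x hx
  let φ : ℕ → ℝ := fun k => (((k : ℝ) + 1) * ∫ t, ((x + t) ^ (k + 2))⁻¹ ∂μ) / ∫ t, ((x + t) ^ 2)⁻¹ ∂μ
  have hφ : ∀ k, φ k = ((k : ℝ) + 1) * stj μ k x / stj μ 0 x := fun k => rfl
  have hid : ∀ k, iteratedDeriv k (stj μ 0) x = (-1) ^ k * (k.factorial : ℝ) * φ k * stj μ 0 x := by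
    intro k
    rw [stj_iteratedDeriv μ hμ hIntg k x hx, hφ, Nat.factorial_succ]
    push_cast
    field_simp
  have hge : 0 ≤ cseq φ n := cseq_integral μ hμ x hx (hIntg x hx) hJ n
  clear_value φ
  have huniq := cseq_unique φ (by rw [hφ]; simp [hJ.ne'])
    (fun m => (((-1) ^ m * iteratedDeriv m h x / (m.factorial : ℝ) : ℝ) : ℂ)) (by
      intro m
      have h1 := hprod m
      rw [hid] at h1
      have h2 : ((m : ℝ) + 1) * φ (m + 1) = ∑ j ∈ Finset.range (m + 1),
          ((-1) ^ j * iteratedDeriv j h x / (j.factorial : ℝ)) * φ (m - j) := by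
        have h3 : (-1 : ℝ) ^ m * (m.factorial : ℝ) * stj μ 0 x ≠ 0 := by
          apply mul_ne_zero (mul_ne_zero (pow_ne_zero _ (by norm_num)) _) hJ.ne'
          exact_mod_cast (Nat.factorial_ne_zero m)
        apply mul_left_cancel₀ h3
        rw [Finset.mul_sum]
        calc _ = -((-1) ^ (m + 1) * ((m + 1).factorial : ℝ) * φ (m + 1) * stj μ 0 x) := by
              rw [Nat.factorial_succ]; push_cast; ring
          _ = _ := h1
          _ = _ := by
              refine Finset.sum_congr rfl fun j hj => ?_
              have hjm : j ≤ m := by simpa [Nat.lt_succ_iff] using hj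
              rw [hid, Nat.cast_choose ℝ hjm]
              have e1 : (j.factorial : ℝ) ≠ 0 := by exact_mod_cast Nat.factorial_ne_zero j
              have e2 : ((m - j).factorial : ℝ) ≠ 0 := by exact_mod_cast Nat.factorial_ne_zero (m - j)
              have e3 : (-1 : ℝ) ^ m = (-1) ^ (m - j) * (-1) ^ j := by
                rw [← pow_add, Nat.sub_add_cancel hjm]
              have e4 : (-1 : ℝ) ^ j * (-1) ^ j = 1 := by
                rw [← mul_pow]; norm_num
              rw [e3]
              field_simp
              linear_combination (-(iteratedDeriv j h x * φ (m - j))) * e4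
      exact_mod_cast h2) n
  have h5 : (-1) ^ n * iteratedDeriv n h x / (n.factorial : ℝ) = cseq φ n := by exact_mod_cast huniq
  rw [← h5] at hge
  have h6 : (0:ℝ) < (n.factorial : ℝ) := by exact_mod_cast Nat.factorial_pos n
  have := mul_nonneg hge h6.le
  rwa [div_mul_cancel₀ _ h6.ne'] at this

lemma logCM_congr (f g : ℝ → ℝ) (hfg : ∀ x : ℝ, 0 < x → f x = g x) (hg : LogCompletelyMonotonic g) :
    LogCompletelyMonotonic f := by
  obtain ⟨h1, h2, h3, h4⟩ := hg
  have hev : ∀ x : ℝ, 0 < x → f =ᶠ[nhds x] g := by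
    intro x hx
    filter_upwards [Ioi_mem_nhds hx] with y hy using hfg y hy
  have hev2 : ∀ x : ℝ, 0 < x → (fun x => -deriv f x / f x) =ᶠ[nhds x] (fun x => -deriv g x / g x) := by
    intro x hx
    filter_upwards [Ioi_mem_nhds hx] with y hy
    rw [hfg y hy, (hev y hy).deriv_eq]
  refine ⟨fun x hx => by rw [hfg x hx]; exact h1 x hx,
    fun x hx => (h2 x hx).congr_of_eventuallyEq (hev x hx),
    fun x hx => (h3 x hx).congr_of_eventuallyEq (hev2 x hx), fun n x hx => ?_⟩
  rw [(hev2 x hx).iteratedDeriv_eq n]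
  exact h4 n x hx


/-- The `2`-antiperiodic square wave. -/
noncomputable def hfun (ν s : ℝ) : ℝ :=
  (if Real.cos (Real.pi * ν / 2) < Real.sin (Real.pi * s / 2) then 1 else 0) -
    (if Real.cos (Real.pi * ν / 2) < -Real.sin (Real.pi * s / 2) then 1 else 0)

lemma hfun_measurable (ν : ℝ) : Measurable (hfun ν) := by
  unfold hfun
  refine Measurable.sub ?_ ?_
  · refine Measurable.ite ?_ measurable_const measurable_const
    exact measurableSet_lt (by fun_prop) (by fun_prop)
  · refine Measurable.ite ?_ measurable_const measurable_const
    exact measurableSet_lt (by fun_prop) (by fun_prop)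

lemma hfun_abs_le (ν s : ℝ) : |hfun ν s| ≤ 1 := by
  unfold hfun
  split_ifs <;> norm_num

lemma hfun_shift (ν s : ℝ) : hfun ν (s + 2) = -hfun ν s := by
  unfold hfun
  have : Real.sin (Real.pi * (s + 2) / 2) = -Real.sin (Real.pi * s / 2) := by
    rw [← Real.sin_add_pi]; congr 1; ring
  rw [this, neg_neg]
  ring

lemma hfun_eq (ν : ℝ) (h0 : 0 ≤ ν) (h1 : ν ≤ 1) (s : ℝ) (hs : s ∈ Set.Ioc (0 : ℝ) 2) :
    hfun ν s = (Set.Ioo (1 - ν) (1 + ν)).indicator (fun _ => (1 : ℝ)) s := by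
  have hpi := Real.pi_pos
  have hC : 0 ≤ Real.cos (Real.pi * ν / 2) :=
    Real.cos_nonneg_of_mem_Icc ⟨by nlinarith, by nlinarith⟩
  have hS : 0 ≤ Real.sin (Real.pi * s / 2) :=
    Real.sin_nonneg_of_nonneg_of_le_pi (by nlinarith [hs.1]) (by nlinarith [hs.2])
  have hSc : Real.sin (Real.pi * s / 2) = Real.cos (Real.pi * |s - 1| / 2) := by
    rw [← Real.cos_pi_div_two_sub, ← Real.cos_abs]
    congr 1
    rw [show Real.pi / 2 - Real.pi * s / 2 = -(Real.pi / 2 * (s - 1)) by ring, abs_neg, abs_mul,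
      abs_of_pos (by positivity)]
    ring
  have habs : |s - 1| ≤ 1 := abs_le.2 ⟨by linarith [hs.1], by linarith [hs.2]⟩
  have habs0 := abs_nonneg (s - 1)
  have hiff : Real.cos (Real.pi * ν / 2) < Real.sin (Real.pi * s / 2) ↔
      s ∈ Set.Ioo (1 - ν) (1 + ν) := by
    rw [hSc, Real.strictAntiOn_cos.lt_iff_gt ⟨by positivity, by nlinarith⟩
      ⟨by positivity, by nlinarith⟩]
    rw [show (Real.pi * |s - 1| / 2 < Real.pi * ν / 2) ↔ |s - 1| < ν by
      constructor
      · intro h; nlinarith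
      · intro h; nlinarith]
    rw [abs_lt, Set.mem_Ioo]
    constructor
    · rintro ⟨a, b⟩; constructor <;> linarith
    · rintro ⟨a, b⟩; constructor <;> linarith
  unfold hfun
  rw [if_neg (show ¬ Real.cos (Real.pi * ν / 2) < -Real.sin (Real.pi * s / 2) by linarith)]
  by_cases h : s ∈ Set.Ioo (1 - ν) (1 + ν)
  · rw [if_pos (hiff.2 h), Set.indicator_of_mem h]; ring
  · rw [if_neg (fun h' => h (hiff.1 h')), Set.indicator_of_notMem h]; ring

lemma exp_hfun_integrableOn (ν t : ℝ) (ht : 0 < t) :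
    IntegrableOn (fun s => Real.exp (-s * t) * hfun ν s) (Set.Ioi 0) := by
  have h1 : IntegrableOn (fun s => Real.exp (-t * s)) (Set.Ioi 0) :=
    integrableOn_exp_mul_Ioi (by linarith) 0
  refine Integrable.mono' h1 ?_ ?_
  · exact (Measurable.mul (by fun_prop) (hfun_measurable ν)).aestronglyMeasurable
  · refine Filter.Eventually.of_forall fun s => ?_
    rw [norm_mul, Real.norm_eq_abs, Real.norm_eq_abs, Real.abs_exp]
    have := hfun_abs_le ν s
    have he := Real.exp_pos (-s * t)
    rw [show -t * s = -s * t by ring]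
    nlinarith

lemma integral_exp_hfun (ν t : ℝ) (h0 : 0 ≤ ν) (h1 : ν ≤ 1) (ht : 0 < t) :
    t * ∫ s in Set.Ioi (0 : ℝ), Real.exp (-s * t) * hfun ν s =
      Real.sinh (ν * t) / Real.cosh t := by
  have hI := exp_hfun_integrableOn ν t ht
  set I := ∫ s in Set.Ioi (0 : ℝ), Real.exp (-s * t) * hfun ν s with hIdef
  have hsplit : I = (∫ s in Set.Ioc (0 : ℝ) 2, Real.exp (-s * t) * hfun ν s) +
      ∫ s in Set.Ioi (2 : ℝ), Real.exp (-s * t) * hfun ν s := by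
    rw [hIdef, ← Set.Ioc_union_Ioi_eq_Ioi (show (0 : ℝ) ≤ 2 by norm_num)]
    refine setIntegral_union (Set.Ioc_disjoint_Ioi le_rfl) measurableSet_Ioi
      (hI.mono_set Set.Ioc_subset_Ioi_self) (hI.mono_set ?_)
    exact Set.Ioi_subset_Ioi (by norm_num)
  have hshift : (∫ s in Set.Ioi (2 : ℝ), Real.exp (-s * t) * hfun ν s) =
      -(Real.exp (-2 * t)) * I := by
    have := (measurePreserving_add_right (volume : Measure ℝ) 2).setIntegral_preimage_emb
      (measurableEmbedding_addRight 2) (fun s => Real.exp (-s * t) * hfun ν s) (Set.Ioi 2)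
    rw [← this, Set.preimage_add_const_Ioi, sub_self, hIdef, ← integral_const_mul]
    refine integral_congr_ae (Filter.Eventually.of_forall fun s => ?_)
    simp only
    rw [hfun_shift, show -(s + 2) * t = -2 * t + -s * t by ring, Real.exp_add]
    ring
  have hJ : (∫ s in Set.Ioc (0 : ℝ) 2, Real.exp (-s * t) * hfun ν s) =
      (Real.exp (-(1 - ν) * t) - Real.exp (-(1 + ν) * t)) / t := by
    have e1 : (∫ s in Set.Ioc (0 : ℝ) 2, Real.exp (-s * t) * hfun ν s) =
        ∫ s in Set.Ioc (0 : ℝ) 2,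
          (Set.Ioo (1 - ν) (1 + ν)).indicator (fun s => Real.exp (-s * t)) s := by
      refine setIntegral_congr_fun measurableSet_Ioc fun s hs => ?_
      rw [hfun_eq ν h0 h1 s hs]
      by_cases h : s ∈ Set.Ioo (1 - ν) (1 + ν)
      · rw [Set.indicator_of_mem h, Set.indicator_of_mem h, mul_one]
      · rw [Set.indicator_of_notMem h, Set.indicator_of_notMem h, mul_zero]
    rw [e1, setIntegral_indicator measurableSet_Ioo]
    have hsub : Set.Ioo (1 - ν) (1 + ν) ⊆ Set.Ioc (0 : ℝ) 2 :=
      fun s hs => ⟨by linarith [hs.1], by linarith [hs.2]⟩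
    rw [Set.inter_eq_right.2 hsub,
      ← integral_Ioc_eq_integral_Ioo, ← intervalIntegral.integral_of_le (by linarith)]
    rw [intervalIntegral.integral_eq_sub_of_hasDerivAt
      (f := fun s => -(Real.exp (-s * t)) / t)]
    · ring
    · intro s _
      have : HasDerivAt (fun s : ℝ => -s * t) (-1 * t) s := (hasDerivAt_neg s).mul_const t
      refine (this.exp.neg.div_const t).congr_deriv ?_
      field_simp
    · exact (by fun_prop : Continuous fun s : ℝ => Real.exp (-s * t)).intervalIntegrable _ _
  rw [hshift, hJ] at hsplit
  have hc := Real.cosh_pos t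
  rw [eq_div_iff hc.ne']
  have hE := Real.exp_pos t
  have a1 : Real.exp (-2 * t) = Real.exp (-t) * Real.exp (-t) := by
    rw [← Real.exp_add]; congr 1; ring
  have a2 : Real.exp (-(1 - ν) * t) = Real.exp (-t) * Real.exp (ν * t) := by
    rw [← Real.exp_add]; congr 1; ring
  have a3 : Real.exp (-(1 + ν) * t) = Real.exp (-t) * Real.exp (-(ν * t)) := by
    rw [← Real.exp_add]; congr 1; ring
  have a4 : Real.exp t * Real.exp (-t) = 1 := by rw [← Real.exp_add]; simp
  rw [a1, a2, a3] at hsplit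
  rw [Real.sinh_eq, Real.cosh_eq]
  have h3 : t * I * (1 + Real.exp (-t) * Real.exp (-t)) =
      Real.exp (-t) * Real.exp (ν * t) - Real.exp (-t) * Real.exp (-(ν * t)) := by
    field_simp at hsplit
    rw [mul_comm t ν] at hsplit
    linear_combination hsplit
  linear_combination (Real.exp t / 2) * h3 +
    ((Real.exp (ν * t) - Real.exp (-(ν * t))) / 2 - t * I * Real.exp (-t) / 2) * a4

/-- The density of the representing measure. -/
noncomputable def wfun (ν ε s : ℝ) : ℝ := 1 + ε * hfun ν s

lemma wfun_measurable (ν ε : ℝ) : Measurable (wfun ν ε) := by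
  unfold wfun
  exact measurable_const.add ((hfun_measurable ν).const_mul ε)

lemma wfun_bounds (ν ε s : ℝ) (hε : ε = 1 ∨ ε = -1) : 0 ≤ wfun ν ε s ∧ wfun ν ε s ≤ 2 := by
  have := abs_le.1 (hfun_abs_le ν s)
  unfold wfun
  rcases hε with rfl | rfl <;> constructor <;> linarith

lemma integral_exp_one (t : ℝ) (ht : 0 < t) :
    ∫ s in Set.Ioi (0 : ℝ), Real.exp (-s * t) = 1 / t := by
  have := integral_exp_mul_Ioi (a := -t) (by linarith) 0
  simp only [mul_zero, Real.exp_zero] at this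
  simp_rw [show ∀ s : ℝ, -s * t = -t * s from fun s => by ring]
  rw [this]
  field_simp

lemma tau_eq (ν ε t : ℝ) (h0 : 0 ≤ ν) (h1 : ν ≤ 1) (ht : 0 < t) :
    ∫ s in Set.Ioi (0 : ℝ), t * Real.exp (-s * t) * wfun ν ε s =
      1 + ε * (Real.sinh (ν * t) / Real.cosh t) := by
  have hI := exp_hfun_integrableOn ν t ht
  have hE : IntegrableOn (fun s => Real.exp (-s * t)) (Set.Ioi 0) := by
    simp_rw [show ∀ s : ℝ, -s * t = -t * s from fun s => by ring]
    exact integrableOn_exp_mul_Ioi (by linarith) 0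
  have : ∀ s, t * Real.exp (-s * t) * wfun ν ε s =
      t * Real.exp (-s * t) + t * ε * (Real.exp (-s * t) * hfun ν s) := by
    intro s; unfold wfun; ring
  simp_rw [this]
  rw [integral_add (hE.const_mul t) (hI.const_mul (t * ε)), integral_const_mul, integral_const_mul,
    integral_exp_one t ht, ← integral_exp_hfun ν t h0 h1 ht]
  field_simp

lemma integrableOn_t_exp (r : ℝ) (hr : 0 < r) :
    IntegrableOn (fun t => t * Real.exp (-r * t)) (Set.Ioi 0) := by
  have := integrableOn_rpow_mul_exp_neg_mul_rpow (s := 1) (p := 1) (b := r) (by norm_num)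
    (by norm_num) hr
  simpa using this

lemma integral_t_exp (r : ℝ) (hr : 0 < r) :
    ∫ t in Set.Ioi (0 : ℝ), t * Real.exp (-r * t) = (r ^ 2)⁻¹ := by
  have := Real.integral_rpow_mul_exp_neg_mul_Ioi (a := 2) (r := r) (by norm_num) hr
  rw [Real.Gamma_two] at this
  norm_num at this
  simpa using this

lemma integrableOn_sq_inv (x : ℝ) (hx : 0 < x) :
    IntegrableOn (fun s => ((x + s) ^ 2)⁻¹) (Set.Ioi 0) := by
  have := integrableOn_add_rpow_Ioi_of_lt (a := -2) (c := 0) (m := x) (by norm_num) (by linarith)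
  refine this.congr_fun (fun s hs => ?_) measurableSet_Ioi
  have hs' : 0 < s := hs
  simp only
  rw [Real.rpow_neg (by linarith), add_comm]
  norm_num

lemma w_sq_integrableOn (ν ε x : ℝ) (hε : ε = 1 ∨ ε = -1) (hx : 0 < x) :
    IntegrableOn (fun s => wfun ν ε s * ((x + s) ^ 2)⁻¹) (Set.Ioi 0) := by
  refine Integrable.mono' ((integrableOn_sq_inv x hx).const_mul 2) ?_ ?_
  · exact ((wfun_measurable ν ε).mul (by fun_prop)).aestronglyMeasurable
  · refine Filter.Eventually.of_forall fun s => ?_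
    have := wfun_bounds ν ε s hε
    rw [Real.norm_of_nonneg (mul_nonneg this.1 (by positivity))]
    exact mul_le_mul_of_nonneg_right this.2 (by positivity)

lemma laplace_tau (ν ε x : ℝ) (h0 : 0 ≤ ν) (h1 : ν ≤ 1) (hε : ε = 1 ∨ ε = -1) (hx : 0 < x) :
    LaplaceTransform (fun x => 1 + ε * (Real.sinh (ν * x) / Real.cosh x)) x =
      ∫ s in Set.Ioi (0 : ℝ), wfun ν ε s * ((x + s) ^ 2)⁻¹ := by
  have e1 : LaplaceTransform (fun x => 1 + ε * (Real.sinh (ν * x) / Real.cosh x)) x =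
      ∫ t in Set.Ioi (0 : ℝ), ∫ s in Set.Ioi (0 : ℝ),
        wfun ν ε s * (t * Real.exp (-(x + s) * t)) := by
    unfold LaplaceTransform
    refine setIntegral_congr_fun measurableSet_Ioi fun t ht => ?_
    simp only
    rw [← tau_eq ν ε t h0 h1 ht, ← integral_const_mul]
    refine integral_congr_ae (Filter.Eventually.of_forall fun s => ?_)
    simp only
    rw [show -(x + s) * t = -x * t + -s * t by ring, Real.exp_add]
    ring
  have e2 : ∀ s ∈ Set.Ioi (0 : ℝ), ∫ t in Set.Ioi (0 : ℝ),
      wfun ν ε s * (t * Real.exp (-(x + s) * t)) = wfun ν ε s * ((x + s) ^ 2)⁻¹ := by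
    intro s hs
    have hs' : 0 < s := hs
    rw [integral_const_mul, integral_t_exp (x + s) (by linarith)]
  rw [e1, integral_integral_swap]
  · exact setIntegral_congr_fun measurableSet_Ioi e2
  · have hm : Measurable (Function.uncurry fun t s : ℝ =>
        wfun ν ε s * (t * Real.exp (-(x + s) * t))) := by
      refine Measurable.mul ((wfun_measurable ν ε).comp measurable_snd) ?_
      fun_prop
    rw [integrable_prod_iff' hm.aestronglyMeasurable]
    constructor
    · filter_upwards [ae_restrict_mem measurableSet_Ioi] with s hs
      have hs' : 0 < s := hs
      have hi := (integrableOn_t_exp (x + s) (by linarith)).const_mul (wfun ν ε s)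
      exact hi
    · refine (w_sq_integrableOn ν ε x hε hx).congr ?_
      filter_upwards [ae_restrict_mem measurableSet_Ioi] with s hs
      rw [← e2 s hs]
      refine setIntegral_congr_fun measurableSet_Ioi fun t ht => ?_
      have ht' : 0 < t := ht
      have := wfun_bounds ν ε s hε
      simp only [Function.uncurry]
      rw [Real.norm_of_nonneg (mul_nonneg this.1 (by positivity))]

/-- The representing measure. -/
noncomputable def wmeas (ν ε : ℝ) : Measure ℝ :=
  (volume.restrict (Set.Ioi (0 : ℝ))).withDensity (fun s => ENNReal.ofReal (wfun ν ε s))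

lemma wmeas_Iio (ν ε : ℝ) : wmeas ν ε (Set.Iio 0) = 0 := by
  refine withDensity_absolutelyContinuous _ _ ?_
  rw [Measure.restrict_apply measurableSet_Iio]
  have : Set.Iio (0 : ℝ) ∩ Set.Ioi 0 = ∅ := by
    ext y; simp only [Set.mem_inter_iff, Set.mem_Iio, Set.mem_Ioi, Set.mem_empty_iff_false, iff_false]
    rintro ⟨a, b⟩; linarith
  rw [this, measure_empty]

lemma wmeas_integrable (ν ε x : ℝ) (hε : ε = 1 ∨ ε = -1) (hx : 0 < x) :
    Integrable (fun t => ((x + t) ^ 2)⁻¹) (wmeas ν ε) := by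
  unfold wmeas
  rw [integrable_withDensity_iff_integrable_smul' (wfun_measurable ν ε).ennreal_ofReal
    (Filter.Eventually.of_forall fun s => ENNReal.ofReal_lt_top)]
  refine (w_sq_integrableOn ν ε x hε hx).congr (Filter.Eventually.of_forall fun s => ?_)
  simp only [smul_eq_mul]
  rw [ENNReal.toReal_ofReal (wfun_bounds ν ε s hε).1]

lemma laplace_tau_stj (ν ε x : ℝ) (h0 : 0 ≤ ν) (h1 : ν ≤ 1) (hε : ε = 1 ∨ ε = -1) (hx : 0 < x) :
    LaplaceTransform (fun x => 1 + ε * (Real.sinh (ν * x) / Real.cosh x)) x =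
      ∫ t, ((x + t) ^ 2)⁻¹ ∂(wmeas ν ε) := by
  rw [laplace_tau ν ε x h0 h1 hε hx]
  unfold wmeas
  rw [integral_withDensity_eq_integral_toReal_smul (wfun_measurable ν ε).ennreal_ofReal
    (Filter.Eventually.of_forall fun s => ENNReal.ofReal_lt_top)]
  refine integral_congr_ae (Filter.Eventually.of_forall fun s => ?_)
  simp only [smul_eq_mul]
  rw [ENNReal.toReal_ofReal (wfun_bounds ν ε s hε).1]

lemma ratio_bounds (ν t : ℝ) (h0 : 0 ≤ ν) (h1 : ν ≤ 1) (ht : 0 < t) :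
    0 ≤ Real.sinh (ν * t) / Real.cosh t ∧ Real.sinh (ν * t) / Real.cosh t < 1 := by
  have hc := Real.cosh_pos t
  constructor
  · exact div_nonneg (Real.sinh_nonneg_iff.2 (by positivity)) hc.le
  · rw [div_lt_one hc]
    have : Real.sinh (ν * t) ≤ Real.sinh t := Real.sinh_le_sinh.2 (by nlinarith)
    exact this.trans_lt (Real.sinh_lt_cosh t)

lemma ratio_continuous (ν : ℝ) : Continuous fun t => Real.sinh (ν * t) / Real.cosh t := by
  refine Continuous.div ?_ Real.continuous_cosh fun t => (Real.cosh_pos t).ne'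
  exact Real.continuous_sinh.comp (by fun_prop)

lemma exp_int (x : ℝ) (hx : 0 < x) : IntegrableOn (fun t => Real.exp (-x * t)) (Set.Ioi 0) :=
  integrableOn_exp_mul_Ioi (by linarith) 0

lemma ratio_integrable (ν x : ℝ) (h0 : 0 ≤ ν) (h1 : ν ≤ 1) (hx : 0 < x) :
    IntegrableOn (fun t => Real.exp (-x * t) * (Real.sinh (ν * t) / Real.cosh t)) (Set.Ioi 0) := by
  refine Integrable.mono' (exp_int x hx) ?_ ?_
  · exact (Continuous.mul (by fun_prop) (ratio_continuous ν)).aestronglyMeasurable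
  · filter_upwards [ae_restrict_mem measurableSet_Ioi] with t ht
    have hb := ratio_bounds ν t h0 h1 ht
    rw [Real.norm_of_nonneg (mul_nonneg (Real.exp_pos _).le hb.1)]
    nlinarith [Real.exp_pos (-x * t)]

lemma laplace_tau_split (ν ε x : ℝ) (h0 : 0 ≤ ν) (h1 : ν ≤ 1) (hx : 0 < x) :
    LaplaceTransform (fun x => 1 + ε * (Real.sinh (ν * x) / Real.cosh x)) x =
      1 / x + ε * ∫ t in Set.Ioi (0 : ℝ), Real.exp (-x * t) * (Real.sinh (ν * t) / Real.cosh t) := by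
  unfold LaplaceTransform
  have : ∀ t, Real.exp (-x * t) * (1 + ε * (Real.sinh (ν * t) / Real.cosh t)) =
      Real.exp (-x * t) + ε * (Real.exp (-x * t) * (Real.sinh (ν * t) / Real.cosh t)) := by
    intro t; ring
  simp_rw [this]
  rw [integral_add (exp_int x hx) ((ratio_integrable ν x h0 h1 hx).const_mul ε),
    integral_const_mul]
  congr 1
  rw [← integral_exp_one x hx]
  refine integral_congr_ae (Filter.Eventually.of_forall fun s => ?_)
  simp only
  congr 1; ring

lemma laplace_tau_pos (ν ε x : ℝ) (h0 : 0 ≤ ν) (h1 : ν ≤ 1) (hε : ε = 1 ∨ ε = -1) (hx : 0 < x) :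
    0 < LaplaceTransform (fun x => 1 + ε * (Real.sinh (ν * x) / Real.cosh x)) x := by
  have hpos : ∀ t ∈ Set.Ioi (0 : ℝ),
      0 < Real.exp (-x * t) * (1 + ε * (Real.sinh (ν * t) / Real.cosh t)) := by
    intro t ht
    have hb := ratio_bounds ν t h0 h1 ht
    refine mul_pos (Real.exp_pos _) ?_
    rcases hε with rfl | rfl <;> linarith
  have hIntg : IntegrableOn (fun t => Real.exp (-x * t) *
      (1 + ε * (Real.sinh (ν * t) / Real.cosh t))) (Set.Ioi 0) := by
    refine ((exp_int x hx).add ((ratio_integrable ν x h0 h1 hx).const_mul ε)).congr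
      (Filter.Eventually.of_forall fun t => ?_)
    simp only [Pi.add_apply]
    ring
  unfold LaplaceTransform
  rw [setIntegral_pos_iff_support_of_nonneg_ae ?_ hIntg]
  · have : Set.Ioi (0 : ℝ) ⊆ Function.support (fun t => Real.exp (-x * t) *
        (1 + ε * (Real.sinh (ν * t) / Real.cosh t))) := fun t ht => (hpos t ht).ne'
    rw [Set.inter_eq_right.2 this]
    simp
  · filter_upwards [ae_restrict_mem measurableSet_Ioi] with t ht
    exact (hpos t ht).le

lemma beta_half (y : ℝ) :
    (1 / 2) * nielsenBeta (y / 2) =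
      ∫ u in Set.Ioi (0 : ℝ), Real.exp (-y * u) / (1 + Real.exp (-(2 * u))) := by
  have := integral_comp_mul_left_Ioi
    (fun t => Real.exp (-(y / 2) * t) / (1 + Real.exp (-t))) 0 (show (0 : ℝ) < 2 by norm_num)
  rw [mul_zero, smul_eq_mul] at this
  unfold nielsenBeta
  rw [one_div, ← this]
  refine integral_congr_ae (Filter.Eventually.of_forall fun s => ?_)
  simp only
  congr 2; ring

lemma beta_integrable (y : ℝ) (hy : 0 < y) :
    IntegrableOn (fun u => Real.exp (-y * u) / (1 + Real.exp (-(2 * u)))) (Set.Ioi 0) := by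
  refine Integrable.mono' (exp_int y hy) ?_ ?_
  · refine (Continuous.div (by fun_prop) (by fun_prop) fun u => ?_).aestronglyMeasurable
    positivity
  · refine Filter.Eventually.of_forall fun u => ?_
    rw [Real.norm_of_nonneg (by positivity)]
    exact div_le_self (Real.exp_pos _).le (by linarith [Real.exp_pos (-(2 * u))])

lemma ratio_formula (ν x : ℝ) (hν0 : 0 ≤ ν) (h1 : ν ≤ 1) (hx : 0 < x) :
    ∫ t in Set.Ioi (0 : ℝ), Real.exp (-x * t) * (Real.sinh (ν * t) / Real.cosh t) =
      (1 / 2) * (nielsenBeta ((x + 1 - ν) / 2) - nielsenBeta ((x + 1 + ν) / 2)) := by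
  rw [mul_sub, beta_half, beta_half,
    ← integral_sub (beta_integrable _ (by linarith)) (beta_integrable _ (by linarith))]
  refine integral_congr_ae (Filter.Eventually.of_forall fun t => ?_)
  simp only
  have a0 : Real.exp (-(2 * t)) = Real.exp (-t) * Real.exp (-t) := by
    rw [← Real.exp_add]; congr 1; ring
  have a1 : Real.exp (-(x + 1 - ν) * t) = Real.exp (-x * t) * Real.exp (-t) * Real.exp (ν * t) := by
    rw [← Real.exp_add, ← Real.exp_add]; congr 1; ring
  have a2 : Real.exp (-(x + 1 + ν) * t) =
      Real.exp (-x * t) * Real.exp (-t) * Real.exp (-(ν * t)) := by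
    rw [← Real.exp_add, ← Real.exp_add]; congr 1; ring
  have a4 : Real.exp t * Real.exp (-t) = 1 := by rw [← Real.exp_add]; simp
  have hp := Real.exp_pos t
  have hm := Real.exp_pos (-t)
  rw [a0, a1, a2, ← sub_div, Real.sinh_eq, Real.cosh_eq, ← mul_div_assoc]
  rw [div_eq_div_iff (by positivity) (by positivity)]
  linear_combination (-(Real.exp (-x * t) * (Real.exp (ν * t) - Real.exp (-(ν * t)))) / 2) * a4

/-- Theorem: for `ν ∈ [0,1]` and either sign `ε = ±1`, the Laplace transform of
`τ(x) = 1 ± sinh(νx)/cosh x` is a generalized Stieltjes function of order 2 (hence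
logarithmically completely monotonic), and
`L(τ)(x) = 1/x ± (1/2)(β((x+1-ν)/2) - β((x+1+ν)/2))`. -/
theorem stmt8 (ν : ℝ) (hν0 : 0 ≤ ν) (hν1 : ν ≤ 1) (ε : ℝ) (hε : ε = 1 ∨ ε = -1) :
    IsGenStieltjes 2 (LaplaceTransform (fun x => 1 + ε * (Real.sinh (ν * x) / Real.cosh x))) ∧
    LogCompletelyMonotonic
      (LaplaceTransform (fun x => 1 + ε * (Real.sinh (ν * x) / Real.cosh x))) ∧
    (∀ x : ℝ, 0 < x →
      LaplaceTransform (fun x => 1 + ε * (Real.sinh (ν * x) / Real.cosh x)) x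
        = 1 / x + ε * ((1 / 2) *
            (nielsenBeta ((x + 1 - ν) / 2) - nielsenBeta ((x + 1 + ν) / 2)))) := by
  have hstj : ∀ x : ℝ, 0 < x →
      LaplaceTransform (fun x => 1 + ε * (Real.sinh (ν * x) / Real.cosh x)) x =
        stj (wmeas ν ε) 0 x := fun x hx => laplace_tau_stj ν ε x hν0 hν1 hε hx
  refine ⟨?_, ?_, ?_⟩
  · refine ⟨wmeas ν ε, 0, le_rfl, wmeas_Iio ν ε, fun x hx => ?_⟩
    have hp : ∀ t : ℝ, (x + t) ^ (-(2 : ℝ)) = ((x + t) ^ 2)⁻¹ := by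
      intro t
      rw [show (-(2 : ℝ)) = (((-2 : ℤ)) : ℝ) by norm_num, Real.rpow_intCast, zpow_neg]
      norm_cast
    simp_rw [hp]
    exact ⟨wmeas_integrable ν ε x hε hx, by rw [add_zero]; exact laplace_tau_stj ν ε x hν0 hν1 hε hx⟩
  · refine logCM_congr _ _ hstj (logCM_stj _ (wmeas_Iio ν ε)
      (fun x hx => wmeas_integrable ν ε x hε hx) fun x hx => ?_)
    rw [← hstj x hx]
    exact laplace_tau_pos ν ε x hν0 hν1 hε hx
  · intro x hx
    rw [laplace_tau_split ν ε x hν0 hν1 hx, ratio_formula ν x hν0 hν1 hx]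
end

section
/- Let a ≥ b ≥ 0 with a > 0 and define ω(x) = (1 + b x²)/(1 + a x²) for x > 0. Then the Laplace transform L(ω) is a generalized Stieltjes function of order 2 (hence logarithmically completely monotonic, and ω is infinitely divisible), and for x > 0: L(ω)(x) = (b/a)(1/x) + (1 - b/a)(1/√a)( ci(x/√a) sin(x/√a) - si(x/√a) cos(x/√a) ), where si(x) = -∫_x^∞ (sin t)/t dt and ci(x) = -∫_x^∞ (cos t)/t dt. -/
open MeasureTheory Filter Set

/-- All Laplace integrands of `g` are integrable. -/
def LapOK (g : ℝ → ℝ) : Prop :=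
  ∀ x : ℝ, 0 < x → IntegrableOn (fun t => Real.exp (-x * t) * g t) (Set.Ioi 0)

lemma LapOK.of_bound {g : ℝ → ℝ} (hg : Continuous g) {C : ℝ}
    (hC : ∀ t, 0 < t → |g t| ≤ C) : LapOK g := by
  intro x hx
  have h1 : IntegrableOn (fun t => Real.exp (-x * t)) (Set.Ioi 0) :=
    integrableOn_exp_mul_Ioi (by linarith) 0
  refine Integrable.mono' (h1.mul_const C) (by fun_prop) ?_
  filter_upwards [ae_restrict_mem measurableSet_Ioi] with t ht
  rw [Real.norm_eq_abs, abs_mul, Real.abs_exp]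
  exact mul_le_mul_of_nonneg_left (hC t ht) (Real.exp_pos _).le

lemma mul_exp_bound {y t : ℝ} (hy : 0 < y) : t * Real.exp (-y * t) ≤ 1 / y := by
  have h := Real.add_one_le_exp (y * t)
  rw [le_div_iff₀ hy, neg_mul, Real.exp_neg, ← div_eq_mul_inv, div_mul_eq_mul_div,
    div_le_one (Real.exp_pos _)]
  nlinarith

lemma LapOK.meas {g : ℝ → ℝ} (hg : LapOK g) :
    AEStronglyMeasurable g (volume.restrict (Set.Ioi 0)) := by
  have h := (hg 1 one_pos).aestronglyMeasurable
  have h2 : AEStronglyMeasurable (fun t : ℝ => Real.exp t) (volume.restrict (Set.Ioi 0)) := by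
    fun_prop
  refine (h2.mul h).congr (Eventually.of_forall fun t => ?_)
  simp only [Pi.mul_apply]
  rw [← mul_assoc, ← Real.exp_add]
  simp

lemma LapOK.bound {g : ℝ → ℝ} {x y t : ℝ} (hx : 0 < x) (ht : 0 < t) (hy : x / 2 ≤ y) :
    ‖Real.exp (-y * t) * (-t * g t)‖ ≤ (4 / x) * ‖Real.exp (-(x / 4) * t) * g t‖ := by
  have h1 : t * Real.exp (-(x/4) * t) ≤ 1 / (x/4) := mul_exp_bound (by linarith)
  have h2 : Real.exp (-y * t) ≤ Real.exp (-(x/4) * t) * Real.exp (-(x/4) * t) := by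
    rw [← Real.exp_add]
    apply Real.exp_le_exp.mpr
    nlinarith
  simp only [norm_mul, norm_neg, Real.norm_eq_abs, Real.abs_exp, abs_of_pos ht]
  have hg := abs_nonneg (g t)
  have he := (Real.exp_pos (-(x/4) * t)).le
  calc Real.exp (-y * t) * (t * |g t|)
      ≤ (Real.exp (-(x/4) * t) * Real.exp (-(x/4) * t)) * (t * |g t|) := by gcongr
    _ = (t * Real.exp (-(x/4) * t)) * (Real.exp (-(x/4) * t) * |g t|) := by ring
    _ ≤ (1 / (x/4)) * (Real.exp (-(x/4) * t) * |g t|) := by gcongr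
    _ = _ := by field_simp

lemma LapOK.neg_mul {g : ℝ → ℝ} (hg : LapOK g) : LapOK (fun t => -t * g t) := by
  intro x hx
  refine Integrable.mono' ((hg (x/4) (by linarith)).norm.const_mul (4/x)) ?_ ?_
  · have := hg.meas
    have h2 : AEStronglyMeasurable (fun t : ℝ => Real.exp (-x * t)) (volume.restrict (Set.Ioi 0)) := by
      fun_prop
    have h3 : AEStronglyMeasurable (fun t : ℝ => -t) (volume.restrict (Set.Ioi 0)) := by
      fun_prop
    exact h2.mul (h3.mul this)
  · filter_upwards [ae_restrict_mem measurableSet_Ioi] with t ht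
    exact LapOK.bound hx ht (by linarith)

lemma LapOK.hasDerivAt {g : ℝ → ℝ} (hg : LapOK g) {x : ℝ} (hx : 0 < x) :
    HasDerivAt (LaplaceTransform g) (LaplaceTransform (fun t => -t * g t) x) x := by
  have := hasDerivAt_integral_of_dominated_loc_of_deriv_le
    (μ := volume.restrict (Set.Ioi (0:ℝ))) (s := Set.Ioi (x/2)) (x₀ := x)
    (F := fun y t => Real.exp (-y * t) * g t)
    (F' := fun y t => Real.exp (-y * t) * (-t * g t))
    (bound := fun t => (4 / x) * ‖Real.exp (-(x / 4) * t) * g t‖)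
    (Ioi_mem_nhds (by linarith))
    (by
      filter_upwards [Ioi_mem_nhds hx] with y hy
      exact (hg y hy).aestronglyMeasurable)
    (hg x hx)
    (hg.neg_mul x hx).aestronglyMeasurable
    (by
      filter_upwards [ae_restrict_mem measurableSet_Ioi] with t ht
      intro y hy
      exact LapOK.bound hx ht (le_of_lt hy))
    ((hg (x/4) (by linarith)).norm.const_mul (4/x))
    (by
      filter_upwards with t
      intro y hy
      have h1 : HasDerivAt (fun y : ℝ => -y * t) (-1 * t) y :=
        (hasDerivAt_id y).neg.mul_const t
      have := (h1.exp).mul_const (g t)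
      exact this.congr_deriv (by ring))
  exact this.2

lemma LapOK.contDiffOn {g : ℝ → ℝ} (hg : LapOK g) (n : ℕ) :
    ContDiffOn ℝ n (LaplaceTransform g) (Set.Ioi 0) := by
  induction n generalizing g with
  | zero =>
    rw [Nat.cast_zero, contDiffOn_zero]
    exact fun x hx => (hg.hasDerivAt hx).continuousAt.continuousWithinAt
  | succ n ih =>
    rw [Nat.cast_succ, contDiffOn_succ_iff_deriv_of_isOpen isOpen_Ioi]
    refine ⟨fun x hx => (hg.hasDerivAt hx).differentiableAt.differentiableWithinAt, ?_, ?_⟩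
    · intro h; simp at h
    · exact (ih hg.neg_mul).congr fun x hx => (hg.hasDerivAt hx).deriv

lemma LapOK.contDiffAt {g : ℝ → ℝ} (hg : LapOK g) {x : ℝ} (hx : 0 < x) :
    ContDiffAt ℝ (⊤ : ℕ∞) (LaplaceTransform g) x :=
  (contDiffOn_infty.mpr fun n => hg.contDiffOn n).contDiffAt (Ioi_mem_nhds hx)

lemma LapOK.neg_eq {g : ℝ → ℝ} (x : ℝ) :
    LaplaceTransform (fun t => - g t) x = - LaplaceTransform g x := by
  unfold LaplaceTransform
  rw [← integral_neg]
  simp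

lemma LapOK.neg {g : ℝ → ℝ} (hg : LapOK g) : LapOK (fun t => - g t) := by
  intro x hx
  simpa using (hg x hx).neg

lemma LapOK.iter {g : ℝ → ℝ} (hg : LapOK g) (h0 : ∀ t, 0 < t → 0 ≤ g t) (n : ℕ) {x : ℝ}
    (hx : 0 < x) : 0 ≤ (-1 : ℝ) ^ n * iteratedDeriv n (LaplaceTransform g) x := by
  induction n generalizing g with
  | zero =>
    simp only [pow_zero, iteratedDeriv_zero, one_mul]
    exact setIntegral_nonneg measurableSet_Ioi
      fun t ht => mul_nonneg (Real.exp_pos _).le (h0 t ht)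
  | succ n ih =>
    have h1 : LapOK (fun t => t * g t) := by simpa using hg.neg_mul.neg
    have h2 := ih h1 (fun t ht => mul_nonneg ht.le (h0 t ht))
    have h3 : iteratedDeriv n (deriv (LaplaceTransform g)) x
        = iteratedDeriv n (fun y => - LaplaceTransform (fun t => t * g t) y) x := by
      apply Filter.EventuallyEq.iteratedDeriv_eq
      filter_upwards [Ioi_mem_nhds hx] with y hy
      rw [(hg.hasDerivAt hy).deriv, ← LapOK.neg_eq]
      simp
    rw [iteratedDeriv_succ', h3, iteratedDeriv_fun_neg, pow_succ]
    linarith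

lemma LapOK.completelyMonotonic {g F : ℝ → ℝ} (hg : LapOK g) (h0 : ∀ t, 0 < t → 0 ≤ g t)
    (hF : ∀ x, 0 < x → F x = LaplaceTransform g x) : CompletelyMonotonic F := by
  have hev : ∀ x : ℝ, 0 < x → F =ᶠ[nhds x] LaplaceTransform g := fun x hx => by
    filter_upwards [Ioi_mem_nhds hx] with y hy using hF y hy
  refine ⟨fun x hx => (hg.contDiffAt hx).congr_of_eventuallyEq (hev x hx), fun n x hx => ?_⟩
  rw [(hev x hx).iteratedDeriv_eq]
  exact hg.iter h0 n hx

lemma exp_int_bound {l S : ℝ} (hl : 0 < l) : ∫ v in (0:ℝ)..S, Real.exp (-l * v) ≤ 1 / l := by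
  have : ∫ v in (0:ℝ)..S, Real.exp (-l * v) = (1 - Real.exp (-l * S)) / l := by
    rw [intervalIntegral.integral_comp_mul_left (fun v => Real.exp v) (by linarith : -l ≠ 0)]
    simp
    field_simp
    ring
  rw [this]
  gcongr
  linarith [Real.exp_pos (-l * S)]

/-- Existence of a nonnegative continuous solution of a Volterra equation. -/
lemma volterra_exists {r p : ℝ → ℝ} (hr : Continuous r) (hp : Continuous p) {C : ℝ}
    (hr0 : ∀ s, 0 ≤ s → 0 ≤ r s) (hp0 : ∀ s, 0 ≤ s → 0 ≤ p s)
    (hrC : ∀ s, 0 ≤ s → r s ≤ C) (hpC : ∀ s, 0 ≤ s → p s ≤ C) :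
    ∃ h : ℝ → ℝ, Continuous h ∧ (∀ s, 0 ≤ s → 0 ≤ h s) ∧
      ∀ s, 0 ≤ s → h s = p s + ∫ v in (0:ℝ)..s, r v * h (s - v) := by
  have hC : 0 ≤ C := (hr0 0 le_rfl).trans (hrC 0 le_rfl)
  set l : ℝ := 2 * C + 1 with hl
  have hl0 : 0 < l := by positivity
  let K0 : (ℝ → ℝ) → ℝ → ℝ := fun φ s =>
    Real.exp (-l * max s 0) * p (max s 0)
      + ∫ v in (0:ℝ)..(max s 0), Real.exp (-l * v) * r v * φ (max s 0 - v)
  have hKc : ∀ φ : ℝ → ℝ, Continuous φ → Continuous (K0 φ) := by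
    intro φ hφ
    refine Continuous.add (by fun_prop) ?_
    apply intervalIntegral.continuous_parametric_intervalIntegral_of_continuous
    · simp only [Function.uncurry_def]
      fun_prop
    · fun_prop
  have hIb : ∀ (φ : ℝ → ℝ) (D : ℝ) (s : ℝ), 0 ≤ s → Continuous φ → (∀ u, |φ u| ≤ D) →
      |∫ v in (0:ℝ)..s, Real.exp (-l * v) * r v * φ (s - v)| ≤ D / 2 := by
    intro φ D s hs hφ hD
    have hD0 : 0 ≤ D := (abs_nonneg _).trans (hD 0)
    have h1 : ‖∫ v in (0:ℝ)..s, Real.exp (-l * v) * r v * φ (s - v)‖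
        ≤ ∫ v in (0:ℝ)..s, C * D * Real.exp (-l * v) := by
      apply intervalIntegral.norm_integral_le_of_norm_le hs
      · refine Eventually.of_forall fun v hv => ?_
        have hv0 : 0 ≤ v := hv.1.le
        rw [norm_mul, norm_mul, Real.norm_eq_abs, Real.norm_eq_abs, Real.norm_eq_abs,
          Real.abs_exp, abs_of_nonneg (hr0 v hv0)]
        have := mul_le_mul (hrC v hv0) (hD (s - v)) (abs_nonneg _) hC
        have := mul_le_mul_of_nonneg_left this (Real.exp_pos (-l * v)).le
        linarith
      · apply Continuous.intervalIntegrable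
        fun_prop
    rw [intervalIntegral.integral_const_mul] at h1
    refine h1.trans ?_
    have h2 := mul_le_mul_of_nonneg_left (exp_int_bound (S := s) hl0) (mul_nonneg hC hD0)
    refine h2.trans ?_
    rw [mul_one_div, div_le_div_iff₀ hl0 two_pos]
    nlinarith
  have hKb : ∀ φ : BoundedContinuousFunction ℝ ℝ, ∀ s, ‖K0 φ s‖ ≤ C + ‖φ‖ / 2 := by
    intro φ s
    have hs : 0 ≤ max s 0 := le_max_right _ _
    refine (norm_add_le _ _).trans (add_le_add ?_ ?_)
    · rw [norm_mul, Real.norm_eq_abs, Real.norm_eq_abs, Real.abs_exp, abs_of_nonneg (hp0 _ hs)]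
      have : Real.exp (-l * max s 0) ≤ 1 := Real.exp_le_one_iff.mpr (by nlinarith)
      nlinarith [hp0 _ hs, hpC _ hs]
    · exact hIb φ ‖φ‖ _ hs φ.continuous (fun u => φ.norm_coe_le_norm u)
  let K : BoundedContinuousFunction ℝ ℝ → BoundedContinuousFunction ℝ ℝ := fun φ =>
    BoundedContinuousFunction.ofNormedAddCommGroup (K0 φ) (hKc φ φ.continuous) _ (hKb φ)
  have hKapp : ∀ φ s, K φ s = K0 φ s := fun φ s => rfl
  have hcontr : ContractingWith (1/2 : NNReal) K := by
    refine ⟨by rw [← NNReal.coe_lt_coe]; norm_num, LipschitzWith.of_dist_le_mul fun φ ψ => ?_⟩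
    rw [BoundedContinuousFunction.dist_le (by positivity)]
    intro s
    have hs : 0 ≤ max s 0 := le_max_right _ _
    rw [hKapp, hKapp, Real.dist_eq]
    have := hIb (φ - ψ : BoundedContinuousFunction ℝ ℝ) (dist φ ψ) (max s 0) hs
      (φ - ψ).continuous (fun u => by
        have := BoundedContinuousFunction.dist_coe_le_dist (f := φ) (g := ψ) u
        simpa [Real.dist_eq] using this)
    have e : K0 φ s - K0 ψ s = ∫ v in (0:ℝ)..(max s 0),
        Real.exp (-l * v) * r v * (φ - ψ : BoundedContinuousFunction ℝ ℝ) (max s 0 - v) := by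
      simp only [K0, BoundedContinuousFunction.coe_sub, Pi.sub_apply, mul_sub]
      rw [intervalIntegral.integral_sub]
      · ring
      · apply Continuous.intervalIntegrable
        have := φ.continuous
        fun_prop
      · apply Continuous.intervalIntegrable
        have := ψ.continuous
        fun_prop
    rw [e]
    refine this.trans (le_of_eq ?_)
    push_cast
    ring
  let φ := ContractingWith.fixedPoint K hcontr
  have hfix : K φ = φ := hcontr.fixedPoint_isFixedPt
  have hnn : ∀ s, 0 ≤ φ s := by
    have hit : ∀ n s, 0 ≤ (K^[n] 0) s := by
      intro n
      induction n with
      | zero => intro s; simp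
      | succ n ih =>
        intro s
        have hs : 0 ≤ max s 0 := le_max_right _ _
        rw [Function.iterate_succ_apply', hKapp]
        refine add_nonneg (mul_nonneg (Real.exp_pos _).le (hp0 _ hs)) ?_
        apply intervalIntegral.integral_nonneg hs
        intro v hv
        exact mul_nonneg (mul_nonneg (Real.exp_pos _).le (hr0 v hv.1)) (ih _)
    intro s
    have ht := hcontr.tendsto_iterate_fixedPoint (0 : BoundedContinuousFunction ℝ ℝ)
    have ht2 : Tendsto (fun n => (K^[n] 0) s) atTop (nhds (φ s)) :=
      (((continuous_eval_const s : Continuous fun f : BoundedContinuousFunction ℝ ℝ => f s)).tendsto φ).comp ht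
    exact ge_of_tendsto' ht2 (fun n => hit n s)
  refine ⟨fun s => Real.exp (l * s) * φ s, by
    have := φ.continuous
    fun_prop, fun s _ => mul_nonneg (Real.exp_pos _).le (hnn s), fun s hs => ?_⟩
  have h1 : φ s = K0 φ s := by
    conv_lhs => rw [← hfix]
    rfl
  simp only [K0, max_eq_left hs] at h1
  beta_reduce
  conv_lhs => rw [h1]
  rw [mul_add, ← mul_assoc, ← Real.exp_add, ← intervalIntegral.integral_const_mul]
  congr 1
  · simp
  · apply intervalIntegral.integral_congr
    intro v _
    beta_reduce
    have : Real.exp (l * (s - v)) = Real.exp (l * s) * Real.exp (-l * v) := by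
      rw [← Real.exp_add]; congr 1; ring
    rw [this]
    ring

lemma triangle_swap {G : ℝ → ℝ → ℝ} (hG : Continuous (Function.uncurry G)) {s : ℝ} (hs : 0 ≤ s) :
    ∫ u in (0:ℝ)..s, ∫ w in (0:ℝ)..u, G u w = ∫ w in (0:ℝ)..s, ∫ u in w..s, G u w := by
  let T : Set (ℝ × ℝ) := {z | z.2 ≤ z.1}
  have hT : MeasurableSet T := measurableSet_le measurable_snd measurable_fst
  let H : ℝ → ℝ → ℝ := fun u w => T.indicator (Function.uncurry G) (u, w)
  have hint : Integrable (Function.uncurry H)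
      ((volume.restrict (Set.Ioc 0 s)).prod (volume.restrict (Set.Ioc 0 s))) := by
    have h0 : Function.uncurry H = T.indicator (Function.uncurry G) := by
      ext ⟨u, w⟩; rfl
    rw [h0]
    apply Integrable.indicator _ hT
    rw [Measure.prod_restrict]
    have hc : IsCompact (Set.Icc (0:ℝ) s ×ˢ Set.Icc (0:ℝ) s) := isCompact_Icc.prod isCompact_Icc
    have := hG.continuousOn.integrableOn_compact (μ := volume.prod volume) hc
    exact this.mono_set (Set.prod_mono Set.Ioc_subset_Icc_self Set.Ioc_subset_Icc_self)
  have hsw := integral_integral_swap hint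
  rw [intervalIntegral.integral_of_le hs, intervalIntegral.integral_of_le hs]
  have e1 : ∫ u in Set.Ioc 0 s, ∫ w in (0:ℝ)..u, G u w
      = ∫ u in Set.Ioc 0 s, ∫ w in Set.Ioc 0 s, H u w := by
    apply setIntegral_congr_fun measurableSet_Ioc
    intro u hu
    beta_reduce
    rw [intervalIntegral.integral_of_le hu.1.le]
    have : (fun w => H u w) = (Set.Iic u).indicator (fun w => G u w) := by
      ext w
      simp only [H, T, Set.indicator, Set.mem_ofPred_eq, Set.mem_Iic, Function.uncurry]
    rw [this, setIntegral_indicator measurableSet_Iic]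
    congr 2
    ext w
    simp only [Set.mem_Ioc, Set.mem_inter_iff, Set.mem_Iic]
    constructor
    · rintro ⟨h1, h2⟩; exact ⟨⟨h1, h2.trans hu.2⟩, h2⟩
    · rintro ⟨⟨h1, _⟩, h2⟩; exact ⟨h1, h2⟩
  have e2 : ∫ w in Set.Ioc 0 s, ∫ u in w..s, G u w
      = ∫ w in Set.Ioc 0 s, ∫ u in Set.Ioc 0 s, H u w := by
    apply setIntegral_congr_fun measurableSet_Ioc
    intro w hw
    beta_reduce
    rw [intervalIntegral.integral_of_le hw.2, ← integral_Icc_eq_integral_Ioc]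
    have : (fun u => H u w) = (Set.Ici w).indicator (fun u => G u w) := by
      ext u
      simp only [H, T, Set.indicator, Set.mem_ofPred_eq, Set.mem_Ici, Function.uncurry]
    rw [this, setIntegral_indicator measurableSet_Ici]
    congr 2
    ext u
    simp only [Set.mem_Ioc, Set.mem_inter_iff, Set.mem_Ici, Set.mem_Icc]
    constructor
    · rintro ⟨h1, h2⟩; exact ⟨⟨hw.1.trans_le h1, h2⟩, h1⟩
    · rintro ⟨⟨_, h1⟩, h2⟩; exact ⟨h2, h1⟩
  rw [e1, e2, hsw]

/-- The weight function. -/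
noncomputable def om (a b t : ℝ) : ℝ := (1 + b * t ^ 2) / (1 + a * t ^ 2)

/-- Minus the derivative of the weight function. -/
noncomputable def rr (a b t : ℝ) : ℝ := 2 * (a - b) * t / (1 + a * t ^ 2) ^ 2

section
variable {a b : ℝ}

lemma den_pos (ha : 0 < a) (t : ℝ) : 0 < 1 + a * t ^ 2 := by positivity

lemma om_cont (ha : 0 < a) : Continuous (om a b) := by
  unfold om
  exact Continuous.div (by fun_prop) (by fun_prop) (fun t => (den_pos ha t).ne')

lemma rr_cont (ha : 0 < a) : Continuous (rr a b) := by
  unfold rr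
  exact Continuous.div (by fun_prop) (by fun_prop) (fun t => (pow_pos (den_pos ha t) 2).ne')

lemma om_pos (hb : 0 ≤ b) (ha : 0 < a) (t : ℝ) : 0 < om a b t := by
  unfold om; positivity

lemma om_le_one (hba : b ≤ a) (ha : 0 < a) (t : ℝ) : om a b t ≤ 1 := by
  unfold om
  rw [div_le_one (den_pos ha t)]
  nlinarith [sq_nonneg t]

lemma om_deriv (ha : 0 < a) (t : ℝ) : HasDerivAt (om a b) (- rr a b t) t := by
  have h1 : HasDerivAt (fun t : ℝ => 1 + b * t ^ 2) (b * (2 * t)) t := by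
    simpa using ((hasDerivAt_pow 2 t).const_mul b).const_add 1
  have h2 : HasDerivAt (fun t : ℝ => 1 + a * t ^ 2) (a * (2 * t)) t := by
    simpa using ((hasDerivAt_pow 2 t).const_mul a).const_add 1
  have h3 := h1.div h2 (den_pos ha t).ne'
  refine h3.congr_deriv ?_
  unfold rr
  have := (den_pos ha t).ne'
  field_simp
  ring

lemma rr_nonneg (hba : b ≤ a) (ha : 0 < a) {t : ℝ} (ht : 0 ≤ t) : 0 ≤ rr a b t := by
  unfold rr
  have : 0 ≤ a - b := by linarith
  positivity

lemma rr_int (ha : 0 < a) (x y : ℝ) : ∫ v in x..y, rr a b v = om a b x - om a b y := by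
  have := intervalIntegral.integral_eq_sub_of_hasDerivAt (a := x) (b := y)
    (f := fun t => - om a b t) (f' := rr a b)
    (fun t _ => (om_deriv (b := b) ha t).neg.congr_deriv (neg_neg _))
    ((rr_cont ha).intervalIntegrable _ _)
  rw [this]; ring

lemma om_zero : om a b 0 = 1 := by simp [om]

/-- The Volterra solution. -/
lemma k_exists (hba : b ≤ a) (ha : 0 < a) :
    ∃ k : ℝ → ℝ, Continuous k ∧ (∀ s, 0 ≤ s → k s ≤ 1) ∧
      ∀ s, 0 ≤ s → k s = om a b s - s * rr a b s + ∫ v in (0:ℝ)..s, rr a b v * k (s - v) := by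
  have hab : 0 ≤ a - b := by linarith
  obtain ⟨h, hc, h0, he⟩ := volterra_exists (r := rr a b) (p := fun s => s * rr a b s)
    (C := 2 * (a - b) * (1 + 1 / a)) (rr_cont ha)
    (continuous_id.mul (rr_cont ha)) (fun s hs => rr_nonneg hba ha hs)
    (fun s hs => mul_nonneg hs (rr_nonneg hba ha hs))
    (fun s hs => by
      unfold rr
      rw [div_le_iff₀ (pow_pos (den_pos ha s) 2), mul_assoc (2 * (a - b))]
      refine mul_le_mul_of_nonneg_left ?_ (by positivity)
      have h1 : 1 + a * s ^ 2 ≤ (1 + a * s ^ 2) ^ 2 := by nlinarith [mul_nonneg ha.le (sq_nonneg s)]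
      have h2 : s ≤ (1 + 1 / a) * (1 + a * s ^ 2) := by
        have : (1 + 1 / a) * (1 + a * s ^ 2) = 1 + 1 / a + a * s ^ 2 + s ^ 2 := by
          field_simp; ring
        rw [this]
        have : 0 < 1 / a := by positivity
        nlinarith [mul_nonneg ha.le (sq_nonneg s), sq_nonneg (s - 1)]
      have h3 : 0 < 1 + 1 / a := by positivity
      nlinarith)
    (fun s hs => by
      unfold rr
      rw [← mul_div_assoc, div_le_iff₀ (pow_pos (den_pos ha s) 2),
        show s * (2 * (a - b) * s) = 2 * (a - b) * s ^ 2 by ring, mul_assoc (2 * (a - b))]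
      refine mul_le_mul_of_nonneg_left ?_ (by positivity)
      have h1 : 1 + a * s ^ 2 ≤ (1 + a * s ^ 2) ^ 2 := by nlinarith [mul_nonneg ha.le (sq_nonneg s)]
      have h2 : s ^ 2 ≤ (1 + 1 / a) * (1 + a * s ^ 2) := by
        have : (1 + 1 / a) * (1 + a * s ^ 2) = 1 + 1 / a + a * s ^ 2 + s ^ 2 := by
          field_simp; ring
        rw [this]
        have : 0 < 1 / a := by positivity
        nlinarith [mul_nonneg ha.le (sq_nonneg s)]
      have h3 : 0 < 1 + 1 / a := by positivity
      nlinarith)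
  refine ⟨fun s => 1 - h s, by fun_prop, fun s hs => by linarith [h0 s hs], fun s hs => ?_⟩
  beta_reduce
  rw [he s hs]
  have hrc := rr_cont (b := b) ha
  have : ∫ v in (0:ℝ)..s, rr a b v * (1 - h (s - v))
      = (om a b 0 - om a b s) - ∫ v in (0:ℝ)..s, rr a b v * h (s - v) := by
    rw [← rr_int ha, ← intervalIntegral.integral_sub]
    · congr 1; ext v; ring
    · exact hrc.intervalIntegrable _ _
    · apply Continuous.intervalIntegrable; fun_prop
  rw [this, om_zero]
  ring

lemma k_conv (ha : 0 < a) {k : ℝ → ℝ} (hk : Continuous k)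
    (he : ∀ s, 0 ≤ s → k s = om a b s - s * rr a b s + ∫ v in (0:ℝ)..s, rr a b v * k (s - v))
    {s : ℝ} (hs : 0 ≤ s) : ∫ v in (0:ℝ)..s, om a b v * k (s - v) = s * om a b s := by
  have hrc := rr_cont (b := b) ha
  have hoc := om_cont (b := b) ha
  -- rewrite convolution
  have flip : ∀ (g : ℝ → ℝ) (u : ℝ), ∫ v in (0:ℝ)..u, g v * k (u - v)
      = ∫ w in (0:ℝ)..u, g (u - w) * k w := by
    intro g u
    have := intervalIntegral.integral_comp_sub_left (a := 0) (b := u)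
      (fun w => g (u - w) * k w) u
    simpa using this
  have hq : ∫ u in (0:ℝ)..s, (om a b u - u * rr a b u) = s * om a b s := by
    have := intervalIntegral.integral_eq_sub_of_hasDerivAt (a := 0) (b := s)
      (f := fun t => t * om a b t) (f' := fun u => om a b u - u * rr a b u)
      (fun t _ => by
        refine ((hasDerivAt_id t).mul (om_deriv (b := b) ha t)).congr_deriv ?_
        simp; ring)
      (by apply Continuous.intervalIntegrable; fun_prop)
    rw [this]; simp
  have hsw := triangle_swap (G := fun u w => rr a b (u - w) * k w)
    (by simp only [Function.uncurry_def]; fun_prop) hs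
  have hin : ∀ w, ∫ u in w..s, rr a b (u - w) * k w = (1 - om a b (s - w)) * k w := by
    intro w
    rw [intervalIntegral.integral_mul_const,
      intervalIntegral.integral_comp_sub_right (fun u => rr a b u) w, rr_int ha]
    simp [om_zero]
  simp only [hin] at hsw
  have hk1 : ∫ u in (0:ℝ)..s, k u = s * om a b s
      + ∫ u in (0:ℝ)..s, ∫ w in (0:ℝ)..u, rr a b (u - w) * k w := by
    rw [← hq, ← intervalIntegral.integral_add]
    · apply intervalIntegral.integral_congr
      intro u hu
      rw [Set.uIcc_of_le hs] at hu
      beta_reduce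
      rw [← flip (rr a b)]
      exact he u hu.1
    · apply Continuous.intervalIntegrable; fun_prop
    · apply Continuous.intervalIntegrable
      apply intervalIntegral.continuous_parametric_intervalIntegral_of_continuous
      · simp only [Function.uncurry_def]; fun_prop
      · fun_prop
  rw [flip, show ∫ w in (0:ℝ)..s, om a b (s - w) * k w
    = (∫ w in (0:ℝ)..s, k w) - ∫ w in (0:ℝ)..s, (1 - om a b (s - w)) * k w from ?_, hk1, hsw]
  · ring
  · rw [← intervalIntegral.integral_sub]
    · congr 1; ext w; ring
    · exact hk.intervalIntegrable _ _
    · apply Continuous.intervalIntegrable; fun_prop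

lemma kernel_bound (hb : 0 ≤ b) (hba : b ≤ a) (ha : 0 < a) {s v : ℝ} (hv : 0 ≤ v) (hvs : v ≤ s) :
    2 * (a - b) / (1 + a * s ^ 2) ^ 2 / (1 + a * v ^ 2) ^ 2 * ((s - v) * (a * s * v - 1)) ≤
      om a b s * rr a b v - rr a b s * om a b v := by
  have hs : 0 ≤ s := hv.trans hvs
  have e : om a b s * rr a b v - rr a b s * om a b v
      = 2 * (a - b) / (1 + a * s ^ 2) ^ 2 / (1 + a * v ^ 2) ^ 2 *
        ((s - v) * ((a + b) * s * v - 1 + a * b * s * v * (s ^ 2 + s * v + v ^ 2))) := by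
    have h1 := (den_pos ha s).ne'
    have h2 := (den_pos ha v).ne'
    unfold om rr
    field_simp
    ring
  rw [e]
  have hab : 0 ≤ a - b := by linarith
  have hsv : 0 ≤ s - v := by linarith
  refine mul_le_mul_of_nonneg_left (mul_le_mul_of_nonneg_left ?_ hsv) (by positivity)
  have h1 : 0 ≤ b * s * v := by positivity
  have h2 : 0 ≤ a * b * s * v * (s ^ 2 + s * v + v ^ 2) := by positivity
  nlinarith

lemma kernel_bound' (hb : 0 ≤ b) (hba : b ≤ a) (ha : 0 < a) {s v : ℝ} (hv : 0 ≤ v) (hvs : v ≤ s)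
    (hsv : a * s * v ≤ 1) {κ : ℝ} (h0 : 0 ≤ κ) (h1 : κ ≤ 1) :
    - (2 * (a - b) / (1 + a * s ^ 2) ^ 2) * ((s - v) * (1 - a * s * v)) ≤
      (om a b s * rr a b v - rr a b s * om a b v) * κ := by
  have hk := mul_le_mul_of_nonneg_right (kernel_bound hb hba ha hv hvs) h0
  refine le_trans ?_ hk
  have hab : 0 ≤ a - b := by linarith
  have hA : 0 ≤ 2 * (a - b) / (1 + a * s ^ 2) ^ 2 := by positivity
  have hB : 0 ≤ (s - v) * (1 - a * s * v) := mul_nonneg (by linarith) (by linarith)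
  have hC : κ / (1 + a * v ^ 2) ^ 2 ≤ 1 := by
    rw [div_le_one (pow_pos (den_pos ha v) 2)]
    have : 0 ≤ a * v ^ 2 := by positivity
    nlinarith
  have hAB := mul_nonneg hA hB
  have e : 2 * (a - b) / (1 + a * s ^ 2) ^ 2 / (1 + a * v ^ 2) ^ 2 * ((s - v) * (a * s * v - 1)) * κ
    = - (2 * (a - b) / (1 + a * s ^ 2) ^ 2 * ((s - v) * (1 - a * s * v)))
      * (κ / (1 + a * v ^ 2) ^ 2) := by
    ring
  rw [e]
  nlinarith

lemma poly_int (a s m : ℝ) : ∫ v in (0:ℝ)..m, (s - v) * (1 - a * s * v)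
    = s * m - (1 + a * s ^ 2) * m ^ 2 / 2 + a * s * m ^ 3 / 3 := by
  have := intervalIntegral.integral_eq_sub_of_hasDerivAt (a := 0) (b := m)
      (f := fun v => s * v - (1 + a * s ^ 2) * v ^ 2 / 2 + a * s * v ^ 3 / 3)
      (f' := fun v => (s - v) * (1 - a * s * v))
      (fun t _ => by
        have h1 := (hasDerivAt_id t).const_mul s
        have h2 := ((hasDerivAt_pow 2 t).const_mul (1 + a * s ^ 2)).div_const 2
        have h3 := ((hasDerivAt_pow 3 t).const_mul (a * s)).div_const 3
        refine ((h1.sub h2).add h3).congr_deriv ?_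
        simp; ring)
      (by apply Continuous.intervalIntegrable; fun_prop)
  rw [this]; simp

/-- The key step: `k` cannot vanish first at `s`. -/
lemma k_step (hb : 0 ≤ b) (hba : b ≤ a) (ha : 0 < a) {k : ℝ → ℝ} (hk : Continuous k)
    (h1 : ∀ s, 0 ≤ s → k s ≤ 1)
    (he : ∀ s, 0 ≤ s → k s = om a b s - s * rr a b s + ∫ v in (0:ℝ)..s, rr a b v * k (s - v))
    {s : ℝ} (hs : 0 < s) (h0 : ∀ u, 0 ≤ u → u ≤ s → 0 ≤ k u) : 0 < k s := by
  have hrc := rr_cont (b := b) ha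
  have hoc := om_cont (b := b) ha
  have hab : 0 ≤ a - b := by linarith
  have key : om a b s * k s = om a b s ^ 2 +
      ∫ v in (0:ℝ)..s, (om a b s * rr a b v - rr a b s * om a b v) * k (s - v) := by
    have : ∫ v in (0:ℝ)..s, (om a b s * rr a b v - rr a b s * om a b v) * k (s - v)
        = om a b s * (∫ v in (0:ℝ)..s, rr a b v * k (s - v))
          - rr a b s * ∫ v in (0:ℝ)..s, om a b v * k (s - v) := by
      rw [← intervalIntegral.integral_const_mul, ← intervalIntegral.integral_const_mul,
        ← intervalIntegral.integral_sub]
      · congr 1; ext v; ring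
      · apply Continuous.intervalIntegrable; fun_prop
      · apply Continuous.intervalIntegrable; fun_prop
    rw [this, k_conv ha hk he hs.le]
    conv_lhs => rw [he s hs.le]
    ring
  -- lower bound of the integral
  obtain ⟨m, hm0, hms, hm1, hm2, hJ⟩ : ∃ m, 0 ≤ m ∧ m ≤ s ∧ a * s * m ≤ 1 ∧
      (∀ v, m < v → v ≤ s → 1 ≤ a * s * v) ∧
      s * m - (1 + a * s ^ 2) * m ^ 2 / 2 + a * s * m ^ 3 / 3 < 1 / (2 * a) := by
    rcases le_or_gt (a * s ^ 2) 1 with h | h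
    · refine ⟨s, hs.le, le_rfl, by nlinarith, fun v h1 h2 => absurd h1 (not_lt.mpr h2), ?_⟩
      rw [lt_div_iff₀ (by positivity)]
      have : 0 < a * s ^ 2 := by positivity
      nlinarith
    · refine ⟨1 / (a * s), by positivity, ?_, ?_, ?_, ?_⟩
      · rw [div_le_iff₀ (by positivity)]; nlinarith
      · rw [mul_one_div, div_self (by positivity)]
      · intro v hv _
        rw [div_lt_iff₀ (by positivity)] at hv
        linarith
      · have : s * (1 / (a * s)) - (1 + a * s ^ 2) * (1 / (a * s)) ^ 2 / 2
            + a * s * (1 / (a * s)) ^ 3 / 3 = 1 / (2 * a) - 1 / (6 * a ^ 2 * s ^ 2) := by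
          field_simp; ring
        rw [this]
        have : 0 < 1 / (6 * a ^ 2 * s ^ 2) := by positivity
        linarith
  have hcont : Continuous
      (fun v => (om a b s * rr a b v - rr a b s * om a b v) * k (s - v)) := by fun_prop
  have hsplit := intervalIntegral.integral_add_adjacent_intervals
    (hcont.intervalIntegrable (μ := volume) 0 m) (hcont.intervalIntegrable (μ := volume) m s)
  have hI1 : - (2 * (a - b) / (1 + a * s ^ 2) ^ 2) *
      (s * m - (1 + a * s ^ 2) * m ^ 2 / 2 + a * s * m ^ 3 / 3) ≤
      ∫ v in (0:ℝ)..m, (om a b s * rr a b v - rr a b s * om a b v) * k (s - v) := by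
    rw [← poly_int, ← intervalIntegral.integral_const_mul]
    apply intervalIntegral.integral_mono_on hm0
    · apply Continuous.intervalIntegrable; fun_prop
    · exact hcont.intervalIntegrable _ _
    · intro v hv
      have hvs : v ≤ s := hv.2.trans hms
      refine kernel_bound' hb hba ha hv.1 hvs ?_ (h0 _ (by linarith) (by linarith [hv.1]))
        (h1 _ (by linarith))
      exact (mul_le_mul_of_nonneg_left hv.2 (by positivity)).trans hm1
  have hI2 : 0 ≤ ∫ v in m..s, (om a b s * rr a b v - rr a b s * om a b v) * k (s - v) := by
    apply intervalIntegral.integral_nonneg_of_ae_restrict hms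
    filter_upwards [ae_restrict_mem measurableSet_Icc,
      ae_restrict_of_ae (Measure.ae_ne volume m)] with v hv hvm
    have hv0 : 0 ≤ v := hm0.trans hv.1
    refine mul_nonneg (le_trans ?_ (kernel_bound hb hba ha hv0 hv.2))
      (h0 _ (by linarith [hv.2]) (by linarith))
    have := hm2 v (lt_of_le_of_ne hv.1 (Ne.symm hvm)) hv.2
    exact mul_nonneg (by positivity) (mul_nonneg (by linarith [hv.2]) (by linarith))
  have hom : 1 / (1 + a * s ^ 2) ^ 2 ≤ om a b s ^ 2 := by
    unfold om
    rw [div_pow]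
    gcongr
    have : 0 ≤ b * s ^ 2 := by positivity
    nlinarith
  have hfin : 0 < om a b s * k s := by
    rw [key, ← hsplit]
    set J := s * m - (1 + a * s ^ 2) * m ^ 2 / 2 + a * s * m ^ 3 / 3
    have h2J : 2 * (a - b) * J < 1 := by
      rw [lt_div_iff₀ (by positivity)] at hJ
      rcases le_or_gt J 0 with hJ0 | hJ0
      · nlinarith
      · nlinarith
    have hD : 0 < 1 / (1 + a * s ^ 2) ^ 2 := by positivity
    have e : - (2 * (a - b) / (1 + a * s ^ 2) ^ 2) * J
      = - (2 * (a - b) * J) * (1 / (1 + a * s ^ 2) ^ 2) := by ring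
    rw [e] at hI1
    nlinarith
  exact pos_of_mul_pos_right hfin (om_pos hb ha s).le

lemma k_nonneg (hb : 0 ≤ b) (hba : b ≤ a) (ha : 0 < a) {k : ℝ → ℝ} (hk : Continuous k)
    (h1 : ∀ s, 0 ≤ s → k s ≤ 1)
    (he : ∀ s, 0 ≤ s → k s = om a b s - s * rr a b s + ∫ v in (0:ℝ)..s, rr a b v * k (s - v))
    {s : ℝ} (hs : 0 ≤ s) : 0 ≤ k s := by
  by_contra hneg
  push Not at hneg
  let S : Set ℝ := {u | 0 ≤ u ∧ k u ≤ 0}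
  have hSc : IsClosed S :=
    (isClosed_le continuous_const continuous_id).inter (isClosed_le hk continuous_const)
  have hSne : S.Nonempty := ⟨s, hs, hneg.le⟩
  have hSb : BddBelow S := ⟨0, fun u hu => hu.1⟩
  have hmem : sInf S ∈ S := hSc.csInf_mem hSne hSb
  have hk0 : k 0 = 1 := by
    rw [he 0 le_rfl]; simp [om_zero]
  have hpos : 0 < sInf S := by
    rcases hmem.1.lt_or_eq with h | h
    · exact h
    · exfalso
      have := hmem.2
      rw [← h, hk0] at this
      linarith
  have hlt : ∀ u, 0 ≤ u → u < sInf S → 0 < k u := by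
    intro u hu hus
    by_contra hcon
    push Not at hcon
    exact absurd (csInf_le hSb (⟨hu, hcon⟩ : u ∈ S)) (not_le.mpr hus)
  have hend : 0 ≤ k (sInf S) := by
    have ht : Tendsto k (nhdsWithin (sInf S) (Set.Iio (sInf S))) (nhds (k (sInf S))) :=
      hk.continuousAt.continuousWithinAt
    refine ge_of_tendsto ht ?_
    filter_upwards [Ioo_mem_nhdsLT hpos] with u hu
    exact (hlt u hu.1.le hu.2).le
  have := k_step hb hba ha hk h1 he hpos (fun u hu hus => by
    rcases hus.lt_or_eq with h | h
    · exact (hlt u hu h).le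
    · rw [h]; exact hend)
  exact absurd hmem.2 (not_le.mpr this)

/-- Logarithmic complete monotonicity. -/
lemma om_logCM (hb : 0 ≤ b) (hba : b ≤ a) (ha : 0 < a) :
    LogCompletelyMonotonic (LaplaceTransform (om a b)) := by
  obtain ⟨k, hk, h1, he⟩ := k_exists (b := b) hba ha
  have h0 : ∀ s, 0 ≤ s → 0 ≤ k s := fun s hs => k_nonneg hb hba ha hk h1 he hs
  have hok : LapOK (om a b) := LapOK.of_bound (om_cont ha) (C := 1) fun t _ => by
    rw [abs_of_pos (om_pos hb ha t)]; exact om_le_one hba ha t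
  have hkk : LapOK k := LapOK.of_bound hk (C := 1) fun t ht => by
    rw [abs_of_nonneg (h0 t ht.le)]; exact h1 t ht.le
  have hpos : ∀ x : ℝ, 0 < x → 0 < LaplaceTransform (om a b) x := by
    intro x hx
    unfold LaplaceTransform
    have hp : ∀ t, 0 < Real.exp (-x * t) * om a b t :=
      fun t => mul_pos (Real.exp_pos _) (om_pos hb ha t)
    rw [setIntegral_pos_iff_support_of_nonneg_ae (Eventually.of_forall fun t => (hp t).le) (hok x hx)]
    have : Function.support (fun t => Real.exp (-x * t) * om a b t) = Set.univ := by
      ext t; simp only [Function.mem_support, Set.mem_univ, iff_true]; exact (hp t).ne'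
    rw [this]
    simp
  refine ⟨hpos, fun x hx => hok.contDiffAt hx, ?_⟩
  refine hkk.completelyMonotonic (fun t ht => h0 t ht.le) fun x hx => ?_
  rw [div_eq_iff (hpos x hx).ne', (hok.hasDerivAt hx).deriv]
  have hconv := integral_posConvolution (hok x hx) (hkk x hx) (ContinuousLinearMap.mul ℝ ℝ)
  simp only [ContinuousLinearMap.mul_apply'] at hconv
  have e : ∫ s in Set.Ioi (0:ℝ), ∫ t in (0:ℝ)..s,
      Real.exp (-x * t) * om a b t * (Real.exp (-x * (s - t)) * k (s - t))
      = ∫ s in Set.Ioi (0:ℝ), - (Real.exp (-x * s) * (-s * om a b s)) := by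
    apply setIntegral_congr_fun measurableSet_Ioi
    intro s hs
    beta_reduce
    have hs' : (0:ℝ) ≤ s := le_of_lt hs
    rw [show - (Real.exp (-x * s) * (-s * om a b s)) = Real.exp (-x * s) * (s * om a b s) by ring,
      ← k_conv ha hk he hs', ← intervalIntegral.integral_const_mul]
    congr 1
    ext t
    have : Real.exp (-x * s) = Real.exp (-x * t) * Real.exp (-x * (s - t)) := by
      rw [← Real.exp_add]; congr 1; ring
    rw [this]; ring
  rw [e, integral_neg] at hconv
  unfold LaplaceTransform
  rw [hconv]
  ring

end

lemma lap_cos {t : ℝ} (ht : 0 < t) (c : ℝ) :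
    IntegrableOn (fun s => Real.exp (-t * s) * Real.cos (c * s)) (Set.Ioi 0) ∧
    ∫ s in Set.Ioi (0:ℝ), Real.exp (-t * s) * Real.cos (c * s) = t / (t ^ 2 + c ^ 2) := by
  let z : ℂ := ⟨-t, c⟩
  have hz : z.re < 0 := by simpa [z] using ht
  have e : ∀ s : ℝ, Real.exp (-t * s) * Real.cos (c * s) = (Complex.exp (z * s)).re := by
    intro s
    rw [Complex.exp_re]
    simp [z]
  have hi : IntegrableOn (fun s : ℝ => Complex.exp (z * s)) (Set.Ioi 0) :=
    integrableOn_exp_mul_complex_Ioi hz 0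
  have h1 := integral_exp_mul_complex_Ioi hz 0
  simp only [e]
  refine ⟨hi.re, ?_⟩
  have h2 := integral_re hi
  simp only [RCLike.re_to_complex] at h2
  rw [h2, h1]
  simp [z, Complex.div_re, Complex.normSq_apply]
  ring

/-- The density of the representing measure. -/
noncomputable def dens (γ c s : ℝ) : ℝ := 1 - γ * Real.cos (c * s)

lemma dens_cont (γ c : ℝ) : Continuous (dens γ c) := by unfold dens; fun_prop

lemma dens_nonneg {γ : ℝ} (h0 : 0 ≤ γ) (h1 : γ ≤ 1) (c s : ℝ) : 0 ≤ dens γ c s := by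
  unfold dens; nlinarith [Real.cos_le_one (c * s), Real.neg_one_le_cos (c * s)]

lemma dens_le {γ : ℝ} (h0 : 0 ≤ γ) (h1 : γ ≤ 1) (c s : ℝ) : dens γ c s ≤ 2 := by
  unfold dens; nlinarith [Real.cos_le_one (c * s), Real.neg_one_le_cos (c * s)]

lemma lap_dens {t : ℝ} (ht : 0 < t) (γ c : ℝ) :
    ∫ s in Set.Ioi (0:ℝ), Real.exp (-t * s) * dens γ c s = 1 / t - γ * (t / (t ^ 2 + c ^ 2)) := by
  have h1 : IntegrableOn (fun s => Real.exp (-t * s)) (Set.Ioi 0) :=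
    integrableOn_exp_mul_Ioi (by linarith) 0
  have h2 := lap_cos ht c
  have h3 : ∫ s in Set.Ioi (0:ℝ), Real.exp (-t * s) = 1 / t := by
    rw [integral_exp_mul_Ioi (by linarith) 0]; simp
  have e : ∀ s, Real.exp (-t * s) * dens γ c s
      = Real.exp (-t * s) - γ * (Real.exp (-t * s) * Real.cos (c * s)) := by
    intro s; unfold dens; ring
  simp only [e]
  rw [integral_sub h1 (h2.1.const_mul γ), integral_const_mul, h2.2, h3]

lemma lap_id {y : ℝ} (hy : 0 < y) :
    IntegrableOn (fun t => t * Real.exp (-y * t)) (Set.Ioi 0) ∧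
    ∫ t in Set.Ioi (0:ℝ), t * Real.exp (-y * t) = 1 / y ^ 2 := by
  constructor
  · have h : LapOK (fun _ => (1:ℝ)) :=
      LapOK.of_bound continuous_const (C := 1) (fun t _ => by simp)
    have := (h.neg_mul.neg) y hy
    refine this.congr (Eventually.of_forall fun t => ?_)
    simp [mul_comm]
  · have := Real.integral_rpow_mul_exp_neg_mul_Ioi (a := 2) (r := y) two_pos hy
    have e : Real.Gamma 2 = 1 := by
      have := Real.Gamma_nat_eq_factorial 1
      norm_num at this
      simpa using this
    rw [e] at this
    norm_num at this
    rw [one_div, ← this]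
    congr 1
    ext t
    rw [neg_mul]

lemma inv_sq_int {x : ℝ} (hx : 0 < x) :
    IntegrableOn (fun s => 1 / (x + s) ^ 2) (Set.Ioi 0) ∧
    ∫ s in Set.Ioi (0:ℝ), 1 / (x + s) ^ 2 = 1 / x := by
  have hd : ∀ s : ℝ, 0 ≤ s → HasDerivAt (fun s : ℝ => - (x + s)⁻¹) (1 / (x + s) ^ 2) s := by
    intro s hs
    have h1 : HasDerivAt (fun s : ℝ => x + s) 1 s := (hasDerivAt_id s).const_add x
    have h2 := (h1.fun_inv (by positivity)).fun_neg
    refine h2.congr_deriv ?_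
    ring
  have ht : Tendsto (fun s : ℝ => - (x + s)⁻¹) atTop (nhds 0) := by
    have : Tendsto (fun s : ℝ => x + s) atTop atTop := tendsto_atTop_add_const_left _ _ tendsto_id
    simpa using this.inv_tendsto_atTop.neg
  have hi : IntegrableOn (fun s => 1 / (x + s) ^ 2) (Set.Ioi 0) :=
    integrableOn_Ioi_deriv_of_nonneg (hd 0 le_rfl).continuousAt.continuousWithinAt
      (fun s hs => hd s (le_of_lt hs)) (fun s _ => by positivity) ht
  refine ⟨hi, ?_⟩
  rw [integral_Ioi_of_hasDerivAt_of_tendsto (hd 0 le_rfl).continuousAt.continuousWithinAt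
      (fun s hs => hd s (le_of_lt hs)) hi ht]
  simp

lemma dens_int {γ : ℝ} (h0 : 0 ≤ γ) (h1 : γ ≤ 1) (c : ℝ) {x : ℝ} (hx : 0 < x) :
    IntegrableOn (fun s => dens γ c s * (1 / (x + s) ^ 2)) (Set.Ioi 0) := by
  refine Integrable.mono' ((inv_sq_int hx).1.const_mul 2) ?_ ?_
  · exact (dens_cont γ c).aestronglyMeasurable.mul (inv_sq_int hx).1.aestronglyMeasurable
  · filter_upwards with s
    rw [norm_mul, Real.norm_eq_abs, Real.norm_eq_abs, abs_of_nonneg (dens_nonneg h0 h1 c s),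
      abs_of_nonneg (by positivity)]
    exact mul_le_mul_of_nonneg_right (dens_le h0 h1 c s) (by positivity)

/-- Stieltjes representation of the Laplace transform. -/
lemma stieltjes_rep {γ : ℝ} (h0 : 0 ≤ γ) (h1 : γ ≤ 1) (c : ℝ) {w : ℝ → ℝ}
    (hw : ∀ t, 0 < t → w t = t * (1 / t - γ * (t / (t ^ 2 + c ^ 2)))) {x : ℝ} (hx : 0 < x) :
    LaplaceTransform w x = ∫ s in Set.Ioi (0:ℝ), dens γ c s * (1 / (x + s) ^ 2) := by
  let Φ : ℝ → ℝ → ℝ := fun t s => t * Real.exp (-(x + s) * t) * dens γ c s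
  have hΦc : Continuous (Function.uncurry Φ) := by
    have := dens_cont γ c
    simp only [Φ, Function.uncurry_def]
    fun_prop
  have hin : ∀ s, 0 < s → ∫ t in Set.Ioi (0:ℝ), Φ t s = dens γ c s * (1 / (x + s) ^ 2) := by
    intro s hs
    simp only [Φ]
    rw [integral_mul_const, (lap_id (by linarith : 0 < x + s)).2]
    ring
  have hint : Integrable (Function.uncurry Φ)
      ((volume.restrict (Set.Ioi 0)).prod (volume.restrict (Set.Ioi 0))) := by
    rw [integrable_prod_iff' hΦc.aestronglyMeasurable]
    constructor
    · filter_upwards [ae_restrict_mem measurableSet_Ioi] with s hs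
      exact (lap_id (add_pos hx hs)).1.mul_const (dens γ c s)
    · refine (dens_int h0 h1 c hx).congr ?_
      filter_upwards [ae_restrict_mem measurableSet_Ioi] with s hs
      rw [← hin s hs]
      apply setIntegral_congr_fun measurableSet_Ioi
      intro t ht
      have ht' : (0:ℝ) < t := ht
      have : 0 ≤ Φ t s := mul_nonneg (mul_nonneg ht'.le (Real.exp_pos _).le)
        (dens_nonneg h0 h1 c s)
      simp only [Function.uncurry, Real.norm_eq_abs, abs_of_nonneg this]
  have hsw := integral_integral_swap hint
  have e2 : ∫ s in Set.Ioi (0:ℝ), ∫ t in Set.Ioi (0:ℝ), Φ t s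
      = ∫ s in Set.Ioi (0:ℝ), dens γ c s * (1 / (x + s) ^ 2) :=
    setIntegral_congr_fun measurableSet_Ioi fun s hs => hin s hs
  rw [← e2, ← hsw]
  unfold LaplaceTransform
  apply setIntegral_congr_fun measurableSet_Ioi
  intro t ht
  beta_reduce
  rw [hw t ht, ← lap_dens ht, ← integral_const_mul, ← integral_const_mul]
  congr 1
  ext s
  simp only [Φ]
  have : Real.exp (-(x + s) * t) = Real.exp (-x * t) * Real.exp (-t * s) := by
    rw [← Real.exp_add]; congr 1; ring
  rw [this]; ring

lemma isGenStieltjes_of_rep {γ : ℝ} (h0 : 0 ≤ γ) (h1 : γ ≤ 1) (c : ℝ) {f : ℝ → ℝ}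
    (hf : ∀ x, 0 < x → f x = ∫ s in Set.Ioi (0:ℝ), dens γ c s * (1 / (x + s) ^ 2)) :
    IsGenStieltjes 2 f := by
  have hm : Measurable (fun s => ENNReal.ofReal (dens γ c s)) :=
    (dens_cont γ c).measurable.ennreal_ofReal
  have htop : ∀ᵐ s ∂(volume.restrict (Set.Ioi (0:ℝ))), ENNReal.ofReal (dens γ c s) < ⊤ :=
    Eventually.of_forall fun s => ENNReal.ofReal_lt_top
  refine ⟨(volume.restrict (Set.Ioi 0)).withDensity (fun s => ENNReal.ofReal (dens γ c s)), 0,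
    le_rfl, ?_, fun x hx => ?_⟩
  · apply withDensity_absolutelyContinuous
    rw [Measure.restrict_apply measurableSet_Iio]
    have : Set.Iio (0:ℝ) ∩ Set.Ioi 0 = ∅ := by
      ext s; simp only [Set.mem_inter_iff, Set.mem_Iio, Set.mem_Ioi, Set.mem_empty_iff_false, iff_false]
      rintro ⟨h1, h2⟩; linarith
    rw [this]; simp
  · have e : ∀ s ∈ Set.Ioi (0:ℝ), dens γ c s * (1 / (x + s) ^ 2)
        = (ENNReal.ofReal (dens γ c s)).toReal • (x + s) ^ (-2 : ℝ) := by
      intro s hs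
      have hs' : (0:ℝ) < s := hs
      rw [ENNReal.toReal_ofReal (dens_nonneg h0 h1 c s), Real.rpow_neg (by linarith),
        Real.rpow_two, smul_eq_mul, one_div]
    constructor
    · rw [integrable_withDensity_iff_integrable_smul' hm htop]
      refine (dens_int h0 h1 c hx).congr ?_
      filter_upwards [ae_restrict_mem measurableSet_Ioi] with s hs using e s hs
    · rw [integral_withDensity_eq_integral_toReal_smul hm htop, add_zero, hf x hx]
      exact setIntegral_congr_fun measurableSet_Ioi e

lemma cici {si ci : ℝ → ℝ}
    (hsi : ∀ x : ℝ, 0 < x →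
      Tendsto (fun R => ∫ t in x..R, Real.sin t / t) atTop (nhds (- si x)))
    (hci : ∀ x : ℝ, 0 < x →
      Tendsto (fun R => ∫ t in x..R, Real.cos t / t) atTop (nhds (- ci x))) {y : ℝ} (hy : 0 < y) :
    ∫ u in Set.Ioi (0:ℝ), (1 - Real.cos u) * (1 / (y + u) ^ 2)
      = ci y * Real.sin y - si y * Real.cos y := by
  have hi0 : IntegrableOn (fun u => (1 - Real.cos u) * (1 / (y + u) ^ 2)) (Set.Ioi 0) := by
    have := dens_int (γ := 1) zero_le_one le_rfl 1 hy
    simpa [dens] using this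
  have hlim1 : Tendsto (fun R => ∫ u in (0:ℝ)..(R - y), (1 - Real.cos u) * (1 / (y + u) ^ 2)) atTop
      (nhds (∫ u in Set.Ioi (0:ℝ), (1 - Real.cos u) * (1 / (y + u) ^ 2))) :=
    intervalIntegral_tendsto_integral_Ioi 0 hi0 (tendsto_atTop_add_const_right _ (-y) tendsto_id)
  have hlim2 : Tendsto (fun R => Real.cos y * (∫ t in y..R, Real.sin t / t)
      - Real.sin y * ∫ t in y..R, Real.cos t / t) atTop
      (nhds (Real.cos y * (- si y) - Real.sin y * (- ci y))) :=
    ((hsi y hy).const_mul _).sub ((hci y hy).const_mul _)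
  have hlim3 : Tendsto (fun R : ℝ => (1 - Real.cos (R - y)) / R) atTop (nhds 0) := by
    have hb : Tendsto (fun R : ℝ => 2 * R⁻¹) atTop (nhds 0) := by
      simpa using tendsto_inv_atTop_zero.const_mul (2:ℝ)
    refine squeeze_zero' ?_ ?_ hb
    · filter_upwards [eventually_gt_atTop 0] with R hR
      exact div_nonneg (by linarith [Real.cos_le_one (R - y)]) hR.le
    · filter_upwards [eventually_gt_atTop 0] with R hR
      rw [div_eq_mul_inv]
      have := inv_pos.mpr hR
      gcongr
      linarith [Real.neg_one_le_cos (R - y)]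
  have heq : ∀ R, y ≤ R → Real.cos y * (∫ t in y..R, Real.sin t / t)
      - Real.sin y * (∫ t in y..R, Real.cos t / t)
      = (1 - Real.cos (R - y)) / R + ∫ u in (0:ℝ)..(R - y), (1 - Real.cos u) * (1 / (y + u) ^ 2) := by
    intro R hR
    have hne : ∀ t ∈ Set.uIcc y R, t ≠ 0 := by
      intro t ht
      rw [Set.uIcc_of_le hR] at ht
      exact (hy.trans_le ht.1).ne'
    have hc1 : IntervalIntegrable (fun t => Real.sin t / t) volume y R :=
      (Real.continuous_sin.continuousOn.div continuousOn_id hne).intervalIntegrable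
    have hc2 : IntervalIntegrable (fun t => Real.cos t / t) volume y R :=
      (Real.continuous_cos.continuousOn.div continuousOn_id hne).intervalIntegrable
    have hc3 : IntervalIntegrable (fun t => Real.sin (t - y) / t) volume y R :=
      ((by fun_prop : Continuous fun t => Real.sin (t - y)).continuousOn.div continuousOn_id
        hne).intervalIntegrable
    have hc4 : IntervalIntegrable (fun t => (1 - Real.cos (t - y)) * (1 / t ^ 2)) volume y R := by
      refine ContinuousOn.intervalIntegrable (ContinuousOn.mul (by fun_prop) ?_)
      exact continuousOn_const.div (by fun_prop) (fun t ht => pow_ne_zero 2 (hne t ht))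
    have h1 : Real.cos y * (∫ t in y..R, Real.sin t / t)
        - Real.sin y * (∫ t in y..R, Real.cos t / t) = ∫ t in y..R, Real.sin (t - y) / t := by
      rw [← intervalIntegral.integral_const_mul, ← intervalIntegral.integral_const_mul,
        ← intervalIntegral.integral_sub (hc1.const_mul _) (hc2.const_mul _)]
      congr 1
      ext t
      rw [Real.sin_sub]
      ring
    have h2 : ∫ t in y..R, (Real.sin (t - y) / t - (1 - Real.cos (t - y)) * (1 / t ^ 2))
        = (1 - Real.cos (R - y)) / R - (1 - Real.cos (y - y)) / y := by
      refine intervalIntegral.integral_eq_sub_of_hasDerivAt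
        (f := fun t => (1 - Real.cos (t - y)) / t) (fun t ht => ?_) (hc3.sub hc4)
      have ht0 := hne t ht
      have d1 : HasDerivAt (fun t => t - y) 1 t := (hasDerivAt_id t).sub_const y
      have d2 : HasDerivAt (fun t => 1 - Real.cos (t - y)) (Real.sin (t - y)) t := by
        refine ((d1.cos).const_sub 1).congr_deriv ?_
        simp
      refine (d2.fun_div (hasDerivAt_id' t) ht0).congr_deriv ?_
      field_simp
    rw [intervalIntegral.integral_sub hc3 hc4] at h2
    have h3 : ∫ t in y..R, (1 - Real.cos (t - y)) * (1 / t ^ 2)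
        = ∫ u in (0:ℝ)..(R - y), (1 - Real.cos u) * (1 / (y + u) ^ 2) := by
      have := intervalIntegral.integral_comp_sub_right (a := y) (b := R)
        (fun u => (1 - Real.cos u) * (1 / (y + u) ^ 2)) y
      simpa using this
    rw [h1, ← h3]
    simp at h2
    simp
    linarith
  have hlim4 := (hlim3.add hlim1).congr' (f₂ := fun R => Real.cos y * (∫ t in y..R, Real.sin t / t)
      - Real.sin y * ∫ t in y..R, Real.cos t / t) (by
    filter_upwards [eventually_ge_atTop y] with R hR
    exact (heq R hR).symm)
  have := tendsto_nhds_unique hlim4 hlim2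
  rw [zero_add] at this
  rw [this]; ring

lemma dens_formula {γ c x : ℝ} (hc : 0 < c) (hx : 0 < x) :
    ∫ s in Set.Ioi (0:ℝ), dens γ c s * (1 / (x + s) ^ 2) = (1 - γ) * (1 / x) +
      γ * c * ∫ u in Set.Ioi (0:ℝ), (1 - Real.cos u) * (1 / (c * x + u) ^ 2) := by
  have h1 := integral_comp_mul_left_Ioi
    (fun u => (1 - Real.cos u) * (1 / (c * x + u) ^ 2)) 0 hc
  simp only [mul_zero, smul_eq_mul] at h1
  have h2 : ∫ s in Set.Ioi (0:ℝ), (1 - Real.cos (c * s)) * (1 / (x + s) ^ 2)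
      = c * ∫ u in Set.Ioi (0:ℝ), (1 - Real.cos u) * (1 / (c * x + u) ^ 2) := by
    have e : ∀ s, (1 - Real.cos (c * s)) * (1 / (x + s) ^ 2)
        = c ^ 2 * ((1 - Real.cos (c * s)) * (1 / (c * x + c * s) ^ 2)) := by
      intro s
      rw [← mul_add, mul_pow]
      field_simp
    simp only [e]
    rw [integral_const_mul, h1]
    field_simp
  have hi : IntegrableOn (fun s => (1 - Real.cos (c * s)) * (1 / (x + s) ^ 2)) (Set.Ioi 0) := by
    have := dens_int (γ := 1) zero_le_one le_rfl c hx
    simpa [dens] using this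
  have e : ∀ s, dens γ c s * (1 / (x + s) ^ 2) = (1 - γ) * (1 / (x + s) ^ 2)
      + γ * ((1 - Real.cos (c * s)) * (1 / (x + s) ^ 2)) := by
    intro s; unfold dens; ring
  simp only [e]
  rw [integral_add ((inv_sq_int hx).1.const_mul _) (hi.const_mul _), integral_const_mul,
    integral_const_mul, (inv_sq_int hx).2, h2]
  ring

/-- Theorem: for `a ≥ b ≥ 0`, `a > 0`, the Laplace transform of `ω(x) = (1+bx²)/(1+ax²)` is a
generalized Stieltjes function of order 2 (hence logarithmically completely monotonic, i.e. `ω`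
is infinitely divisible), and it equals
`(b/a)(1/x) + (1-b/a)(1/√a)(ci(x/√a) sin(x/√a) - si(x/√a) cos(x/√a))`, where
`si(x) = -∫ₓ^∞ sin t/t dt` and `ci(x) = -∫ₓ^∞ cos t/t dt` (as improper integrals). -/
theorem stmt10 (a b : ℝ) (hb : 0 ≤ b) (hba : b ≤ a) (ha : 0 < a)
    (si ci : ℝ → ℝ)
    (hsi : ∀ x : ℝ, 0 < x →
      Tendsto (fun R => ∫ t in x..R, Real.sin t / t) atTop (nhds (- si x)))
    (hci : ∀ x : ℝ, 0 < x →
      Tendsto (fun R => ∫ t in x..R, Real.cos t / t) atTop (nhds (- ci x))) :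
    IsGenStieltjes 2 (LaplaceTransform (fun x => (1 + b * x ^ 2) / (1 + a * x ^ 2))) ∧
    LogCompletelyMonotonic
      (LaplaceTransform (fun x => (1 + b * x ^ 2) / (1 + a * x ^ 2))) ∧
    ∀ x : ℝ, 0 < x →
      LaplaceTransform (fun x => (1 + b * x ^ 2) / (1 + a * x ^ 2)) x
        = (b / a) * (1 / x) + (1 - b / a) * (1 / Real.sqrt a) *
            (ci (x / Real.sqrt a) * Real.sin (x / Real.sqrt a)
              - si (x / Real.sqrt a) * Real.cos (x / Real.sqrt a)) := by
  have hg0 : 0 ≤ 1 - b / a := by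
    rw [sub_nonneg, div_le_one ha]; exact hba
  have hg1 : 1 - b / a ≤ 1 := by
    have : 0 ≤ b / a := by positivity
    linarith
  have hsq : 0 < Real.sqrt a := Real.sqrt_pos.mpr ha
  have hrep : ∀ x : ℝ, 0 < x →
      LaplaceTransform (fun x => (1 + b * x ^ 2) / (1 + a * x ^ 2)) x
        = ∫ s in Set.Ioi (0:ℝ), dens (1 - b / a) (1 / Real.sqrt a) s * (1 / (x + s) ^ 2) := by
    intro x hx
    refine stieltjes_rep hg0 hg1 _ (fun t ht => ?_) hx
    rw [div_pow, Real.sq_sqrt ha.le]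
    have h1 := (den_pos ha t).ne'
    have h2 : t ^ 2 + 1 ^ 2 / a ≠ 0 := by positivity
    have h3 : t ^ 2 + 1 ^ 2 / a = (1 + a * t ^ 2) / a := by field_simp; ring
    rw [h3]
    field_simp
    ring
  refine ⟨isGenStieltjes_of_rep hg0 hg1 _ hrep, om_logCM hb hba ha, fun x hx => ?_⟩
  have hy : 0 < 1 / Real.sqrt a * x := by positivity
  rw [hrep x hx, dens_formula (by positivity) hx, cici hsi hci hy,
    show 1 / Real.sqrt a * x = x / Real.sqrt a by ring]
  ring
end

section
/- Let 0 ≤ ν ≤ 1 and define σ(x) = ν - sinh(νx)/x + cosh(νx) tanh(x)/x for x > 0 (equivalently σ(x) = ν + sinh((1-ν)x)/(x cosh x)). Then the Laplace transform L(σ) is a generalized Stieltjes function of order 2 (hence σ is infinitely divisible), and for x > 0: L(σ)(x) = ν/x + log( Γ((x-ν)/4 + 1) Γ((x+ν)/4) / ( Γ((x-ν)/4 + 1/2) Γ((x+ν)/4 + 1/2) ) ). -/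
open MeasureTheory Filter Set

lemma aux_int_lin (C x : ℝ) (hx : 0 < x) :
    IntegrableOn (fun t : ℝ => Real.exp (-x * t) * (C * (1 + t))) (Ioi 0) := by
  have h0 : IntegrableOn (fun t : ℝ => Real.exp (-x * t)) (Ioi 0) := by
    exact exp_neg_integrableOn_Ioi 0 hx
  have h1 : IntegrableOn (fun t : ℝ => t ^ (1:ℝ) * Real.exp (-x * t ^ (1:ℝ))) (Ioi 0) :=
    integrableOn_rpow_mul_exp_neg_mul_rpow (by norm_num) (by norm_num) hx
  simp only [Real.rpow_one] at h1
  refine ((h0.add h1).const_mul C).congr ?_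
  filter_upwards with t
  simp only [Pi.add_apply]
  ring

lemma aux_int (g : ℝ → ℝ) (C : ℝ) (hm : Measurable g)
    (hg : ∀ t, 0 < t → |g t| ≤ C * (1 + t)) (x : ℝ) (hx : 0 < x) :
    IntegrableOn (fun t : ℝ => Real.exp (-x * t) * g t) (Ioi 0) := by
  refine Integrable.mono' (aux_int_lin C x hx) (by fun_prop) ?_
  rw [ae_restrict_iff' measurableSet_Ioi]
  filter_upwards with t ht
  rw [Real.norm_eq_abs, abs_mul, abs_of_pos (Real.exp_pos _)]
  exact mul_le_mul_of_nonneg_left (hg t ht) (Real.exp_pos _).le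

/-- the measure with density g on the half line -/
noncomputable def auxMeas (g : ℝ → ℝ) : Measure ℝ :=
  (volume.restrict (Ioi (0:ℝ))).withDensity (fun t => ENNReal.ofReal (g t))

lemma aux_integral (g : ℝ → ℝ) (hm : Measurable g) (hg : ∀ t, 0 < t → 0 ≤ g t) (F : ℝ → ℝ) :
    ∫ t, F t ∂(auxMeas g) = ∫ t in Ioi (0:ℝ), F t * g t := by
  unfold auxMeas
  rw [integral_withDensity_eq_integral_toReal_smul (by fun_prop) (by simp)]
  refine setIntegral_congr_fun measurableSet_Ioi ?_
  intro t ht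
  simp [ENNReal.toReal_ofReal (hg t ht), mul_comm]

lemma aux_mem (g : ℝ → ℝ) (C : ℝ) (hm : Measurable g) (hg0 : ∀ t, 0 < t → 0 ≤ g t)
    (hg : ∀ t, 0 < t → |g t| ≤ C * (1 + t)) (x : ℝ) (hx : 0 < x) :
    x ∈ interior (ProbabilityTheory.integrableExpSet (fun t : ℝ => -t) (auxMeas g)) := by
  have : Ioi (0:ℝ) ⊆ interior (ProbabilityTheory.integrableExpSet (fun t : ℝ => -t) (auxMeas g)) := by
    apply interior_maximal _ isOpen_Ioi
    intro y hy
    show Integrable _ _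
    unfold auxMeas
    rw [integrable_withDensity_iff_integrable_smul₀' (by fun_prop) (by simp)]
    refine (aux_int g C hm hg y hy).congr ?_
    rw [Filter.EventuallyEq, ae_restrict_iff' measurableSet_Ioi]
    filter_upwards with t ht
    simp [ENNReal.toReal_ofReal (hg0 t ht), mul_comm]
  exact this hx

lemma aux_laplace (g : ℝ → ℝ) (hm : Measurable g) (hg0 : ∀ t, 0 < t → 0 ≤ g t) :
    LaplaceTransform g = ProbabilityTheory.mgf (fun t : ℝ => -t) (auxMeas g) := by
  ext x
  unfold LaplaceTransform ProbabilityTheory.mgf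
  rw [aux_integral g hm hg0]
  simp

lemma aux_cm (g : ℝ → ℝ) (C : ℝ) (hm : Measurable g) (hg0 : ∀ t, 0 < t → 0 ≤ g t)
    (hg : ∀ t, 0 < t → |g t| ≤ C * (1 + t)) : CompletelyMonotonic (LaplaceTransform g) := by
  rw [aux_laplace g hm hg0]
  refine ⟨fun x hx => (ProbabilityTheory.analyticAt_mgf
    (aux_mem g C hm hg0 hg x hx)).contDiffAt, fun n x hx => ?_⟩
  rw [ProbabilityTheory.iteratedDeriv_mgf (aux_mem g C hm hg0 hg x hx), aux_integral g hm hg0,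
    ← integral_const_mul]
  refine setIntegral_nonneg measurableSet_Ioi ?_
  intro t ht
  have h1 : (-1:ℝ)^n * ((-t)^n * Real.exp (x * -t) * g t) = t^n * (Real.exp (x * -t) * g t) := by
    rw [neg_pow t]
    have : (-1:ℝ)^n * (-1)^n = 1 := by rw [← mul_pow]; simp
    linear_combination (t^n * (Real.exp (x * -t) * g t)) * this
  rw [h1]
  have := hg0 t ht
  have : 0 ≤ t := le_of_lt ht
  positivity

lemma aux_deriv (g : ℝ → ℝ) (C : ℝ) (hm : Measurable g) (hg0 : ∀ t, 0 < t → 0 ≤ g t)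
    (hg : ∀ t, 0 < t → |g t| ≤ C * (1 + t)) (x : ℝ) (hx : 0 < x) :
    HasDerivAt (LaplaceTransform g) (- LaplaceTransform (fun t => t * g t) x) x := by
  have h1 : DifferentiableAt ℝ (LaplaceTransform g) x :=
    ((aux_cm g C hm hg0 hg).1 x hx).differentiableAt (by simp)
  have h2 := ProbabilityTheory.iteratedDeriv_mgf (aux_mem g C hm hg0 hg x hx) 1
  rw [← aux_laplace g hm hg0, iteratedDeriv_one, aux_integral g hm hg0] at h2
  have : deriv (LaplaceTransform g) x = - LaplaceTransform (fun t => t * g t) x := by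
    rw [h2, LaplaceTransform, ← integral_neg]
    refine setIntegral_congr_fun measurableSet_Ioi ?_
    intro t ht
    simp
    ring
  rw [← this]
  exact h1.hasDerivAt

lemma aux_inv_cm (B : ℝ → ℝ) (hB : ∀ x, 0 < x → ContDiffAt ℝ (⊤ : ℕ∞) B x)
    (hpos : ∀ x, 0 < x → 0 < B x)
    (hd : ∀ n x, 0 < x → 0 ≤ (-1 : ℝ) ^ n * iteratedDeriv (n+1) B x) :
    CompletelyMonotonic (fun x => (B x)⁻¹) := by
  have hR : ∀ x, 0 < x → ContDiffAt ℝ (⊤ : ℕ∞) (fun x => (B x)⁻¹) x :=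
    fun x hx => (hB x hx).inv (hpos x hx).ne'
  refine ⟨hR, fun n x hx => ?_⟩
  induction n using Nat.strong_induction_on with
  | _ n ih =>
  rcases Nat.eq_zero_or_pos n with rfl | hn
  · simpa using (hpos x hx).le
  have hle : ((n:ℕ) : WithTop ℕ∞) ≤ ((⊤ : ℕ∞) : WithTop ℕ∞) := by exact_mod_cast le_top
  have h1 := iteratedDeriv_mul (n := n) ((hB x hx).of_le hle) ((hR x hx).of_le hle)
  have h2 : iteratedDeriv n (B * fun x => (B x)⁻¹) x = 0 := by
    have : (B * fun x => (B x)⁻¹) =ᶠ[nhds x] fun _ => (1:ℝ) := by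
      filter_upwards [Ioi_mem_nhds hx] with y hy
      simp [mul_inv_cancel₀ (hpos y hy).ne']
    rw [this.iteratedDeriv_eq, iteratedDeriv_const]
    simp [hn.ne']
  rw [h2, Finset.sum_range_succ'] at h1
  simp only [Nat.choose_zero_right, Nat.cast_one, one_mul, iteratedDeriv_zero, Nat.sub_zero] at h1
  have h3 : B x * ((-1:ℝ)^n * iteratedDeriv n (fun x => (B x)⁻¹) x) =
      ∑ i ∈ Finset.range n, (n.choose (i+1) : ℝ) * (((-1:ℝ)^i * iteratedDeriv (i+1) B x) *
        ((-1:ℝ)^(n-(i+1)) * iteratedDeriv (n-(i+1)) (fun x => (B x)⁻¹) x)) := by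
    have h4 : B x * ((-1:ℝ)^n * iteratedDeriv n (fun x => (B x)⁻¹) x) =
      - ((-1)^n * ∑ i ∈ Finset.range n, (n.choose (i+1) : ℝ) * iteratedDeriv (i+1) B x *
        iteratedDeriv (n-(i+1)) (fun x => (B x)⁻¹) x) := by
      linear_combination (-(-1:ℝ)^n) * h1
    rw [h4, Finset.mul_sum, ← Finset.sum_neg_distrib]
    refine Finset.sum_congr rfl fun i hi => ?_
    have hi' : i + 1 ≤ n := Finset.mem_range.mp hi
    have h5 : (-1:ℝ)^n = -((-1)^i * (-1)^(n-(i+1))) := by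
      rw [← pow_add]
      conv_lhs => rw [show n = (i + (n-(i+1))) + 1 by omega, pow_succ]
      ring
    rw [h5]
    ring
  have h6 : 0 ≤ B x * ((-1:ℝ)^n * iteratedDeriv n (fun x => (B x)⁻¹) x) := by
    rw [h3]
    refine Finset.sum_nonneg fun i hi => ?_
    have hi' : i + 1 ≤ n := Finset.mem_range.mp hi
    exact mul_nonneg (Nat.cast_nonneg _) (mul_nonneg (hd i x hx) (ih _ (by omega)))
  exact nonneg_of_mul_nonneg_right h6 (hpos x hx)

lemma aux_mul_cm (A R : ℝ → ℝ) (hA : CompletelyMonotonic A) (hR : CompletelyMonotonic R) :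
    CompletelyMonotonic (A * R) := by
  refine ⟨fun x hx => (hA.1 x hx).mul (hR.1 x hx), fun n x hx => ?_⟩
  have hle : ((n:ℕ) : WithTop ℕ∞) ≤ ((⊤ : ℕ∞) : WithTop ℕ∞) := by exact_mod_cast le_top
  rw [iteratedDeriv_mul (n := n) ((hA.1 x hx).of_le hle) ((hR.1 x hx).of_le hle), Finset.mul_sum]
  refine Finset.sum_nonneg fun i hi => ?_
  have hi' : i < n + 1 := Finset.mem_range.mp hi
  have h5 : (-1:ℝ)^n = ((-1)^i * (-1)^(n-i)) := by
    rw [← pow_add]; congr 1; omega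
  have := mul_nonneg (Nat.cast_nonneg (α := ℝ) (n.choose i)) (mul_nonneg (hA.2 i x hx) (hR.2 (n-i) x hx))
  rw [h5]
  convert this using 1
  ring

lemma aux_congr_cm (A R : ℝ → ℝ) (hA : CompletelyMonotonic A) (h : ∀ x, 0 < x → R x = A x) :
    CompletelyMonotonic R := by
  have he : ∀ x, 0 < x → R =ᶠ[nhds x] A := fun x hx => by
    filter_upwards [Ioi_mem_nhds hx] with y hy using h y hy
  refine ⟨fun x hx => (hA.1 x hx).congr_of_eventuallyEq (he x hx), fun n x hx => ?_⟩
  rw [(he x hx).iteratedDeriv_eq]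
  exact hA.2 n x hx

/-- Abstract criterion. -/
lemma aux_logcm (s h h' : ℝ → ℝ) (hsm : Measurable s) (hm' : Measurable h')
    (hh : ∀ t, 0 < t → h t = t * s t) (h0 : h 0 = 0)
    (hd : ∀ t, HasDerivAt h (h' t) t) (hs0 : ∀ t, 0 < t → 0 < s t) (hs1 : ∀ t, 0 < t → s t ≤ 1)
    (hp : ∀ t, 0 < t → 0 ≤ h' t) (hle : ∀ t, 0 < t → h' t ≤ s t) :
    LogCompletelyMonotonic (LaplaceTransform s) := by
  have bs : ∀ t, 0 < t → |s t| ≤ 1 * (1 + t) := fun t ht => by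
    rw [abs_of_pos (hs0 t ht)]; linarith [hs1 t ht]
  have bh' : ∀ t, 0 < t → |h' t| ≤ 1 * (1 + t) := fun t ht => by
    rw [abs_of_nonneg (hp t ht)]; linarith [hs1 t ht, hle t ht]
  have bd : ∀ t, 0 < t → |s t - h' t| ≤ 1 * (1 + t) := fun t ht => by
    rw [abs_of_nonneg (sub_nonneg.2 (hle t ht))]; linarith [hs1 t ht, hp t ht]
  have hhm : Measurable h := (continuous_iff_continuousAt.2 fun t => (hd t).continuousAt).measurable
  have bh : ∀ t, 0 < t → |h t| ≤ 1 * (1 + t) := fun t ht => by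
    rw [hh t ht, abs_of_pos (mul_pos ht (hs0 t ht))]; nlinarith [hs1 t ht]
  have cs := aux_cm s 1 hsm (fun t ht => (hs0 t ht).le) bs
  have ch' := aux_cm h' 1 hm' hp bh'
  have cd := aux_cm (fun t => s t - h' t) 1 (hsm.sub hm') (fun t ht => sub_nonneg.2 (hle t ht)) bd
  have hfpos : ∀ x, 0 < x → 0 < LaplaceTransform s x := fun x hx => by
    unfold LaplaceTransform
    rw [setIntegral_pos_iff_support_of_nonneg_ae _ (aux_int s 1 hsm bs x hx)]
    · have : Ioi (0:ℝ) ⊆ Function.support (fun t => Real.exp (-x * t) * s t) ∩ Ioi 0 := fun t ht =>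
        ⟨(mul_pos (Real.exp_pos _) (hs0 t ht)).ne', ht⟩
      refine lt_of_lt_of_le ?_ (measure_mono this)
      simp
    · rw [Filter.EventuallyLE, ae_restrict_iff' measurableSet_Ioi]
      filter_upwards with t ht
      exact (mul_pos (Real.exp_pos _) (hs0 t ht)).le
  have hth : ∀ x, LaplaceTransform (fun t => t * s t) x = LaplaceTransform h x := fun x =>
    setIntegral_congr_fun measurableSet_Ioi fun t ht => by simp only; rw [hh t ht]
  -- integration by parts
  have parts : ∀ x, 0 < x → x * LaplaceTransform h x = LaplaceTransform h' x := fun x hx => by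
    have i1 := aux_int h 1 hhm bh x hx
    have i2 := aux_int h' 1 hm' bh' x hx
    have hder : ∀ t ∈ Ioi (0:ℝ), HasDerivAt (fun t => Real.exp (-x * t) * h t)
        (Real.exp (-x * t) * h' t - x * (Real.exp (-x * t) * h t)) t := fun t _ => by
      have e1 : HasDerivAt (fun t => Real.exp (-x * t)) (Real.exp (-x * t) * (-x * 1)) t :=
        ((hasDerivAt_id t).const_mul (-x)).exp
      exact (e1.mul (hd t)).congr_deriv (by ring)
    have i3 := i2.sub (i1.const_mul x)
    have lim : Tendsto (fun t => Real.exp (-x * t) * h t) atTop (nhds 0) := by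
      refine tendsto_zero_of_hasDerivAt_of_integrableOn_Ioi hder ?_ i1
      exact i3
    have := integral_Ioi_of_hasDerivAt_of_tendsto
      (f := fun t => Real.exp (-x * t) * h t) (a := 0) (m := 0)
      (by
        have : ContinuousAt h 0 := (hd 0).continuousAt
        exact (ContinuousAt.mul (by fun_prop) this).continuousWithinAt) hder i3 lim
    rw [integral_sub i2 (i1.const_mul x), integral_const_mul, h0] at this
    unfold LaplaceTransform
    linarith
  set B : ℝ → ℝ := fun x => x * LaplaceTransform s x with hBdef
  have hBd : ∀ x, 0 < x → HasDerivAt B (LaplaceTransform (fun t => s t - h' t) x) x := fun x hx => by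
    have e := (hasDerivAt_id x).mul (aux_deriv s 1 hsm (fun t ht => (hs0 t ht).le) bs x hx)
    refine e.congr_deriv ?_
    rw [hth]
    have : LaplaceTransform (fun t => s t - h' t) x = LaplaceTransform s x - LaplaceTransform h' x := by
      unfold LaplaceTransform
      rw [← integral_sub (aux_int s 1 hsm bs x hx) (aux_int h' 1 hm' bh' x hx)]
      refine setIntegral_congr_fun measurableSet_Ioi fun t ht => ?_
      simp only
      ring
    rw [this, ← parts x hx]
    simp
    ring
  have cB : CompletelyMonotonic (fun x => (B x)⁻¹) := by
    refine aux_inv_cm B (fun x hx => contDiffAt_id.mul (cs.1 x hx))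
      (fun x hx => mul_pos hx (hfpos x hx)) fun n x hx => ?_
    rw [iteratedDeriv_succ']
    have : deriv B =ᶠ[nhds x] LaplaceTransform (fun t => s t - h' t) := by
      filter_upwards [Ioi_mem_nhds hx] with y hy using (hBd y hy).deriv
    rw [this.iteratedDeriv_eq]
    exact cd.2 n x hx
  refine ⟨hfpos, cs.1, aux_congr_cm _ _ (aux_mul_cm _ _ ch' cB) fun x hx => ?_⟩
  rw [(aux_deriv s 1 hsm (fun t ht => (hs0 t ht).le) bs x hx).deriv, hth]
  simp only [Pi.mul_apply, hBdef]
  rw [← parts x hx]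
  have := hfpos x hx
  field_simp

/-- the density in closed form -/
noncomputable def sg (ν t : ℝ) : ℝ := ν + Real.sinh ((1 - ν) * t) / (t * Real.cosh t)

lemma sg_id (ν x : ℝ) (hx : 0 < x) :
    ν - Real.sinh (ν * x) / x + Real.cosh (ν * x) * Real.tanh x / x
        = ν + Real.sinh ((1 - ν) * x) / (x * Real.cosh x) := by
  have hc := (Real.cosh_pos x).ne'
  rw [show (1 - ν) * x = x - ν * x by ring, Real.sinh_sub, Real.tanh_eq_sinh_div_cosh]
  field_simp
  ring

lemma cosh_mono_aux {y x : ℝ} (hy : 0 ≤ y) (hxy : y ≤ x) : Real.cosh y ≤ Real.cosh x := by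
  rw [Real.cosh_le_cosh, abs_of_nonneg hy, abs_of_nonneg (hy.trans hxy)]
  exact hxy

lemma sinh_sub_aux {y x : ℝ} (hy : 0 ≤ y) (hxy : y ≤ x) :
    (x - y) * Real.cosh y ≤ Real.sinh x - Real.sinh y := by
  rcases hxy.eq_or_lt with rfl | h
  · simp
  obtain ⟨c, hc, he⟩ := exists_deriv_eq_slope Real.sinh h Real.continuous_sinh.continuousOn
    Real.differentiable_sinh.differentiableOn
  rw [Real.deriv_sinh, eq_div_iff (by linarith)] at he
  rw [← he, mul_comm]
  exact mul_le_mul_of_nonneg_right (cosh_mono_aux hy hc.1.le) (by linarith)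

lemma sinh_le_aux {x : ℝ} (hx : 0 ≤ x) : Real.sinh x ≤ x * Real.cosh x := by
  rcases hx.eq_or_lt with rfl | h
  · simp
  obtain ⟨c, hc, he⟩ := exists_deriv_eq_slope Real.sinh h Real.continuous_sinh.continuousOn
    Real.differentiable_sinh.differentiableOn
  rw [Real.deriv_sinh, eq_div_iff (by linarith)] at he
  have := cosh_mono_aux hc.1.le hc.2.le
  simp at he
  nlinarith

lemma key_aux {y x : ℝ} (hy : 0 ≤ y) (hxy : y ≤ x) :
    Real.sinh y + x * Real.cosh y ≤ Real.sinh x + y * Real.cosh x := by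
  have h1 := sinh_sub_aux hy hxy
  have h2 := mul_le_mul_of_nonneg_left (cosh_mono_aux hy hxy) hy
  nlinarith

lemma sg_pos (ν : ℝ) (hν0 : 0 ≤ ν) (hν1 : ν ≤ 1) (t : ℝ) (ht : 0 < t) : 0 < sg ν t := by
  unfold sg
  have hc := Real.cosh_pos t
  have hs : 0 ≤ Real.sinh ((1 - ν) * t) := Real.sinh_nonneg_iff.2 (by nlinarith)
  rcases hν0.eq_or_lt with rfl | h
  · have : 0 < Real.sinh ((1 - 0) * t) := Real.sinh_pos_iff.2 (by simpa using ht)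
    positivity
  · positivity

lemma sg_le (ν : ℝ) (hν0 : 0 ≤ ν) (hν1 : ν ≤ 1) (t : ℝ) (ht : 0 < t) : sg ν t ≤ 1 := by
  unfold sg
  have hc := Real.cosh_pos t
  have h0 : 0 ≤ (1 - ν) * t := mul_nonneg (by linarith) ht.le
  have h1 := sinh_le_aux h0
  have h2 := cosh_mono_aux h0 (show (1 - ν) * t ≤ t by nlinarith)
  have : Real.sinh ((1 - ν) * t) / (t * Real.cosh t) ≤ 1 - ν := by
    rw [div_le_iff₀ (by positivity)]
    nlinarith [mul_le_mul_of_nonneg_left h2 h0]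
  linarith

lemma sg_logcm (ν : ℝ) (hν0 : 0 ≤ ν) (hν1 : ν ≤ 1) :
    LogCompletelyMonotonic (LaplaceTransform (sg ν)) := by
  refine aux_logcm (sg ν) (fun t => ν * t + Real.sinh ((1 - ν) * t) / Real.cosh t)
    (fun t => ν + ((1 - ν) * Real.cosh ((1 - ν) * t) * Real.cosh t -
      Real.sinh ((1 - ν) * t) * Real.sinh t) / Real.cosh t ^ 2) ?_ ?_ ?_ ?_ ?_
    (sg_pos ν hν0 hν1) (sg_le ν hν0 hν1) ?_ ?_
  · unfold sg; fun_prop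
  · fun_prop
  · intro t ht
    have hc := Real.cosh_pos t
    unfold sg
    field_simp
  · simp
  · intro t
    have e1 : HasDerivAt (fun t => Real.sinh ((1 - ν) * t))
        (Real.cosh ((1 - ν) * t) * ((1 - ν) * 1)) t :=
      ((hasDerivAt_id t).const_mul (1 - ν)).sinh
    have e2 := (e1.div (Real.hasDerivAt_cosh t) (Real.cosh_pos t).ne')
    have e3 : HasDerivAt (fun t => ν * t) (ν * 1) t := (hasDerivAt_id t).const_mul ν
    exact (e3.add e2).congr_deriv (by ring)
  · intro t ht
    have hc := Real.cosh_pos t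
    have h0 : 0 ≤ (1 - ν) * t := mul_nonneg (by linarith) ht.le
    have h2 := cosh_mono_aux h0 (show (1 - ν) * t ≤ t by nlinarith)
    have h3 := Real.cosh_pos ((1 - ν) * t)
    have h4 : Real.sinh ((1 - ν) * t) * Real.sinh t ≤ Real.cosh ((1 - ν) * t) * Real.cosh t :=
      mul_le_mul (Real.sinh_lt_cosh _).le (Real.sinh_lt_cosh _).le
        (Real.sinh_nonneg_iff.2 ht.le) h3.le
    have h5 : ν + ((1 - ν) * Real.cosh ((1 - ν) * t) * Real.cosh t -
      Real.sinh ((1 - ν) * t) * Real.sinh t) / Real.cosh t ^ 2 =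
      (ν * Real.cosh t ^ 2 + ((1 - ν) * Real.cosh ((1 - ν) * t) * Real.cosh t -
      Real.sinh ((1 - ν) * t) * Real.sinh t)) / Real.cosh t ^ 2 := by
      field_simp
    rw [h5]
    refine div_nonneg ?_ (by positivity)
    have h6 := mul_le_mul_of_nonneg_left h2 (mul_nonneg hν0 hc.le)
    nlinarith
  · intro t ht
    have hc := Real.cosh_pos t
    unfold sg
    have hk := key_aux (y := ν * t) (x := (2 - ν) * t) (by positivity) (by nlinarith)
    rw [show (2 - ν) * t = t + (1 - ν) * t by ring, show ν * t = t - (1 - ν) * t by ring,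
      Real.sinh_add, Real.sinh_sub, Real.cosh_add, Real.cosh_sub] at hk
    rw [add_le_add_iff_left, div_le_div_iff₀ (by positivity) (by positivity)]
    have : ((1 - ν) * Real.cosh ((1 - ν) * t) * Real.cosh t -
      Real.sinh ((1 - ν) * t) * Real.sinh t) * t ≤ Real.sinh ((1 - ν) * t) * Real.cosh t := by
      nlinarith
    nlinarith [mul_le_mul_of_nonneg_right this hc.le]

/-- the representing measure -/
noncomputable def muE (ν : ℝ) : Measure ℝ :=
  Measure.sum (fun j : ℕ => volume.restrict (Ioc (4 * (j:ℝ) + ν) (4 * j + 2 - ν)))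

noncomputable def muS (ν : ℝ) : Measure ℝ :=
  ENNReal.ofReal ν • volume.restrict (Ioi (0:ℝ)) +
    (muE ν).conv (volume.restrict (Ioc (0:ℝ) 2))

instance (ν : ℝ) : SFinite (muE ν) := by unfold muE; infer_instance

instance (ν : ℝ) : SFinite (muS ν) := by unfold muS; infer_instance

lemma lint_muS (ν : ℝ) (G : ℝ → ENNReal) (hG : Measurable G) :
    ∫⁻ s, G s ∂(muS ν) = ENNReal.ofReal ν * (∫⁻ s in Ioi (0:ℝ), G s) +
      ∑' j : ℕ, ∫⁻ b in Ioc (4 * (j:ℝ) + ν) (4 * j + 2 - ν), ∫⁻ r in Ioc (0:ℝ) 2, G (b + r) := by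
  unfold muS muE
  rw [lintegral_add_measure, lintegral_smul_measure, Measure.lintegral_conv hG,
    lintegral_sum_measure]
  rfl

lemma muS_Iic (ν : ℝ) (hν0 : 0 ≤ ν) : muS ν (Iic 0) = 0 := by
  rw [← lintegral_indicator_one measurableSet_Iic, lint_muS ν _ (measurable_one.indicator measurableSet_Iic)]
  have h1 : ∫⁻ s in Ioi (0:ℝ), (Iic (0:ℝ)).indicator (1 : ℝ → ENNReal) s = 0 := by
    rw [setLIntegral_congr_fun (g := fun _ => 0) measurableSet_Ioi]
    · simp
    · intro s hs
      have : ¬ s ≤ 0 := not_le.2 hs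
      simp [this]
  rw [h1, mul_zero, zero_add, ENNReal.tsum_eq_zero]
  intro j
  rw [setLIntegral_congr_fun (g := fun _ => 0) measurableSet_Ioc]
  · simp
  · intro b hb
    simp only
    rw [setLIntegral_congr_fun (g := fun _ => 0) measurableSet_Ioc]
    · simp
    · intro r hr
      have h0 : (0:ℝ) ≤ j := Nat.cast_nonneg j
      have : ¬ b + r ≤ 0 := by have := hb.1; have := hr.1; linarith
      simp [this]

lemma ae_muS (ν : ℝ) (hν0 : 0 ≤ ν) : ∀ᵐ s ∂(muS ν), 0 < s := by
  rw [ae_iff]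
  have : {a : ℝ | ¬ 0 < a} = Iic 0 := by ext; simp
  rw [this, muS_Iic ν hν0]

lemma lint_Ioc (f : ℝ → ℝ) (a b : ℝ) (hab : a ≤ b) (hf : ContinuousOn f (Icc a b))
    (h0 : ∀ t ∈ Ioc a b, 0 ≤ f t) :
    ∫⁻ t in Ioc a b, ENNReal.ofReal (f t) = ENNReal.ofReal (∫ t in a..b, f t) := by
  rw [intervalIntegral.integral_of_le hab, ofReal_integral_eq_lintegral_ofReal]
  · exact (hf.integrableOn_Icc).mono_set Ioc_subset_Icc_self
  · rw [Filter.EventuallyLE, ae_restrict_iff' measurableSet_Ioc]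
    filter_upwards with t ht using h0 t ht

lemma lint_FTC (f F : ℝ → ℝ) (a b : ℝ) (hab : a ≤ b) (hf : ContinuousOn f (Icc a b))
    (h0 : ∀ t ∈ Ioc a b, 0 ≤ f t) (hF : ∀ t ∈ Icc a b, HasDerivAt F (f t) t) :
    ∫⁻ t in Ioc a b, ENNReal.ofReal (f t) = ENNReal.ofReal (F b - F a) := by
  rw [lint_Ioc f a b hab hf h0]
  congr 1
  rw [← uIcc_of_le hab] at hf hF
  exact intervalIntegral.integral_eq_sub_of_hasDerivAt hF hf.intervalIntegrable

lemma lint_gamma (y : ℝ) (hy : 0 < y) :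
    ∫⁻ t in Ioi (0:ℝ), ENNReal.ofReal (t * Real.exp (-y * t)) = ENNReal.ofReal (y ^ (-2:ℝ)) := by
  have h := Real.integral_rpow_mul_exp_neg_mul_Ioi (a := 2) (r := y) (by norm_num) hy
  have h1 : IntegrableOn (fun t : ℝ => t ^ (1:ℝ) * Real.exp (-y * t ^ (1:ℝ))) (Ioi 0) :=
    integrableOn_rpow_mul_exp_neg_mul_rpow (by norm_num) (by norm_num) hy
  simp only [Real.rpow_one] at h1
  rw [← ofReal_integral_eq_lintegral_ofReal h1]
  · congr 1
    rw [show (2:ℝ) - 1 = 1 by norm_num, Real.Gamma_two, one_div, mul_one,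
      Real.inv_rpow hy.le, ← Real.rpow_neg hy.le] at h
    rw [← h]
    refine setIntegral_congr_fun measurableSet_Ioi fun t _ => ?_
    simp
  · rw [Filter.EventuallyLE, ae_restrict_iff' measurableSet_Ioi]
    filter_upwards with t ht
    have : (0:ℝ) < t := ht
    positivity

/-- `sg` is `t` times the Laplace transform of `muS`. -/
lemma lint_sg (ν : ℝ) (hν0 : 0 ≤ ν) (hν1 : ν ≤ 1) (t : ℝ) (ht : 0 < t) :
    ∫⁻ s, ENNReal.ofReal (t * Real.exp (-t * s)) ∂(muS ν) = ENNReal.ofReal (sg ν t) := by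
  rw [lint_muS ν _ (by fun_prop)]
  have h1 : ∫⁻ s in Ioi (0:ℝ), ENNReal.ofReal (t * Real.exp (-t * s)) = 1 := by
    have i := exp_neg_integrableOn_Ioi 0 ht
    rw [← ofReal_integral_eq_lintegral_ofReal (i.const_mul t)]
    · rw [integral_const_mul, integral_exp_mul_Ioi (by linarith)]
      simp [ht.ne']
    · filter_upwards with s
      positivity
  have h2 : ∀ b : ℝ, ∫⁻ r in Ioc (0:ℝ) 2, ENNReal.ofReal (t * Real.exp (-t * (b + r))) =
      ENNReal.ofReal (Real.exp (-t * b) * (1 - Real.exp (-t * 2))) := fun b => by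
    rw [lint_FTC (F := fun r => - Real.exp (-t * (b + r))) _ _ _ (by norm_num) (by fun_prop)
      (fun r _ => by positivity)]
    · congr 1
      simp only [mul_add, Real.exp_add, mul_zero, Real.exp_zero]
      ring
    · intro r _
      have : HasDerivAt (fun r => Real.exp (-t * (b + r))) (Real.exp (-t * (b + r)) * (-t * 1)) r :=
        (((hasDerivAt_id r).const_add b).const_mul (-t)).exp
      exact this.neg.congr_deriv (by ring)
  have hlt : Real.exp (-t * 2) < 1 := by rw [Real.exp_lt_one_iff]; linarith
  have hlt4 : Real.exp (-t * 4) < 1 := by rw [Real.exp_lt_one_iff]; linarith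
  have hle : Real.exp (-t * (2 - ν)) ≤ Real.exp (-t * ν) := Real.exp_le_exp.2 (by nlinarith)
  set D : ℝ := (Real.exp (-t * ν) - Real.exp (-t * (2 - ν))) * (1 - Real.exp (-t * 2)) / t with hD
  have hD0 : 0 ≤ D := by
    rw [hD]
    have h1 := sub_nonneg.2 hle
    have h2 := sub_nonneg.2 hlt.le
    positivity
  have h3 : ∀ j : ℕ, ∫⁻ b in Ioc (4 * (j:ℝ) + ν) (4 * j + 2 - ν),
      ∫⁻ r in Ioc (0:ℝ) 2, ENNReal.ofReal (t * Real.exp (-t * (b + r))) =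
      ENNReal.ofReal (Real.exp (-t * 4) ^ j * D) := fun j => by
    simp only [h2]
    rw [lint_FTC (F := fun b => - Real.exp (-t * b) * (1 - Real.exp (-t * 2)) / t) _ _ _
      (by linarith) (by fun_prop)
      (fun r _ => mul_nonneg (Real.exp_pos _).le (by linarith))]
    · congr 1
      rw [← Real.exp_nat_mul, show -t * (4 * (j:ℝ) + 2 - ν) = j * (-t * 4) + -t * (2 - ν) by ring,
        show -t * (4 * (j:ℝ) + ν) = j * (-t * 4) + -t * ν by ring, Real.exp_add, Real.exp_add, hD]
      ring
    · intro b _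
      have : HasDerivAt (fun r => Real.exp (-t * r)) (Real.exp (-t * b) * (-t * 1)) b :=
        ((hasDerivAt_id b).const_mul (-t)).exp
      exact ((this.neg.mul_const _).div_const t).congr_deriv (by field_simp)
  simp only [h3]
  rw [h1, mul_one, ← ENNReal.ofReal_tsum_of_nonneg (fun j => by positivity)
    ((summable_geometric_of_lt_one (Real.exp_pos _).le hlt4).mul_right D), tsum_mul_right,
    tsum_geometric_of_lt_one (Real.exp_pos _).le hlt4, ← ENNReal.ofReal_add hν0]
  · congr 1
    unfold sg
    congr 1
    rw [hD, Real.sinh_eq, Real.cosh_eq]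
    set u := Real.exp t with hu
    have hu0 : 0 < u := Real.exp_pos t
    have hu1 : 1 < u := by rw [hu]; exact Real.one_lt_exp_iff.2 ht
    have e1 : Real.exp (-t) = u⁻¹ := Real.exp_neg t
    set v := Real.exp (ν * t) with hv
    have hv0 : 0 < v := Real.exp_pos _
    have e2 : Real.exp (-t * ν) = v⁻¹ := by rw [hv, ← Real.exp_neg]; congr 1; ring
    have e3 : Real.exp (-t * 2) = (u^2)⁻¹ := by
      rw [hu, ← Real.exp_nat_mul, ← Real.exp_neg]; congr 1; push_cast; ring
    have e4 : Real.exp (-t * 4) = (u^4)⁻¹ := by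
      rw [hu, ← Real.exp_nat_mul, ← Real.exp_neg]; congr 1; push_cast; ring
    have e5 : Real.exp (-t * (2 - ν)) = v / u^2 := by
      rw [hu, hv, ← Real.exp_nat_mul, ← Real.exp_sub]; congr 1; push_cast; ring
    have e6 : Real.exp ((1 - ν) * t) = u / v := by
      rw [hu, hv, ← Real.exp_sub]; congr 1; ring
    have e7 : Real.exp (-((1 - ν) * t)) = v / u := by
      rw [hu, hv, ← Real.exp_sub]; congr 1; ring
    rw [e1, e2, e3, e4, e5, e6, e7]
    have hu4 : u^4 - 1 ≠ 0 := by
      have : 1 < u^4 := one_lt_pow₀ hu1 (by norm_num)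
      linarith
    have : 1 - (u^4)⁻¹ ≠ 0 := by
      rw [← e4]; linarith
    have : 0 < u^2 + 1 := by positivity
    have : u + u⁻¹ ≠ 0 := by positivity
    field_simp
    ring
  · exact mul_nonneg (inv_nonneg.2 (by linarith)) hD0

lemma lint_stieltjes (ν : ℝ) (hν0 : 0 ≤ ν) (hν1 : ν ≤ 1) (x : ℝ) (hx : 0 < x) :
    ∫⁻ s, ENNReal.ofReal ((x + s) ^ (-2:ℝ)) ∂(muS ν) =
      ENNReal.ofReal (LaplaceTransform (sg ν) x) := by
  have hm : Measurable (sg ν) := by unfold sg; fun_prop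
  have i := aux_int (sg ν) 1 hm (fun t ht => by
    rw [abs_of_pos (sg_pos ν hν0 hν1 t ht)]; linarith [sg_le ν hν0 hν1 t ht]) x hx
  unfold LaplaceTransform
  rw [ofReal_integral_eq_lintegral_ofReal i]
  · calc ∫⁻ s, ENNReal.ofReal ((x + s) ^ (-2:ℝ)) ∂(muS ν)
        = ∫⁻ s, (∫⁻ t in Ioi (0:ℝ), ENNReal.ofReal (t * Real.exp (-(x + s) * t))) ∂(muS ν) := by
          refine lintegral_congr_ae ?_
          filter_upwards [ae_muS ν hν0] with s hs
          rw [lint_gamma (x + s) (by linarith)]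
      _ = ∫⁻ t in Ioi (0:ℝ), (∫⁻ s, ENNReal.ofReal (t * Real.exp (-(x + s) * t)) ∂(muS ν)) := by
          refine lintegral_lintegral_swap ?_
          have : Measurable (Function.uncurry fun s t : ℝ =>
            ENNReal.ofReal (t * Real.exp (-(x + s) * t))) := by
            unfold Function.uncurry; fun_prop
          exact this.aemeasurable
      _ = _ := by
          refine setLIntegral_congr_fun measurableSet_Ioi fun t ht => ?_
          rw [ENNReal.ofReal_mul (Real.exp_pos _).le, ← lint_sg ν hν0 hν1 t ht,
            ← lintegral_const_mul _ (by fun_prop)]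
          refine lintegral_congr fun s => ?_
          rw [← ENNReal.ofReal_mul (Real.exp_pos _).le]
          congr 1
          rw [show -(x + s) * t = -x * t + -t * s by ring, Real.exp_add]
          ring
  · rw [Filter.EventuallyLE, ae_restrict_iff' measurableSet_Ioi]
    filter_upwards with t ht
    exact (mul_pos (Real.exp_pos _) (sg_pos ν hν0 hν1 t ht)).le

lemma sg_stieltjes (ν : ℝ) (hν0 : 0 ≤ ν) (hν1 : ν ≤ 1) :
    IsGenStieltjes 2 (LaplaceTransform (sg ν)) := by
  refine ⟨muS ν, 0, le_rfl, measure_mono_null Iio_subset_Iic_self (muS_Iic ν hν0), fun x hx => ?_⟩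
  have h := lint_stieltjes ν hν0 hν1 x hx
  have hnn : 0 ≤ᵐ[muS ν] fun s => (x + s) ^ (-2:ℝ) := by
    filter_upwards [ae_muS ν hν0] with s hs
    have : 0 < x + s := by linarith
    simp only [Pi.zero_apply]
    positivity
  have hmeas : Measurable fun s : ℝ => (x + s) ^ (-2:ℝ) := by fun_prop
  refine ⟨⟨hmeas.aestronglyMeasurable, ?_⟩, ?_⟩
  · rw [hasFiniteIntegral_iff_ofReal hnn, h]
    exact ENNReal.ofReal_lt_top
  · rw [integral_eq_lintegral_of_nonneg_ae hnn hmeas.aestronglyMeasurable, h, add_zero,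
      ENNReal.toReal_ofReal]
    exact ((sg_logcm ν hν0 hν1).1 x hx).le

/-- log terms -/
noncomputable def lterm (ν x : ℝ) (j : ℕ) : ℝ :=
  Real.log ((x + (4 * j + 2 - ν)) / (x + (4 * j + 2 - ν) + 2)) -
    Real.log ((x + (4 * j + ν)) / (x + (4 * j + ν) + 2))

lemma lterm_nonneg (ν x : ℝ) (hν0 : 0 ≤ ν) (hν1 : ν ≤ 1) (hx : 0 < x) (j : ℕ) :
    0 ≤ lterm ν x j := by
  have h0 : (0:ℝ) ≤ j := Nat.cast_nonneg j
  unfold lterm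
  have h1 : 0 < x + (4 * j + ν) := by linarith
  have h2 : 0 < x + (4 * j + 2 - ν) := by linarith
  rw [sub_nonneg]
  apply Real.log_le_log (by positivity)
  rw [div_le_div_iff₀ (by positivity) (by positivity)]
  nlinarith

lemma lint_log (ν : ℝ) (hν0 : 0 ≤ ν) (hν1 : ν ≤ 1) (x : ℝ) (hx : 0 < x) :
    ∫⁻ s, ENNReal.ofReal ((x + s) ^ (-2:ℝ)) ∂(muS ν) =
      ENNReal.ofReal (ν / x) + ∑' j, ENNReal.ofReal (lterm ν x j) := by
  rw [lint_muS ν _ (by fun_prop)]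
  congr 1
  · have hd : ∀ s ∈ Ici (0:ℝ), HasDerivAt (fun s => -(x + s)⁻¹) ((x + s) ^ (-2:ℝ)) s := fun s hs => by
      have hp : 0 < x + s := by have : 0 ≤ s := hs; linarith
      have : HasDerivAt (fun s => x + s) 1 s := (hasDerivAt_id s).const_add x
      refine (this.fun_inv hp.ne').neg.congr_deriv ?_
      rw [Real.rpow_neg hp.le, Real.rpow_two]
      field_simp
    have hn : ∀ s ∈ Ioi (0:ℝ), 0 ≤ (x + s) ^ (-2:ℝ) := fun s hs => by
      have hp : 0 < x + s := by have : 0 < s := hs; linarith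
      positivity
    have hl : Tendsto (fun s => -(x + s)⁻¹) atTop (nhds (-0)) :=
      (tendsto_inv_atTop_zero.comp (tendsto_atTop_add_const_left _ x tendsto_id)).neg
    rw [← ofReal_integral_eq_lintegral_ofReal
      (integrableOn_Ioi_deriv_of_nonneg' hd hn hl), integral_Ioi_of_hasDerivAt_of_nonneg' hd hn hl,
      ← ENNReal.ofReal_mul hν0]
    · congr 1
      simp [div_eq_mul_inv]
    · rw [Filter.EventuallyLE, ae_restrict_iff' measurableSet_Ioi]
      filter_upwards with t ht using hn t ht
  · refine tsum_congr fun j => ?_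
    have h0 : (0:ℝ) ≤ j := Nat.cast_nonneg j
    have h2 : ∀ b ∈ Ioc (4 * (j:ℝ) + ν) (4 * j + 2 - ν),
      ∫⁻ r in Ioc (0:ℝ) 2, ENNReal.ofReal ((x + (b + r)) ^ (-2:ℝ)) =
        ENNReal.ofReal ((x + b)⁻¹ - (x + b + 2)⁻¹) := fun b hb => by
      have hb0 : 0 < x + b := by have := hb.1; linarith
      have hp : ∀ r ∈ Icc (0:ℝ) 2, 0 < x + (b + r) := fun r hr => by have := hr.1; linarith
      rw [lint_FTC (F := fun r => -(x + (b + r))⁻¹) _ _ _ (by norm_num) _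
        (fun r hr => by have := hp r (Ioc_subset_Icc_self hr); positivity)]
      · congr 1
        simp only [add_zero, ← add_assoc]
        ring
      · intro r hr
        have : HasDerivAt (fun r => x + (b + r)) 1 r := ((hasDerivAt_id r).const_add b).const_add x
        refine (this.fun_inv (hp r hr).ne').neg.congr_deriv ?_
        rw [Real.rpow_neg (hp r hr).le, Real.rpow_two]
        field_simp
      · refine ContinuousOn.rpow_const (by fun_prop) fun r hr => Or.inl (hp r hr).ne'
    rw [setLIntegral_congr_fun measurableSet_Ioc h2]
    have hp : ∀ b ∈ Icc (4 * (j:ℝ) + ν) (4 * j + 2 - ν), 0 < x + b := fun b hb => by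
      have := hb.1; linarith
    rw [lint_FTC (F := fun b => Real.log ((x + b) / (x + b + 2))) _ _ _ (by linarith)]
    · rfl
    · refine ContinuousOn.sub ?_ ?_
      · exact ContinuousOn.inv₀ (by fun_prop) fun b hb => (hp b hb).ne'
      · exact ContinuousOn.inv₀ (by fun_prop) fun b hb => by have := hp b hb; positivity
    · intro b hb
      have := hp b (Ioc_subset_Icc_self hb)
      rw [sub_nonneg]
      exact inv_anti₀ this (by linarith)
    · intro b hb
      have h := hp b hb
      have e1 : HasDerivAt (fun b => x + b) 1 b := (hasDerivAt_id b).const_add x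
      have e2 := (e1.fun_div (e1.add_const 2) (by positivity)).log (by positivity)
      refine e2.congr_deriv ?_
      field_simp
      

lemma gamma_lim (ν : ℝ) (hν0 : 0 ≤ ν) (hν1 : ν ≤ 1) (x : ℝ) (hx : 0 < x) :
    Tendsto (fun n : ℕ => ∑ j ∈ Finset.range n, lterm ν x j) atTop
      (nhds (Real.log
            (Real.Gamma ((x - ν) / 4 + 1) * Real.Gamma ((x + ν) / 4) /
              (Real.Gamma ((x - ν) / 4 + 1 / 2) * Real.Gamma ((x + ν) / 4 + 1 / 2))))) := by
  have p1 : 0 < (x - ν) / 4 + 1 := by linarith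
  have p2 : 0 < (x + ν) / 4 := by linarith
  have p3 : 0 < (x - ν) / 4 + 1 / 2 := by linarith
  have p4 : 0 < (x + ν) / 4 + 1 / 2 := by linarith
  have g1 := Real.Gamma_pos_of_pos p1
  have g2 := Real.Gamma_pos_of_pos p2
  have g3 := Real.Gamma_pos_of_pos p3
  have g4 := Real.Gamma_pos_of_pos p4
  rw [← tendsto_add_atTop_iff_nat 1]
  have hlim := (((Real.GammaSeq_tendsto_Gamma ((x - ν) / 4 + 1)).mul
    (Real.GammaSeq_tendsto_Gamma ((x + ν) / 4))).div
    ((Real.GammaSeq_tendsto_Gamma ((x - ν) / 4 + 1 / 2)).mul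
    (Real.GammaSeq_tendsto_Gamma ((x + ν) / 4 + 1 / 2))) (by positivity)).log (by positivity)
  refine hlim.congr' ?_
  filter_upwards [eventually_gt_atTop 0] with n hn
  have hn' : (0:ℝ) < n := Nat.cast_pos.2 hn
  have hf : (0:ℝ) < n.factorial := Nat.cast_pos.2 n.factorial_pos
  have q : ∀ s : ℝ, 0 < s → 0 < ∏ j ∈ Finset.range (n + 1), (s + j) := fun s hs =>
    Finset.prod_pos fun j _ => by positivity
  have q1 := q _ p1
  have q2 := q _ p2
  have q3 := q _ p3
  have q4 := q _ p4
  have hpow : (n:ℝ) ^ ((x - ν) / 4 + 1) * (n:ℝ) ^ ((x + ν) / 4) =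
      (n:ℝ) ^ ((x - ν) / 4 + 1 / 2) * (n:ℝ) ^ ((x + ν) / 4 + 1 / 2) := by
    rw [← Real.rpow_add hn', ← Real.rpow_add hn']
    congr 1
    ring
  have r3 := Real.rpow_pos_of_pos hn' ((x - ν) / 4 + 1 / 2)
  have r4 := Real.rpow_pos_of_pos hn' ((x + ν) / 4 + 1 / 2)
  have hmain : Real.GammaSeq ((x - ν) / 4 + 1) n * Real.GammaSeq ((x + ν) / 4) n /
      (Real.GammaSeq ((x - ν) / 4 + 1 / 2) n * Real.GammaSeq ((x + ν) / 4 + 1 / 2) n) =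
      ∏ j ∈ Finset.range (n + 1), ((((x - ν) / 4 + 1 / 2 + j) * ((x + ν) / 4 + 1 / 2 + j)) /
        (((x - ν) / 4 + 1 + j) * ((x + ν) / 4 + j))) := by
    rw [Finset.prod_div_distrib, Finset.prod_mul_distrib, Finset.prod_mul_distrib]
    unfold Real.GammaSeq
    generalize ∏ j ∈ Finset.range (n + 1), ((x - ν) / 4 + 1 + (j:ℝ)) = P1 at *
    generalize ∏ j ∈ Finset.range (n + 1), ((x + ν) / 4 + (j:ℝ)) = P2 at *
    generalize ∏ j ∈ Finset.range (n + 1), ((x - ν) / 4 + 1 / 2 + (j:ℝ)) = P3 at *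
    generalize ∏ j ∈ Finset.range (n + 1), ((x + ν) / 4 + 1 / 2 + (j:ℝ)) = P4 at *
    generalize (n:ℝ) ^ ((x - ν) / 4 + 1) = R1 at *
    generalize (n:ℝ) ^ ((x + ν) / 4) = R2 at *
    generalize (n:ℝ) ^ ((x - ν) / 4 + 1 / 2) = R3 at *
    generalize (n:ℝ) ^ ((x + ν) / 4 + 1 / 2) = R4 at *
    generalize (n.factorial : ℝ) = N at *
    rw [div_mul_div_comm, div_mul_div_comm, div_div_div_eq,
      div_eq_div_iff (by positivity) (by positivity)]
    linear_combination N * N * P3 * P4 * P1 * P2 * hpow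
  simp only [Pi.div_apply]
  rw [hmain, Real.log_prod]
  · refine Finset.sum_congr rfl fun j _ => ?_
    have h0 : (0:ℝ) ≤ j := Nat.cast_nonneg j
    unfold lterm
    have h1 : 0 < x + (4 * j + ν) := by linarith
    have h2 : 0 < x + (4 * j + 2 - ν) := by linarith
    rw [← Real.log_div (by positivity) (by positivity)]
    congr 1
    have p1' : 0 < (x - ν) / 4 + 1 + j := by positivity
    have p2' : 0 < (x + ν) / 4 + j := by positivity
    rw [div_div_div_eq, div_eq_div_iff (by positivity) (by positivity)]
    ring
  · intro j _
    positivity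

lemma sg_formula (ν : ℝ) (hν0 : 0 ≤ ν) (hν1 : ν ≤ 1) (x : ℝ) (hx : 0 < x) :
    LaplaceTransform (sg ν) x = ν / x + Real.log
            (Real.Gamma ((x - ν) / 4 + 1) * Real.Gamma ((x + ν) / 4) /
              (Real.Gamma ((x - ν) / 4 + 1 / 2) * Real.Gamma ((x + ν) / 4 + 1 / 2))) := by
  have h1 := gamma_lim ν hν0 hν1 x hx
  have hn := lterm_nonneg ν x hν0 hν1 hx
  have h2 := (hasSum_iff_tendsto_nat_of_nonneg hn _).2 h1
  have h3 := (lint_stieltjes ν hν0 hν1 x hx).symm.trans (lint_log ν hν0 hν1 x hx)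
  rw [← ENNReal.ofReal_tsum_of_nonneg hn h2.summable, h2.tsum_eq,
    ← ENNReal.ofReal_add (by positivity) (h2.nonneg hn)] at h3
  rwa [ENNReal.ofReal_eq_ofReal_iff ((sg_logcm ν hν0 hν1).1 x hx).le
    (add_nonneg (by positivity) (h2.nonneg hn))] at h3


/-- Theorem: for `0 ≤ ν ≤ 1`, `σ(x) = ν - sinh(νx)/x + cosh(νx) tanh(x)/x`
(equivalently `σ(x) = ν + sinh((1-ν)x)/(x cosh x)`) has Laplace transform a generalized
Stieltjes function of order 2 (hence `σ` is infinitely divisible), and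
`L(σ)(x) = ν/x + log(Γ((x-ν)/4+1)Γ((x+ν)/4)/(Γ((x-ν)/4+1/2)Γ((x+ν)/4+1/2)))`. -/
theorem stmt11 (ν : ℝ) (hν0 : 0 ≤ ν) (hν1 : ν ≤ 1) :
    (∀ x : ℝ, 0 < x →
      ν - Real.sinh (ν * x) / x + Real.cosh (ν * x) * Real.tanh x / x
        = ν + Real.sinh ((1 - ν) * x) / (x * Real.cosh x)) ∧
    IsGenStieltjes 2 (LaplaceTransform
      (fun x => ν - Real.sinh (ν * x) / x + Real.cosh (ν * x) * Real.tanh x / x)) ∧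
    LogCompletelyMonotonic (LaplaceTransform
      (fun x => ν - Real.sinh (ν * x) / x + Real.cosh (ν * x) * Real.tanh x / x)) ∧
    ∀ x : ℝ, 0 < x →
      LaplaceTransform
          (fun x => ν - Real.sinh (ν * x) / x + Real.cosh (ν * x) * Real.tanh x / x) x
        = ν / x + Real.log
            (Real.Gamma ((x - ν) / 4 + 1) * Real.Gamma ((x + ν) / 4) /
              (Real.Gamma ((x - ν) / 4 + 1 / 2) * Real.Gamma ((x + ν) / 4 + 1 / 2))) := by
  have hL : LaplaceTransform
      (fun x => ν - Real.sinh (ν * x) / x + Real.cosh (ν * x) * Real.tanh x / x) =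
      LaplaceTransform (sg ν) := by
    funext x
    refine setIntegral_congr_fun measurableSet_Ioi fun t ht => ?_
    simp only
    rw [sg_id ν t ht]
    rfl
  rw [hL]
  exact ⟨fun x hx => sg_id ν x hx, sg_stieltjes ν hν0 hν1, sg_logcm ν hν0 hν1,
    fun x hx => sg_formula ν hν0 hν1 x hx⟩
end
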